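/- arXiv:2306.09146 — 2 statements merged into one kernel-verified Lean document; each statement's English description precedes it below -/
import Mathlib

section
/- Let G be a basic CUH graph that omits D and in which at least one color class does not form an independent set, and assume ω_R ≥ 2 and α_B = ℵ₀. Let J ⊆ R be a finite independent set of red vertices, let v be a blue vertex, and let S_v be the set of all blue vertices b whose set of neighbors in J equals the set of neighbors of v in J. Then S_v contains an infinite independent set. -/
open SimpleGraph

/-- A partial colored isomorphism of the 2-colored graph `(G, red)`, defined on the set `S`:
an injective map preserving colors and adjacency on `S`. -/
def IsPartialIso {V : Type} (G : SimpleGraph V) (red : V → Prop) (S : Set V) (f : V → V) :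
    Prop :=
  Set.InjOn f S ∧ (∀ v ∈ S, (red (f v) ↔ red v)) ∧
    ∀ u ∈ S, ∀ v ∈ S, (G.Adj (f u) (f v) ↔ G.Adj u v)

/-- A 2-colored graph is ultrahomogeneous if every isomorphism between two finite induced
colored subgraphs extends to a color-preserving automorphism. -/
def Ultrahomogeneous {V : Type} (G : SimpleGraph V) (red : V → Prop) : Prop :=
  ∀ S : Set V, S.Finite → ∀ f : V → V, IsPartialIso G red S f →
    ∃ ψ : G ≃g G, (∀ v, red (ψ v) ↔ red v) ∧ ∀ v ∈ S, ψ v = f v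

/-- The set `P` induces a disjoint union of cliques in `G` (no induced monochromatic `P₃`). -/
def IsUnionOfCliques {V : Type} (G : SimpleGraph V) (P : Set V) : Prop :=
  ∀ u ∈ P, ∀ v ∈ P, ∀ w ∈ P, G.Adj u v → G.Adj v w → u ≠ w → G.Adj u w

/-- `M` is an inclusion-wise maximal clique of the subgraph of `G` induced on `P`. -/
def IsMaxCliqueIn {V : Type} (G : SimpleGraph V) (P : Set V) (M : Set V) : Prop :=
  M ⊆ P ∧ G.IsClique M ∧ ∀ M' : Set V, M' ⊆ P → G.IsClique M' → M ⊆ M' → M = M'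

/-- `S` is an independent set in `G`. -/
def IsIndepIn {V : Type} (G : SimpleGraph V) (S : Set V) : Prop :=
  ∀ u ∈ S, ∀ v ∈ S, ¬ G.Adj u v

/-- The 2-colored graph `(H, redH)` is realized in `(G, red)`, i.e. isomorphic to an
induced colored subgraph of `G`. -/
def Realizes {V : Type} (G : SimpleGraph V) (red : V → Prop) {W : Type} (H : SimpleGraph W)
    (redH : W → Prop) : Prop :=
  ∃ f : W → V, Function.Injective f ∧ (∀ w, red (f w) ↔ redH w) ∧
    ∀ u w : W, G.Adj (f u) (f w) ↔ H.Adj u w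

/-- `(H, redH)` is minimally omitted in `(G, red)`: it is omitted, but every proper induced
subgraph of it is realized. -/
def MinOmitted {V : Type} (G : SimpleGraph V) (red : V → Prop) {W : Type} (H : SimpleGraph W)
    (redH : W → Prop) : Prop :=
  ¬ Realizes G red H redH ∧
    ∀ S : Set W, S ≠ Set.univ → Realizes G red (H.induce S) (fun x => redH x.1)

/-- Isomorphism of 2-colored graphs. -/
def ColoredIso {V : Type} (G : SimpleGraph V) (red : V → Prop) {W : Type} (H : SimpleGraph W)
    (redH : W → Prop) : Prop :=
  ∃ e : G ≃g H, ∀ v, red v ↔ redH (e v)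

/-- The graph obtained from `G` by complementing the cross edges while keeping the
edges inside each color class. -/
def crossComp {V : Type} (G : SimpleGraph V) (red : V → Prop) : SimpleGraph V :=
  SimpleGraph.fromRel (fun u v =>
    ((red u ↔ red v) ∧ G.Adj u v) ∨ (¬ (red u ↔ red v) ∧ ¬ G.Adj u v))

/-- The blow-up of the 2-colored graph `(H, redH)` (whose red class should be independent),
replacing every red vertex by a copy of `I` forming a clique, joined to the neighbors of the
original vertex. -/
def blowUp {V : Type} (H : SimpleGraph V) (redH : V → Prop) (I : Type) :
    SimpleGraph ({v : V // redH v} × I ⊕ {v : V // ¬ redH v}) :=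
  SimpleGraph.fromRel (fun x y =>
    match x, y with
    | Sum.inl (u, i), Sum.inl (u', i') => H.Adj u.1 u'.1 ∨ (u = u' ∧ i ≠ i')
    | Sum.inl (u, _), Sum.inr b => H.Adj u.1 b.1
    | Sum.inr b, Sum.inl (u, _) => H.Adj b.1 u.1
    | Sum.inr b, Sum.inr b' => H.Adj b.1 b'.1)

/-- The coloring of the blow-up: all vertices replacing red vertices are red. -/
def blowUpRed (V : Type) (redH : V → Prop) (I : Type) :
    ({v : V // redH v} × I ⊕ {v : V // ¬ redH v}) → Prop :=
  Sum.elim (fun _ => True) (fun _ => False)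

/-- `(G, red)` is a blow-up with the red class blown up: it is isomorphic (as a colored graph)
to the blow-up of some `(H, redH)` with independent red class by an `i`-clique, `2 ≤ i ≤ ℵ₀`. -/
def IsBlowUpOf {V : Type} (G : SimpleGraph V) (red : V → Prop) : Prop :=
  ∃ (U : Type) (H : SimpleGraph U) (redH : U → Prop) (I : Type),
    (∀ u v : U, redH u → redH v → ¬ H.Adj u v) ∧
    2 ≤ Cardinal.mk I ∧ Cardinal.mk I ≤ Cardinal.aleph0 ∧
    ∃ e : G ≃g blowUp H redH I, ∀ v, red v ↔ blowUpRed U redH I (e v)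

/-- `(G, red)` is a blow-up (of one of its two color classes). -/
def IsBlowUp {V : Type} (G : SimpleGraph V) (red : V → Prop) : Prop :=
  IsBlowUpOf G red ∨ IsBlowUpOf G (fun v => ¬ red v)

/-- A CUH graph: a countably infinite ultrahomogeneous 2-colored graph in which both
color classes induce disjoint unions of cliques. -/
def IsCUH {V : Type} (G : SimpleGraph V) (red : V → Prop) : Prop :=
  Countable V ∧ Infinite V ∧ Ultrahomogeneous G red ∧
    IsUnionOfCliques G {v | red v} ∧ IsUnionOfCliques G {v | ¬ red v}

/-- A basic CUH graph: a CUH graph which is not a blow-up and where both independence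
numbers are at least 2. -/
def IsBasicCUH {V : Type} (G : SimpleGraph V) (red : V → Prop) : Prop :=
  IsCUH G red ∧ ¬ IsBlowUp G red ∧
    (∃ u v, red u ∧ red v ∧ u ≠ v ∧ ¬ G.Adj u v) ∧
    (∃ u v, ¬ red u ∧ ¬ red v ∧ u ≠ v ∧ ¬ G.Adj u v)

/-- The graph `D`: red vertices `0, 1`, blue vertices `2, 3`, edges
`{01, 23, 02, 03, 12}` (a 2-colored diamond). -/
def Dgraph : SimpleGraph (Fin 4) :=
  SimpleGraph.fromRel (fun x y =>
    (x = 0 ∧ y = 1) ∨ (x = 2 ∧ y = 3) ∨ (x = 0 ∧ y = 2) ∨ (x = 0 ∧ y = 3) ∨ (x = 1 ∧ y = 2))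

/-- The coloring of `D` and `D̃`: `0, 1` are red, `2, 3` are blue. -/
def Dred : Fin 4 → Prop := fun x => x = 0 ∨ x = 1

/-- The graph `D̃`, the cross-edge complement of `D`: the path `0 – 1 – 3 – 2`. -/
def Dtilde : SimpleGraph (Fin 4) :=
  SimpleGraph.fromRel (fun x y => (x = 0 ∧ y = 1) ∨ (x = 1 ∧ y = 3) ∨ (x = 3 ∧ y = 2))

/-- `T_r`: the triangle with two red vertices and one blue vertex. -/
def Tr : SimpleGraph (Fin 3) := ⊤

/-- The coloring of `T_r` and `T̃_r`: `0, 1` red, `2` blue. -/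
def TrRed : Fin 3 → Prop := fun x => x = 0 ∨ x = 1

/-- `T̃_r`: a red edge together with an isolated blue vertex. -/
def TrTilde : SimpleGraph (Fin 3) := SimpleGraph.fromRel (fun x y => x = 0 ∧ y = 1)

/-- `T_b`: the triangle with one red vertex and two blue vertices. -/
def Tb : SimpleGraph (Fin 3) := ⊤

/-- The coloring of `T_b` and `T̃_b`: `0` red, `1, 2` blue. -/
def TbRed : Fin 3 → Prop := fun x => x = 0

/-- `T̃_b`: a blue edge together with an isolated red vertex. -/
def TbTilde : SimpleGraph (Fin 3) := SimpleGraph.fromRel (fun x y => x = 1 ∧ y = 2)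

/-!
Induct on `J`. Suppose that adding a red vertex `j`, lying outside the cliques of `J`, to `J` makes
the set of blue vertices that look like `v` lose its infinite independent sets. To each red vertex
`r` outside the cliques of `J` attach its *trace*: the set of cliques among the blue vertices that
look like `v` over `J` which contain a vertex related to `r` as `v` is related to `j`. All traces
are then finite, and automorphisms realize every finite partial injection of the infinite set of
blue cliques.

If the red vertices outside the cliques of `J` form several cliques, this richness forces traces in
one clique to coincide, so red vertices of one clique are twins with respect to `v`, and hence with
respect to every blue vertex; then `G` is a blow-up. If they form a single clique, then `v` singles
out exactly one of its vertices. The independence number of the red class makes `J` nonempty, and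
exchanging a vertex of `J` for a free one produces two such cliques over a smaller set: the blue
vertices that mark one vertex in each of them form a rook's graph with respect to sharing a mark,
and homogeneity would make either this graph or its complement a disjoint union of cliques.
-/

/-- A family of nonempty finite subsets of `Ω` whose index set carries an equivalence relation:
every finite partial injection of `Ω` is induced by a map of indices that preserves the relation,
and whether two distinct members meet depends only on whether their indices are related. This is
what the automorphism group of an ultrahomogeneous graph leaves of the family of blue cliques
attached to its red vertices. -/
structure IsHomogeneousFamily {A Ω : Type*} (s : Setoid A) (T : A → Set Ω) : Prop where
  finite : ∀ a, (T a).Finite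
  nonempty : ∀ a, (T a).Nonempty
  exists_map_eq_image : ∀ X : Set Ω, X.Finite → ∀ f : Ω → Ω, X.InjOn f →
    ∃ g : A → A, (∀ a b, s (g a) (g b) ↔ s a b) ∧ ∀ a, T a ⊆ X → T (g a) = f '' T a
  disjoint_congr : ∀ {a b c d}, a ≠ b → c ≠ d → (s a b ↔ s c d) →
    Disjoint (T a) (T b) → Disjoint (T c) (T d)

namespace IsHomogeneousFamily

variable {A Ω : Type*} {s : Setoid A} {T : A → Set Ω} {a b : A}

lemma not_disjoint_self (h : IsHomogeneousFamily s T) (a : A) : ¬ Disjoint (T a) (T a) :=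
  fun ha => (h.nonempty a).ne_empty (disjoint_self.1 ha)

lemma ne_of_disjoint (h : IsHomogeneousFamily s T) (hab : Disjoint (T a) (T b)) : a ≠ b := by
  rintro rfl
  exact h.not_disjoint_self a hab

lemma exists_inter_eq [Infinite Ω] (h : IsHomogeneousFamily s T) {P F : Set Ω} (hPT : P ⊆ T a)
    (hPF : P ⊆ F) (hF : F.Finite) : ∃ c, T c ∩ F = P := by
  classical
  obtain ⟨e⟩ : Nonempty (Ω ≃ ↥Fᶜ) := Cardinal.eq.1 <| .symm <|
    Cardinal.mk_compl_of_infinite F (hF.lt_aleph0.trans_le (Cardinal.aleph0_le_mk Ω))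
  have he : ∀ x, (e x : Ω) ∉ F := fun x => (e x).2
  have hinj : (P.piecewise id fun x => (e x : Ω)).Injective := by
    refine (Set.injective_piecewise_iff _).2 ⟨Function.injective_id.injOn,
      (Subtype.val_injective.comp e.injective).injOn, fun x hx y _ hxy => he y ?_⟩
    exact hxy ▸ hPF hx
  obtain ⟨g, -, hg⟩ := h.exists_map_eq_image _ (h.finite a) _ hinj.injOn
  refine ⟨g a, Set.Subset.antisymm ?_ fun p hp => ⟨?_, hPF hp⟩⟩
  · rw [hg a subset_rfl]
    rintro _ ⟨⟨y, -, rfl⟩, hy⟩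
    by_cases hyP : y ∈ P
    · rwa [Set.piecewise_eq_of_mem _ _ _ hyP]
    · rw [Set.piecewise_eq_of_notMem _ _ _ hyP] at hy
      exact absurd hy (he y)
  · rw [hg a subset_rfl]
    exact ⟨p, hPT hp, Set.piecewise_eq_of_mem _ _ _ hp⟩

lemma exists_disjoint [Infinite Ω] (h : IsHomogeneousFamily s T) (a : A) {F : Set Ω}
    (hF : F.Finite) : ∃ c, Disjoint (T c) F := by
  obtain ⟨c, hc⟩ := h.exists_inter_eq (Set.empty_subset (T a)) (Set.empty_subset F) hF
  exact ⟨c, Set.disjoint_iff_inter_eq_empty.2 hc⟩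

lemma pairwise_disjoint_of_forall_rel [Infinite Ω] (h : IsHomogeneousFamily s T)
    (hs : ∀ a b, s a b) : Pairwise fun a b => Disjoint (T a) (T b) := by
  intro a b hab
  obtain ⟨c, hca⟩ := h.exists_disjoint a (h.finite a)
  exact h.disjoint_congr (h.ne_of_disjoint hca) hab (iff_of_true (hs c a) (hs a b)) hca

lemma disjoint_of_not_rel [Infinite Ω] (h : IsHomogeneousFamily s T) (hab : ¬ s a b) :
    Disjoint (T a) (T b) := by
  obtain ⟨c, hc⟩ := h.exists_disjoint a ((h.finite a).union (h.finite b))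
  have hne : a ≠ b := fun e => hab (e ▸ s.refl a)
  have of_not_rel : ∀ d, Disjoint (T c) (T d) → ¬ s c d → Disjoint (T a) (T b) := fun d hcd hrel =>
    h.disjoint_congr (h.ne_of_disjoint hcd) hne (iff_of_false hrel hab) hcd
  by_cases hca : s c a
  · exact of_not_rel b (hc.mono_right Set.subset_union_right) fun hcb =>
      hab (s.trans (s.symm hca) hcb)
  · exact of_not_rel a (hc.mono_right Set.subset_union_left) hca

-- If related members were disjoint, then all members would be, and exchanging a point of `T b` with
-- a point of a member unrelated to `a` would move `b` but not `a` to another class.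
lemma not_disjoint_of_rel [Infinite Ω] (h : IsHomogeneousFamily s T) (hs : ∃ u w, ¬ s u w)
    (hab : s a b) : ¬ Disjoint (T a) (T b) := by
  classical
  intro hdisj
  have all_disjoint : ∀ {x c d}, x ∈ T c → x ∈ T d → c = d := by
    intro x c d hc hd
    by_contra hcd
    refine Set.disjoint_left.1 ?_ hc hd
    by_cases hrel : s c d
    · exact h.disjoint_congr (h.ne_of_disjoint hdisj) hcd (iff_of_true hab hrel) hdisj
    · exact h.disjoint_of_not_rel hrel
  obtain ⟨c, hac⟩ : ∃ c, ¬ s a c := by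
    by_contra! hall
    obtain ⟨u, w, huw⟩ := hs
    exact huw (s.trans (s.symm (hall u)) (hall w))
  obtain ⟨x, hx⟩ := h.nonempty a
  obtain ⟨y, hy⟩ := h.nonempty b
  obtain ⟨z, hz⟩ := h.nonempty c
  have hxy : x ≠ y := fun e => Set.disjoint_left.1 hdisj hx (e ▸ hy)
  have hxz : x ≠ z := fun e => Set.disjoint_left.1 (h.disjoint_of_not_rel hac) hx (e ▸ hz)
  obtain ⟨g, hg, hgT⟩ := h.exists_map_eq_image _ ((h.finite a).union (h.finite b))
    (Equiv.swap y z) (Equiv.injective _).injOn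
  have hga : g a = a := by
    refine all_disjoint (x := x) ?_ hx
    rw [hgT a Set.subset_union_left]
    exact ⟨x, hx, Equiv.swap_apply_of_ne_of_ne hxy hxz⟩
  have hgb : g b = c := by
    refine all_disjoint (x := z) ?_ hz
    rw [hgT b Set.subset_union_right]
    exact ⟨y, hy, Equiv.swap_apply_left y z⟩
  exact hac (by simpa only [hga, hgb] using (hg a b).2 hab)

lemma subset_of_rel [Infinite Ω] (h : IsHomogeneousFamily s T) (hs : ∃ u w, ¬ s u w)
    (hab : s a b) : T a ⊆ T b := by
  intro p hp
  by_contra hpb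
  obtain ⟨c, hc⟩ := h.exists_inter_eq (F := insert p (T b)) (Set.singleton_subset_iff.2 hp)
    (by simp) ((h.finite b).insert p)
  have hpc : p ∈ T c := (hc ▸ Set.mem_singleton p : p ∈ T c ∩ insert p (T b)).1
  have hca : s c a := by
    by_contra hca
    exact Set.disjoint_left.1 (h.disjoint_of_not_rel hca) hpc hp
  refine h.not_disjoint_of_rel hs (s.trans hca hab) (Set.disjoint_left.2 fun x hxc hxb => hpb ?_)
  have hxp : x ∈ ({p} : Set Ω) := hc ▸ ⟨hxc, Set.mem_insert_of_mem p hxb⟩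
  exact Set.mem_singleton_iff.1 hxp ▸ hxb

lemma eq_of_rel [Infinite Ω] (h : IsHomogeneousFamily s T) (hs : ∃ u w, ¬ s u w)
    (hab : s a b) : T a = T b :=
  (h.subset_of_rel hs hab).antisymm (h.subset_of_rel hs (s.symm hab))

end IsHomogeneousFamily

-- Neither the rook's graph nor its complement is a disjoint union of cliques.
lemma false_of_setoid_determines_sharing {K L : Type*} [Nontrivial K] [Infinite L]
    (s : Setoid (K × L))
    (h : ∀ x y z w, x ≠ y → z ≠ w → (s x y ↔ s z w) →
      (x.1 = y.1 ∨ x.2 = y.2) → (z.1 = w.1 ∨ z.2 = w.2)) : False := by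
  classical
  obtain ⟨i, u, hiu⟩ := exists_pair_ne K
  obtain ⟨j⟩ := (inferInstance : Nonempty L)
  obtain ⟨k, hk⟩ := Infinite.exists_notMem_finset {j}
  obtain ⟨l, hl⟩ := Infinite.exists_notMem_finset {j, k}
  simp only [Finset.mem_insert, Finset.mem_singleton, not_or] at hk hl
  obtain ⟨hlj, hlk⟩ := hl
  by_cases hrel : s (i, j) (i, k)
  · have hne : ¬ s (i, j) (u, k) := fun hrel' => by
      simpa [hiu, Ne.symm hk] using
        h (i, j) (i, k) (i, j) (u, k) (by simp [Ne.symm hk]) (by simp [hiu])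
          (iff_of_true hrel hrel') (.inl rfl)
    have hne' : ¬ s (i, k) (u, k) := fun hrel' => hne (s.trans hrel hrel')
    simpa [hiu, Ne.symm hk] using
      h (i, k) (u, k) (i, j) (u, k) (by simp [hiu]) (by simp [hiu])
        (iff_of_false hne' hne) (.inr rfl)
  · have rel_of_not_sharing : ∀ m, l ≠ m → s (i, m) (u, l) := by
      intro m hlm
      by_contra hne
      simpa [hiu, Ne.symm hlm] using
        h (i, j) (i, k) (i, m) (u, l) (by simp [Ne.symm hk]) (by simp [hiu])
          (iff_of_false hrel hne) (.inl rfl)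
    exact hrel (s.trans (rel_of_not_sharing j hlj) (s.symm (rel_of_not_sharing k hlk)))

section Cliques

variable {V : Type} {G : SimpleGraph V} {P Q : Set V} {u w x : V}

/-- Equality or adjacency; inside a disjoint union of cliques, lying in the same clique. -/
def SameClique (G : SimpleGraph V) (u w : V) : Prop := u = w ∨ G.Adj u w

lemma SameClique.symm (h : SameClique G u w) : SameClique G w u :=
  h.imp Eq.symm Adj.symm

lemma sameClique_map_iff (ψ : G ≃g G) : SameClique G (ψ u) (ψ w) ↔ SameClique G u w :=
  or_congr ψ.injective.eq_iff ψ.map_adj_iff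

lemma IsUnionOfCliques.mono (h : IsUnionOfCliques G P) (hQP : Q ⊆ P) : IsUnionOfCliques G Q :=
  fun u hu w hw x hx => h u (hQP hu) w (hQP hw) x (hQP hx)

lemma IsUnionOfCliques.sameClique_trans (h : IsUnionOfCliques G P) (hu : u ∈ P) (hw : w ∈ P)
    (hx : x ∈ P) (huw : SameClique G u w) (hwx : SameClique G w x) : SameClique G u x := by
  rcases huw with rfl | huw
  · exact hwx
  rcases hwx with rfl | hwx
  · exact .inr huw
  · exact or_iff_not_imp_left.2 (h u hu w hw x hx huw hwx)

/-- The partition of a disjoint union of cliques into its cliques. -/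
def cliqueSetoid (h : IsUnionOfCliques G P) : Setoid P where
  r u w := SameClique G u.1 w.1
  iseqv := ⟨fun _ => .inl rfl, .symm, fun {u w x} => h.sameClique_trans u.2 w.2 x.2⟩

/-- The cliques of a disjoint union of cliques. -/
abbrev Cliques (h : IsUnionOfCliques G P) : Type := Quotient (cliqueSetoid h)

lemma Cliques.eq_of_sameClique_out {h : IsUnionOfCliques G P} {C D : Cliques h}
    (hCD : SameClique G C.out.1 D.out.1) : C = D :=
  Quotient.out_equiv_out.1 hCD

/-- `X` contains an infinite independent set. -/
def HasInfiniteIndep (G : SimpleGraph V) (X : Set V) : Prop :=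
  ∃ S ⊆ X, IsIndepIn G S ∧ S.Infinite

lemma hasInfiniteIndep_iff (h : IsUnionOfCliques G P) {X : Set V} (hXP : X ⊆ P) :
    HasInfiniteIndep G X ↔
      ((fun u : P => (⟦u⟧ : Cliques h)) '' (Subtype.val ⁻¹' X)).Infinite := by
  constructor
  · rintro ⟨S, hSX, hS, hSinf⟩
    have hinj : Set.InjOn (fun u : P => (⟦u⟧ : Cliques h)) (Subtype.val ⁻¹' S) :=
      fun u hu w hw huw => Subtype.ext ((Quotient.exact huw).resolve_right (hS u hu w hw))
    refine .mono (Set.image_mono (Set.preimage_mono hSX)) (.image hinj (.preimage hSinf ?_))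
    rw [Subtype.range_coe]
    exact hSX.trans hXP
  · intro hinf
    obtain ⟨S, hSX, hS⟩ := (Set.surjOn_image _ _).exists_bijOn_subset
    refine ⟨Subtype.val '' S, Set.image_subset_iff.2 hSX, ?_,
      .image Subtype.val_injective.injOn (.of_image _ (hS.image_eq ▸ hinf))⟩
    rintro _ ⟨u, hu, rfl⟩ _ ⟨w, hw, rfl⟩ huw
    exact huw.ne (congrArg Subtype.val (hS.injOn hu hw (Quotient.sound (.inr huw))))

lemma infinite_cliques_iff (h : IsUnionOfCliques G P) :
    Infinite (Cliques h) ↔ HasInfiniteIndep G P := by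
  rw [hasInfiniteIndep_iff h subset_rfl, Subtype.coe_preimage_self, Set.image_univ,
    Set.range_eq_univ.2 Quotient.mk_surjective, Set.infinite_univ_iff]

/-- The permutation of the cliques induced by an automorphism that preserves `P`. -/
def cliquePerm (h : IsUnionOfCliques G P) (ψ : G ≃g G) (hψ : ∀ u, ψ u ∈ P ↔ u ∈ P) :
    Equiv.Perm (Cliques h) :=
  Quotient.congr (ψ.toEquiv.subtypeEquiv fun u => (hψ u).symm) fun _ _ =>
    (sameClique_map_iff ψ).symm

/-- The cliques of `P` with a vertex that is adjacent to `r` (if `p` holds) or nonadjacent to `r`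
(if `p` fails). -/
def trace (h : IsUnionOfCliques G P) (p : Prop) (r : V) : Set (Cliques h) :=
  (fun u : P => ⟦u⟧) '' {u | G.Adj u r ↔ p}

lemma finite_trace_iff (h : IsUnionOfCliques G P) {p : Prop} {r : V} :
    (trace h p r).Finite ↔ ¬ HasInfiniteIndep G {u ∈ P | G.Adj u r ↔ p} := by
  have heq : {u : P | G.Adj u r ↔ p} = Subtype.val ⁻¹' {u ∈ P | G.Adj u r ↔ p} :=
    Set.ext fun u => (and_iff_right u.2).symm
  rw [hasInfiniteIndep_iff h (Set.sep_subset _ _), Set.not_infinite, trace, heq]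

lemma trace_apply (h : IsUnionOfCliques G P) {ψ : G ≃g G} (hψ : ∀ u, ψ u ∈ P ↔ u ∈ P) (p : Prop)
    (r : V) : trace h p (ψ r) = cliquePerm h ψ hψ '' trace h p r := by
  set e : P ≃ P := ψ.toEquiv.subtypeEquiv fun u => (hψ u).symm
  have he : {u : P | G.Adj u (ψ r) ↔ p} = e '' {u | G.Adj u r ↔ p} := by
    refine (e.image_preimage _).symm.trans (congrArg (e '' ·) (Set.ext fun u => ?_))
    exact iff_congr ψ.map_adj_iff .rfl
  rw [trace, trace, he, Set.image_image, Set.image_image]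
  rfl

end Cliques

section Automorphisms

variable {V : Type} {G : SimpleGraph V} {red : V → Prop} {J : Finset V} {b r v x y x' y' : V}

lemma Ultrahomogeneous.exists_apply_eq (hU : Ultrahomogeneous G red) {ι : Type*} [Finite ι]
    (x y : ι → V) (hred : ∀ i, red (y i) ↔ red (x i)) (heq : ∀ i k, y i = y k ↔ x i = x k)
    (hadj : ∀ i k, G.Adj (y i) (y k) ↔ G.Adj (x i) (x k)) :
    ∃ ψ : G ≃g G, (∀ u, red (ψ u) ↔ red u) ∧ ∀ i, ψ (x i) = y i := by
  have hext : ∀ i, Function.extend x y id (x i) = y i := fun i =>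
    Function.FactorsThrough.extend_apply (fun i k hik => (heq i k).2 hik) id i
  obtain ⟨ψ, hψred, hψ⟩ := hU (Set.range x) (Set.finite_range x) (Function.extend x y id) <| by
    refine ⟨?_, ?_, ?_⟩
    · rintro _ ⟨i, rfl⟩ _ ⟨k, rfl⟩ hik
      rw [hext, hext] at hik
      exact (heq i k).1 hik
    · rintro _ ⟨i, rfl⟩
      rw [hext, hred]
    · rintro _ ⟨i, rfl⟩ _ ⟨k, rfl⟩
      rw [hext, hext, hadj]
  exact ⟨ψ, hψred, fun i => (hψ _ ⟨i, rfl⟩).trans (hext i)⟩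

/-- `x` and `y` are indistinguishable over `J`: they lie outside `J` and have the same color and the
same neighbors in `J`. -/
structure SameTypeOver (G : SimpleGraph V) (red : V → Prop) (J : Finset V) (x y : V) : Prop where
  notMem_left : x ∉ J
  notMem_right : y ∉ J
  red_iff : red y ↔ red x
  adj_iff : ∀ j ∈ J, (G.Adj y j ↔ G.Adj x j)

/-- `ψ` is color-preserving and fixes `J` pointwise. -/
structure IsAutOver (red : V → Prop) (J : Finset V) (ψ : G ≃g G) : Prop where
  red_iff : ∀ u, red (ψ u) ↔ red u
  apply_eq : ∀ j ∈ J, ψ j = j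

lemma Ultrahomogeneous.exists_isAutOver (hU : Ultrahomogeneous G red) {ι : Type*} [Finite ι]
    (x y : ι → V) (htype : ∀ i, SameTypeOver G red J (x i) (y i))
    (heq : ∀ i k, y i = y k ↔ x i = x k)
    (hadj : ∀ i k, G.Adj (y i) (y k) ↔ G.Adj (x i) (x k)) :
    ∃ ψ : G ≃g G, IsAutOver red J ψ ∧ ∀ i, ψ (x i) = y i := by
  have hne (i : ι) (j : J) : y i = j ↔ x i = j :=
    iff_of_false (fun h => (htype i).notMem_right (h ▸ j.2))
      fun h => (htype i).notMem_left (h ▸ j.2)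
  obtain ⟨ψ, hψred, hψ⟩ := hU.exists_apply_eq (Sum.elim x ((↑) : J → V)) (Sum.elim y (↑))
    (by rintro (i | j)
        exacts [(htype i).red_iff, .rfl])
    (by rintro (i | j) (k | l)
        exacts [heq i k, hne i l, eq_comm.trans ((hne k j).trans eq_comm), .rfl])
    (by rintro (i | j) (k | l)
        exacts [hadj i k, (htype i).adj_iff l l.2,
          (G.adj_comm _ _).trans (((htype k).adj_iff j j.2).trans (G.adj_comm _ _)), .rfl])
  exact ⟨ψ, ⟨hψred, fun j hj => hψ (.inr ⟨j, hj⟩)⟩, fun i => hψ (.inl i)⟩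

lemma Ultrahomogeneous.exists_isAutOver_apply_eq (hU : Ultrahomogeneous G red)
    (hxy : SameTypeOver G red J x y) : ∃ ψ : G ≃g G, IsAutOver red J ψ ∧ ψ x = y := by
  obtain ⟨ψ, hψ, h⟩ := hU.exists_isAutOver (fun _ : Unit => x) (fun _ => y) (fun _ => hxy)
    (fun _ _ => iff_of_true rfl rfl) (fun _ _ => iff_of_false G.irrefl G.irrefl)
  exact ⟨ψ, hψ, h ()⟩

lemma Ultrahomogeneous.exists_isAutOver_pair (hU : Ultrahomogeneous G red)
    (hx : SameTypeOver G red J x x') (hy : SameTypeOver G red J y y') (hxy : x ≠ y)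
    (hxy' : x' ≠ y') (hadj : G.Adj x' y' ↔ G.Adj x y) :
    ∃ ψ : G ≃g G, IsAutOver red J ψ ∧ ψ x = x' ∧ ψ y = y' := by
  obtain ⟨ψ, hψ, h⟩ := hU.exists_isAutOver ![x, y] ![x', y'] (J := J)
    (by simp [Fin.forall_fin_two, hx, hy]) (by simp [Fin.forall_fin_two, hxy, hxy', hxy.symm,
      hxy'.symm]) (by simp [Fin.forall_fin_two, hadj, G.adj_comm y, G.adj_comm y'])
  exact ⟨ψ, hψ, h 0, h 1⟩

/-- The red vertices outside the cliques of the vertices in `J`. -/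
def freeRed (G : SimpleGraph V) (red : V → Prop) (J : Finset V) : Set V :=
  {r | red r ∧ ∀ j ∈ J, ¬ SameClique G j r}

/-- The blue vertices with the same neighbors in `J` as `v`. -/
def blueType (G : SimpleGraph V) (red : V → Prop) (J : Finset V) (v : V) : Set V :=
  {b | ¬ red b ∧ ∀ r ∈ J, (G.Adj b r ↔ G.Adj v r)}

lemma mem_blueType_self (hv : ¬ red v) : v ∈ blueType G red J v :=
  ⟨hv, fun _ _ => .rfl⟩

lemma freeRed_insert [DecidableEq V] (j : V) :
    freeRed G red (insert j J) = {r ∈ freeRed G red J | ¬ SameClique G j r} := by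
  ext r
  simp only [freeRed, Finset.forall_mem_insert, Set.mem_ofPred_eq]
  tauto

lemma blueType_insert [DecidableEq V] (j : V) :
    blueType G red (insert j J) v = {b ∈ blueType G red J v | G.Adj b j ↔ G.Adj v j} := by
  ext b
  simp only [blueType, Finset.forall_mem_insert, Set.mem_ofPred_eq]
  tauto

lemma isUnionOfCliques_blueType (hB : IsUnionOfCliques G {v | ¬ red v}) (J : Finset V) (v : V) :
    IsUnionOfCliques G (blueType G red J v) :=
  hB.mono fun _ hb => hb.1

lemma isUnionOfCliques_freeRed (hR : IsUnionOfCliques G {v | red v}) (J : Finset V) :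
    IsUnionOfCliques G (freeRed G red J) :=
  hR.mono fun _ hr => hr.1

lemma not_adj_of_mem_freeRed (hr : r ∈ freeRed G red J) {j : V} (hj : j ∈ J) : ¬ G.Adj r j :=
  fun h => hr.2 j hj (.inr h.symm)

lemma notMem_of_mem_freeRed (hr : r ∈ freeRed G red J) : r ∉ J :=
  fun hrJ => hr.2 r hrJ (.inl rfl)

lemma sameTypeOver_of_mem_freeRed (hx : x ∈ freeRed G red J) (hy : y ∈ freeRed G red J) :
    SameTypeOver G red J x y where
  notMem_left := notMem_of_mem_freeRed hx
  notMem_right := notMem_of_mem_freeRed hy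
  red_iff := iff_of_true hy.1 hx.1
  adj_iff _ hj := iff_of_false (not_adj_of_mem_freeRed hy hj) (not_adj_of_mem_freeRed hx hj)

lemma sameTypeOver_of_mem_blueType (hJ : ∀ j ∈ J, red j) (hx : x ∈ blueType G red J v)
    (hy : y ∈ blueType G red J v) : SameTypeOver G red J x y where
  notMem_left h := hx.1 (hJ x h)
  notMem_right h := hy.1 (hJ y h)
  red_iff := iff_of_false hy.1 hx.1
  adj_iff j hj := (hy.2 j hj).trans (hx.2 j hj).symm

lemma apply_mem_freeRed_image_iff [DecidableEq V] {ψ : G ≃g G} (hψ : ∀ u, red (ψ u) ↔ red u) :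
    ψ r ∈ freeRed G red (J.image ψ) ↔ r ∈ freeRed G red J := by
  refine and_congr (hψ r) (Finset.forall_mem_image.trans (forall₂_congr fun j _ => ?_))
  rw [sameClique_map_iff]

lemma IsAutOver.image_eq [DecidableEq V] {ψ : G ≃g G} (hψ : IsAutOver red J ψ) :
    J.image ψ = J :=
  (Finset.image_congr hψ.apply_eq).trans Finset.image_id

lemma IsAutOver.mem_freeRed_iff {ψ : G ≃g G} (hψ : IsAutOver red J ψ) :
    ψ r ∈ freeRed G red J ↔ r ∈ freeRed G red J := by
  classical
  simpa only [hψ.image_eq] using apply_mem_freeRed_image_iff (J := J) (r := r) hψ.red_iff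

lemma IsAutOver.mem_blueType_iff {ψ : G ≃g G} (hψ : IsAutOver red J ψ) :
    ψ b ∈ blueType G red J v ↔ b ∈ blueType G red J v := by
  refine and_congr (not_congr (hψ.red_iff b)) (forall₂_congr fun j hj => iff_congr ?_ .rfl)
  conv_lhs => rw [← hψ.apply_eq j hj, ψ.map_adj_iff]

lemma freeRed_anti {J' : Finset V} (hJ : J ⊆ J') : freeRed G red J' ⊆ freeRed G red J :=
  fun _ hr => ⟨hr.1, fun j hj => hr.2 j (hJ hj)⟩

lemma mem_freeRed_of_sameClique (hR : IsUnionOfCliques G {v | red v}) (hJ : ∀ j ∈ J, red j)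
    (hr : r ∈ freeRed G red J) (hx : red x) (hrx : SameClique G r x) : x ∈ freeRed G red J :=
  ⟨hx, fun j hj hjx => hr.2 j hj (hR.sameClique_trans (hJ j hj) hx hr.1 hjx hrx.symm)⟩

lemma mem_freeRed_erase [DecidableEq V] (hJ : ∀ j ∈ J, red j)
    (hJind : ∀ u ∈ J, ∀ v ∈ J, ¬ G.Adj u v) {j : V} (hj : j ∈ J) :
    j ∈ freeRed G red (J.erase j) :=
  ⟨hJ j hj, fun i hi h => h.elim (Finset.ne_of_mem_erase hi)
    (hJind i (Finset.mem_of_mem_erase hi) j hj)⟩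

lemma adj_iff_sameClique (hxy : x ≠ y) : G.Adj x y ↔ SameClique G x y :=
  (or_iff_right hxy).symm

end Automorphisms

section Traces

variable {V : Type} {G : SimpleGraph V} {red : V → Prop} {J : Finset V} {j r v : V} {p : Prop}

lemma mem_trace_mk_iff (hU : Ultrahomogeneous G red) (hJ : ∀ j ∈ J, red j)
    (h : IsUnionOfCliques G (blueType G red J v)) [Infinite (Cliques h)]
    (hr : r ∈ freeRed G red J) (hfin : (trace h p r).Finite) (b : blueType G red J v) :
    ⟦b⟧ ∈ trace h p r ↔ (G.Adj b r ↔ p) := by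
  refine ⟨?_, fun hb => ⟨b, hb, rfl⟩⟩
  rintro ⟨c, hc, hcb⟩
  by_contra hb
  obtain ⟨D, hD⟩ := hfin.exists_notMem
  obtain ⟨d, rfl⟩ := D.exists_rep
  have hd : ¬ (G.Adj d r ↔ p) := fun hd => hD ⟨d, hd, rfl⟩
  -- An automorphism over `J` and `r` taking `b` to `d` takes `c` into the clique of `d`.
  obtain ⟨ψ, hψ, hbd, hψr⟩ := hU.exists_isAutOver_pair
    (sameTypeOver_of_mem_blueType hJ b.2 d.2) (sameTypeOver_of_mem_freeRed hr hr)
    (fun e => b.2.1 (e ▸ hr.1)) (fun e => d.2.1 (e ▸ hr.1)) (by tauto)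
  refine hD ⟨⟨ψ c, hψ.mem_blueType_iff.2 c.2⟩, ?_, Quotient.sound ?_⟩
  · change G.Adj (ψ c) r ↔ p
    rwa [← hψr, ψ.map_adj_iff]
  · change SameClique G (ψ c) d
    rw [← hbd, sameClique_map_iff]
    exact Quotient.exact hcb

lemma exists_cliquePerm_eqOn (hU : Ultrahomogeneous G red) (hJ : ∀ j ∈ J, red j)
    (h : IsUnionOfCliques G (blueType G red J v)) {X : Set (Cliques h)} (hX : X.Finite)
    {f : Cliques h → Cliques h} (hf : X.InjOn f) :
    ∃ (ψ : G ≃g G) (hψ : IsAutOver red J ψ),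
      X.EqOn (cliquePerm h ψ fun _ => hψ.mem_blueType_iff) f := by
  have := hX.to_subtype
  have out_eq_iff (C D : Cliques h) : (C.out : V) = D.out ↔ C = D := by
    rw [Subtype.coe_inj, Quotient.out_inj]
  have not_adj_out (C D : Cliques h) : ¬ G.Adj C.out D.out := fun hCD =>
    hCD.ne ((out_eq_iff C D).2 (Cliques.eq_of_sameClique_out (.inr hCD)))
  obtain ⟨ψ, hψ, hψout⟩ := hU.exists_isAutOver (fun C : X => (C.1.out : V)) (fun C => (f C).out)
    (fun C => sameTypeOver_of_mem_blueType hJ C.1.out.2 (f C).out.2)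
    (fun C D => by rw [out_eq_iff, out_eq_iff, hf.eq_iff C.2 D.2])
    (fun C D => iff_of_false (not_adj_out _ _) (not_adj_out _ _))
  refine ⟨ψ, hψ, fun C hC => ?_⟩
  calc cliquePerm h ψ _ C = cliquePerm h ψ _ ⟦C.out⟧ := by rw [Quotient.out_eq]
    _ = ⟦(f C).out⟧ := congrArg _ (Subtype.ext (hψout ⟨C, hC⟩))
    _ = f C := Quotient.out_eq _

lemma isHomogeneousFamily_trace (hU : Ultrahomogeneous G red) (hJ : ∀ j ∈ J, red j)
    (hF : IsUnionOfCliques G (freeRed G red J)) (h : IsUnionOfCliques G (blueType G red J v))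
    (hj : j ∈ freeRed G red J) (hfin : (trace h p j).Finite) (hne : (trace h p j).Nonempty) :
    IsHomogeneousFamily (cliqueSetoid hF) fun r => trace h p r := by
  have exists_eq_image (r : freeRed G red J) :
      ∃ g : Cliques h → Cliques h, trace h p r = g '' trace h p j := by
    obtain ⟨ψ, hψ, hjr⟩ := hU.exists_isAutOver_apply_eq (sameTypeOver_of_mem_freeRed hj r.2)
    exact ⟨_, hjr ▸ trace_apply h (fun _ => hψ.mem_blueType_iff) p j⟩
  refine ⟨fun r => ?_, fun r => ?_, fun X hX f hf => ?_, fun {a b c d} hab hcd hrel hdisj => ?_⟩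
  · obtain ⟨g, hg⟩ := exists_eq_image r
    exact hg ▸ hfin.image g
  · obtain ⟨g, hg⟩ := exists_eq_image r
    exact hg ▸ hne.image g
  · obtain ⟨ψ, hψ, hψf⟩ := exists_cliquePerm_eqOn hU hJ h hX hf
    refine ⟨fun r => ⟨ψ r, hψ.mem_freeRed_iff.2 r.2⟩, fun _ _ => sameClique_map_iff ψ,
      fun r hr => ?_⟩
    rw [trace_apply h (fun _ => hψ.mem_blueType_iff)]
    exact (hψf.mono hr).image_eq
  · have hab' : (a : V) ≠ b := Subtype.coe_ne_coe.2 hab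
    have hcd' : (c : V) ≠ d := Subtype.coe_ne_coe.2 hcd
    obtain ⟨ψ, hψ, hac, hbd⟩ := hU.exists_isAutOver_pair (sameTypeOver_of_mem_freeRed a.2 c.2)
      (sameTypeOver_of_mem_freeRed b.2 d.2) hab' hcd'
      ((adj_iff_sameClique hcd').trans (hrel.symm.trans (adj_iff_sameClique hab').symm))
    rw [← hac, ← hbd, trace_apply h (fun _ => hψ.mem_blueType_iff),
      trace_apply h (fun _ => hψ.mem_blueType_iff)]
    exact (Set.disjoint_image_iff (Equiv.injective _)).2 hdisj

end Traces

section ManyCliques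

variable {V : Type} {G : SimpleGraph V} {red : V → Prop} {J : Finset V} {j r s v : V}

lemma finite_trace_iff_not_hasInfiniteIndep_insert [DecidableEq V]
    (h : IsUnionOfCliques G (blueType G red J v)) (j : V) :
    (trace h (G.Adj v j) j).Finite ↔ ¬ HasInfiniteIndep G (blueType G red (insert j J) v) := by
  rw [finite_trace_iff, blueType_insert]

lemma nonempty_trace (h : IsUnionOfCliques G (blueType G red J v)) (hv : ¬ red v) (j : V) :
    (trace h (G.Adj v j) j).Nonempty :=
  ⟨_, ⟨v, mem_blueType_self hv⟩, .rfl, rfl⟩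

lemma adj_iff_of_finite_trace (hU : Ultrahomogeneous G red) (hR : IsUnionOfCliques G {v | red v})
    (hJ : ∀ j ∈ J, red j) (h : IsUnionOfCliques G (blueType G red J v)) [Infinite (Cliques h)]
    (hv : ¬ red v) (hj : j ∈ freeRed G red J) (hfin : (trace h (G.Adj v j) j).Finite)
    (hF : ∃ r ∈ freeRed G red J, ∃ s ∈ freeRed G red J, ¬ SameClique G r s)
    (hr : r ∈ freeRed G red J) (hs : s ∈ freeRed G red J) (hrs : SameClique G r s) :
    G.Adj v r ↔ G.Adj v s := by
  have hT := isHomogeneousFamily_trace hU hJ (isUnionOfCliques_freeRed hR J) h hj hfin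
    (nonempty_trace h hv j)
  have hTrs : trace h (G.Adj v j) r = trace h (G.Adj v j) s := by
    obtain ⟨x, hx, y, hy, hxy⟩ := hF
    exact hT.eq_of_rel (a := ⟨r, hr⟩) (b := ⟨s, hs⟩) ⟨⟨x, hx⟩, ⟨y, hy⟩, hxy⟩ hrs
  have mem_iff {x : V} (hx : x ∈ freeRed G red J) :=
    mem_trace_mk_iff hU hJ h hx (hT.finite ⟨x, hx⟩) ⟨v, mem_blueType_self hv⟩
  have : (G.Adj v r ↔ G.Adj v j) ↔ (G.Adj v s ↔ G.Adj v j) := by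
    rw [← mem_iff hr, ← mem_iff hs, hTrs]
  tauto

lemma exists_mem_freeRed_adj_iff (hU : Ultrahomogeneous G red) (hJ : ∀ j ∈ J, red j)
    (h : IsUnionOfCliques G (blueType G red J v)) [Infinite (Cliques h)] (hv : ¬ red v)
    (hj : j ∈ freeRed G red J) (hfin : (trace h (G.Adj v j) j).Finite) (q : Prop) :
    ∃ t ∈ freeRed G red J, (G.Adj v t ↔ q) := by
  by_cases hq : G.Adj v j ↔ q
  · exact ⟨j, hj, hq⟩
  obtain ⟨D, hD⟩ := hfin.exists_notMem
  obtain ⟨d, rfl⟩ := D.exists_rep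
  have hd : ¬ (G.Adj d j ↔ G.Adj v j) := fun hd => hD ⟨d, hd, rfl⟩
  obtain ⟨ψ, hψ, hdv⟩ := hU.exists_isAutOver_apply_eq
    (sameTypeOver_of_mem_blueType hJ d.2 (mem_blueType_self hv))
  refine ⟨ψ j, hψ.mem_freeRed_iff.2 hj, ?_⟩
  rw [← hdv, ψ.map_adj_iff]
  tauto

-- Exchanging a vertex of `J` for a free vertex that looks the same to `v` makes its clique free.
lemma adj_iff_of_forall_mem_freeRed (hU : Ultrahomogeneous G red)
    (hR : IsUnionOfCliques G {v | red v}) (hJ : ∀ j ∈ J, red j)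
    (hJind : ∀ u ∈ J, ∀ w ∈ J, ¬ G.Adj u w) (hv : ¬ red v)
    (hconst : ∀ r ∈ freeRed G red J, ∀ s ∈ freeRed G red J, SameClique G r s →
      (G.Adj v r ↔ G.Adj v s))
    (hex : ∀ q : Prop, ∃ t ∈ freeRed G red J, (G.Adj v t ↔ q))
    (hr : red r) (hs : red s) (hrs : SameClique G r s) : G.Adj v r ↔ G.Adj v s := by
  classical
  have of_mem_freeRed : ∀ x y, x ∈ freeRed G red J → red y → SameClique G x y →
      (G.Adj v x ↔ G.Adj v y) := fun x y hx hy hxy =>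
    hconst x hx y (mem_freeRed_of_sameClique hR hJ hx hy hxy) hxy
  by_cases hrF : r ∈ freeRed G red J
  · exact of_mem_freeRed r s hrF hs hrs
  obtain ⟨i, hi, hir⟩ : ∃ i ∈ J, SameClique G i r := by
    by_contra! hnone
    exact hrF ⟨hr, hnone⟩
  obtain ⟨t, ht, hti⟩ := hex (G.Adj v i)
  have hJ' : ∀ j ∈ J.erase i, red j := fun j hj => hJ j (Finset.mem_of_mem_erase hj)
  obtain ⟨ψ, hψ, hit, hvv⟩ := hU.exists_isAutOver_pair
    (sameTypeOver_of_mem_freeRed (mem_freeRed_erase hJ hJind hi)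
      (freeRed_anti (Finset.erase_subset i J) ht))
    (sameTypeOver_of_mem_blueType hJ' (mem_blueType_self hv) (mem_blueType_self hv))
    (fun e => hv (e ▸ hJ i hi)) (fun e => hv (e ▸ ht.1)) (by rwa [G.adj_comm, G.adj_comm i])
  have hψr : ψ r ∈ freeRed G red J := by
    refine mem_freeRed_of_sameClique hR hJ ht ((hψ.red_iff r).2 hr) ?_
    rwa [← hit, sameClique_map_iff]
  have adj_apply (x : V) : G.Adj v (ψ x) ↔ G.Adj v x := by
    conv_lhs => rw [← hvv, ψ.map_adj_iff]
  rw [← adj_apply r, ← adj_apply s]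
  exact of_mem_freeRed _ _ hψr ((hψ.red_iff s).2 hs) ((sameClique_map_iff ψ).2 hrs)

end ManyCliques

section OneClique

variable {V : Type} {G : SimpleGraph V} {red : V → Prop} {J : Finset V} {b i r s t v : V} {q : Prop}

/-- The red vertices outside the cliques of `J` form one infinite clique, exactly one vertex of
which is adjacent to `v` (if `q` holds) or nonadjacent to `v` (if `q` fails). -/
structure IsMatched (G : SimpleGraph V) (red : V → Prop) (J : Finset V) (v : V) (q : Prop) :
    Prop where
  infinite : (freeRed G red J).Infinite
  sameClique : ∀ r ∈ freeRed G red J, ∀ s ∈ freeRed G red J, SameClique G r s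
  existsUnique : ∃! r, r ∈ freeRed G red J ∧ (G.Adj v r ↔ q)

lemma isMatched_of_finite_trace (hU : Ultrahomogeneous G red)
    (hR : IsUnionOfCliques G {v | red v}) (hJ : ∀ j ∈ J, red j)
    (h : IsUnionOfCliques G (blueType G red J v)) [Infinite (Cliques h)] (hv : ¬ red v)
    (hj : j ∈ freeRed G red J) (hfin : (trace h (G.Adj v j) j).Finite)
    (hF : ∀ r ∈ freeRed G red J, ∀ s ∈ freeRed G red J, SameClique G r s) :
    IsMatched G red J v (G.Adj v j) := by
  have hT := isHomogeneousFamily_trace hU hJ (isUnionOfCliques_freeRed hR J) h hj hfin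
    (nonempty_trace h hv j)
  refine ⟨fun hFfin => ?_, hF, j, ⟨hj, .rfl⟩, fun r ⟨hr, hrv⟩ => ?_⟩
  · have := hFfin.to_subtype
    refine Set.infinite_univ ((Set.finite_iUnion hT.finite).subset fun D _ => ?_)
    obtain ⟨d, rfl⟩ := D.exists_rep
    obtain ⟨ψ, hψ, hvd⟩ := hU.exists_isAutOver_apply_eq
      (sameTypeOver_of_mem_blueType hJ (mem_blueType_self hv) d.2)
    refine Set.mem_iUnion.2 ⟨⟨ψ j, hψ.mem_freeRed_iff.2 hj⟩, d, ?_, rfl⟩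
    change G.Adj d (ψ j) ↔ G.Adj v j
    rw [← hvd, ψ.map_adj_iff]
  · by_contra hrj
    have hdisj := hT.pairwise_disjoint_of_forall_rel (fun a b => hF a a.2 b b.2)
      (i := ⟨r, hr⟩) (j := ⟨j, hj⟩) (by simpa using hrj)
    exact Set.disjoint_left.1 hdisj ⟨⟨v, mem_blueType_self hv⟩, hrv, rfl⟩
      ⟨⟨v, mem_blueType_self hv⟩, .rfl, rfl⟩

lemma IsMatched.image [DecidableEq V] (hm : IsMatched G red J v q) {ψ : G ≃g G}
    (hψ : ∀ u, red (ψ u) ↔ red u) : IsMatched G red (J.image ψ) (ψ v) q where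
  infinite := (hm.infinite.image ψ.injective.injOn).mono <|
    Set.image_subset_iff.2 fun _ hr => (apply_mem_freeRed_image_iff hψ).2 hr
  sameClique := ψ.surjective.forall.2 fun r hr => ψ.surjective.forall.2 fun s hs =>
    (sameClique_map_iff ψ).2 <| hm.sameClique r ((apply_mem_freeRed_image_iff hψ).1 hr) s
      ((apply_mem_freeRed_image_iff hψ).1 hs)
  existsUnique := ψ.bijective.existsUnique_iff.2 <| by
    simpa only [apply_mem_freeRed_image_iff hψ, ψ.map_adj_iff] using hm.existsUnique

lemma IsMatched.insert_congr [DecidableEq V] (hm : IsMatched G red (insert i J) v q)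
    (hU : Ultrahomogeneous G red) (hJ : ∀ j ∈ J, red j) (hv : ¬ red v)
    (hi : i ∈ freeRed G red J) (ht : t ∈ freeRed G red J) (hit : G.Adj v t ↔ G.Adj v i) :
    IsMatched G red (insert t J) v q := by
  obtain ⟨ψ, hψ, hψi, hψv⟩ := hU.exists_isAutOver_pair (sameTypeOver_of_mem_freeRed hi ht)
    (sameTypeOver_of_mem_blueType hJ (mem_blueType_self hv) (mem_blueType_self hv))
    (fun e => hv (e ▸ hi.1)) (fun e => hv (e ▸ ht.1)) (by rwa [G.adj_comm, G.adj_comm i])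
  simpa only [Finset.image_insert, hψ.image_eq, hψi, hψv] using hm.image hψ.red_iff

lemma IsMatched.exists_mem_freeRed_adj_iff (hm : IsMatched G red J v q) (p : Prop) :
    ∃ t ∈ freeRed G red J, (G.Adj v t ↔ p) := by
  obtain ⟨j, ⟨hj, hjq⟩, huniq⟩ := hm.existsUnique
  by_cases hpq : p ↔ q
  · exact ⟨j, hj, hjq.trans hpq.symm⟩
  obtain ⟨t, ht, htj⟩ := hm.infinite.nontrivial.exists_ne j
  have htq : ¬ (G.Adj v t ↔ q) := fun htq => htj (huniq t ⟨ht, htq⟩)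
  exact ⟨t, ht, by tauto⟩

/-- The only vertices of `freeRed G red J` adjacent to `b` (if `q` holds) or nonadjacent to `b`
(if `q` fails) are `r` and `s`. -/
def MarksExactly (G : SimpleGraph V) (red : V → Prop) (J : Finset V) (q : Prop) (b r s : V) :
    Prop :=
  ∀ x ∈ freeRed G red J, (G.Adj b x ↔ q) ↔ x = r ∨ x = s

lemma MarksExactly.map (h : MarksExactly G red J q b r s) {ψ : G ≃g G} (hψ : IsAutOver red J ψ) :
    MarksExactly G red J q (ψ b) (ψ r) (ψ s) :=
  ψ.surjective.forall.2 fun x hx => by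
    rw [ψ.map_adj_iff, h x (hψ.mem_freeRed_iff.1 hx), ψ.injective.eq_iff, ψ.injective.eq_iff]

lemma exists_marksExactly_of_isMatched [DecidableEq V] (hR : IsUnionOfCliques G {v | red v})
    (hi : i ∈ freeRed G red J) (ht : t ∈ freeRed G red J) (hit : ¬ SameClique G i t)
    (hmi : IsMatched G red (insert i J) v q) (hmt : IsMatched G red (insert t J) v q) :
    ∃ k ∈ freeRed G red (insert t J), ∃ j ∈ freeRed G red (insert i J),
      MarksExactly G red J q v k j := by
  obtain ⟨j, ⟨hj, hjq⟩, hj_unique⟩ := hmi.existsUnique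
  obtain ⟨k, ⟨hk, hkq⟩, hk_unique⟩ := hmt.existsUnique
  refine ⟨k, hk, j, hj, fun x hx => ⟨fun hxq => ?_, by rintro (rfl | rfl) <;> assumption⟩⟩
  by_cases hix : SameClique G i x
  · refine .inl (hk_unique x ⟨?_, hxq⟩)
    rw [freeRed_insert]
    exact ⟨hx, fun htx => hit (hR.sameClique_trans hi.1 hx.1 ht.1 hix htx.symm)⟩
  · refine .inr (hj_unique x ⟨?_, hxq⟩)
    rw [freeRed_insert]
    exact ⟨hx, hix⟩

lemma false_of_forall_exists_marksExactly (hU : Ultrahomogeneous G red) (hJ : ∀ j ∈ J, red j)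
    (h : IsUnionOfCliques G (blueType G red J v)) {K L : Set V} [Nontrivial K] [Infinite L]
    (hK : K ⊆ freeRed G red J) (hL : L ⊆ freeRed G red J) (hKL : Disjoint K L)
    (hmarks : ∀ r ∈ K, ∀ s ∈ L, ∃ b ∈ blueType G red J v, MarksExactly G red J q b r s) :
    False := by
  choose b hb hmark using fun x : K × L => hmarks x.1 x.1.2 x.2 x.2.2
  have ne (r : K) (s : L) : (r : V) ≠ s := hKL.ne_of_mem r.2 s.2
  have share_iff (x y : K × L) : (x.1 = y.1 ∨ x.2 = y.2) ↔
      ∃ m ∈ freeRed G red J, (G.Adj (b x) m ↔ q) ∧ (G.Adj (b y) m ↔ q) := by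
    constructor
    · rintro (hxy | hxy)
      · exact ⟨x.1, hK x.1.2, (hmark x _ (hK x.1.2)).2 (.inl rfl),
          (hmark y _ (hK x.1.2)).2 (.inl (congrArg _ hxy))⟩
      · exact ⟨x.2, hL x.2.2, (hmark x _ (hL x.2.2)).2 (.inr rfl),
          (hmark y _ (hL x.2.2)).2 (.inr (congrArg _ hxy))⟩
    · rintro ⟨m, hm, hxm, hym⟩
      have := ne x.1 y.2
      have := ne y.1 x.2
      grind [(hmark x m hm).1 hxm, (hmark y m hm).1 hym]
  have b_injective : b.Injective := by
    intro x y hxy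
    have h1 := (hmark x _ (hK y.1.2)).1 (hxy ▸ (hmark y _ (hK y.1.2)).2 (.inl rfl))
    have h2 := (hmark x _ (hL y.2.2)).1 (hxy ▸ (hmark y _ (hL y.2.2)).2 (.inr rfl))
    refine Prod.ext (Subtype.ext ?_) (Subtype.ext ?_)
    · exact (h1.resolve_right (ne _ _)).symm
    · exact (h2.resolve_left (ne _ _).symm).symm
  refine false_of_setoid_determines_sharing
    ((cliqueSetoid h).comap fun x => ⟨b x, hb x⟩) fun x y z w hxy hzw hrel => ?_
  obtain ⟨ψ, hψ, hxz, hyw⟩ := hU.exists_isAutOver_pair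
    (sameTypeOver_of_mem_blueType hJ (hb x) (hb z)) (sameTypeOver_of_mem_blueType hJ (hb y) (hb w))
    (b_injective.ne hxy) (b_injective.ne hzw)
    ((adj_iff_sameClique (b_injective.ne hzw)).trans
      (hrel.symm.trans (adj_iff_sameClique (b_injective.ne hxy)).symm))
  rw [share_iff, share_iff, ← hxz, ← hyw]
  rintro ⟨m, hm, hxm, hym⟩
  exact ⟨ψ m, hψ.mem_freeRed_iff.2 hm, by rwa [ψ.map_adj_iff], by rwa [ψ.map_adj_iff]⟩

lemma false_of_isMatched_of_isMatched [DecidableEq V] (hU : Ultrahomogeneous G red)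
    (hR : IsUnionOfCliques G {v | red v}) (hB : IsUnionOfCliques G {v | ¬ red v})
    (hJ : ∀ j ∈ J, red j) (hv : ¬ red v) (hi : i ∈ freeRed G red J) (ht : t ∈ freeRed G red J)
    (hit : ¬ SameClique G i t) (hmi : IsMatched G red (insert i J) v q)
    (hmt : IsMatched G red (insert t J) v q) : False := by
  obtain ⟨k, hk, j, hj, hmark⟩ := exists_marksExactly_of_isMatched hR hi ht hit hmi hmt
  have insert_subset (x : V) : freeRed G red (insert x J) ⊆ freeRed G red J :=
    freeRed_anti (Finset.subset_insert x J)
  have hiK : i ∈ freeRed G red (insert t J) := by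
    rw [freeRed_insert]
    exact ⟨hi, fun hti => hit hti.symm⟩
  have not_sameClique {r s : V} (hr : r ∈ freeRed G red (insert t J))
      (hs : s ∈ freeRed G red (insert i J)) : ¬ SameClique G r s := fun hrs =>
    hs.2 i (Finset.mem_insert_self i J)
      (hR.sameClique_trans hi.1 hr.1 hs.1 (hmt.sameClique i hiK r hr) hrs)
  have := hmt.infinite.to_subtype
  have := hmi.infinite.to_subtype
  refine false_of_forall_exists_marksExactly (q := q) hU hJ (isUnionOfCliques_blueType hB J v)
    (insert_subset t) (insert_subset i)
    (Set.disjoint_left.2 fun x hxK hxL => not_sameClique hxK hxL (.inl rfl)) fun r hr s hs => ?_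
  obtain ⟨ψ, hψ, hkr, hjs⟩ := hU.exists_isAutOver_pair
    (sameTypeOver_of_mem_freeRed (insert_subset t hk) (insert_subset t hr))
    (sameTypeOver_of_mem_freeRed (insert_subset i hj) (insert_subset i hs))
    (fun e => not_sameClique hk hj (.inl e)) (fun e => not_sameClique hr hs (.inl e))
    (iff_of_false (fun h => not_sameClique hr hs (.inr h)) fun h => not_sameClique hk hj (.inr h))
  exact ⟨ψ v, hψ.mem_blueType_iff.2 (mem_blueType_self hv), hkr ▸ hjs ▸ hmark.map hψ⟩

end OneClique

section BlowUp

variable {V : Type} {G : SimpleGraph V} {red : V → Prop} {P : Set V}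

lemma Cliques.isMaxCliqueIn {h : IsUnionOfCliques G P} (C : Cliques h) :
    IsMaxCliqueIn G P (Subtype.val '' {u : P | ⟦u⟧ = C}) := by
  obtain ⟨r, rfl⟩ := C.exists_rep
  refine ⟨Subtype.coe_image_subset _ _, ?_, fun M hM hclique hsub =>
    hsub.antisymm fun u hu => ⟨⟨u, hM hu⟩, ?_, rfl⟩⟩
  · rintro _ ⟨u, hu, rfl⟩ _ ⟨w, hw, rfl⟩ huw
    exact (adj_iff_sameClique huw).2 (Quotient.exact (hu.trans hw.symm))
  · refine Quotient.sound (or_iff_not_imp_left.2 fun hur => hclique hu (hsub ?_) hur)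
    exact ⟨r, rfl, rfl⟩

lemma exists_equiv_prod_of_fibers_equiv {A C I : Type*} (f : A → C)
    (hf : ∀ c, Nonempty (I ≃ {a // f a = c})) : ∃ φ : C × I ≃ A, ∀ x, f (φ x) = x.1 :=
  ⟨((Equiv.sigmaEquivProd C I).symm.trans (Equiv.sigmaCongrRight fun c => (hf c).some)).trans
    (Equiv.sigmaFiberEquiv f), fun x => ((hf x.1).some x.2).2⟩

lemma exists_equiv_cliques_prod (hU : Ultrahomogeneous G red)
    (hR : IsUnionOfCliques G {v | red v}) (C : Cliques hR) :
    ∃ φ : Cliques hR × {u : {v | red v} // ⟦u⟧ = C} ≃ {v | red v}, ∀ x, ⟦φ x⟧ = x.1 := by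
  refine exists_equiv_prod_of_fibers_equiv _ fun D => ?_
  obtain ⟨r, rfl⟩ := C.exists_rep
  obtain ⟨s, rfl⟩ := D.exists_rep
  obtain ⟨ψ, hψ, hrs⟩ := hU.exists_apply_eq (fun _ : Unit => (r : V)) (fun _ => s)
    (fun _ => iff_of_true s.2 r.2) (fun _ _ => iff_of_true rfl rfl)
    (fun _ _ => iff_of_false G.irrefl G.irrefl)
  have hψr : cliquePerm hR ψ hψ ⟦r⟧ = ⟦s⟧ := congrArg _ (Subtype.ext (hrs ()))
  refine ⟨Equiv.subtypeEquiv (ψ.toEquiv.subtypeEquiv fun u => (hψ u).symm) fun u => ?_⟩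
  rw [← hψr]
  exact ((cliquePerm hR ψ hψ).injective.eq_iff).symm

section Adj

variable {U I : Type} {H : SimpleGraph U} {redH : U → Prop}

lemma blowUp_adj_inl_inl {x y : {u // redH u} × I} :
    (blowUp H redH I).Adj (.inl x) (.inl y) ↔ H.Adj x.1 y.1 ∨ x.1 = y.1 ∧ x.2 ≠ y.2 := by
  have hne : H.Adj x.1 y.1 → x.1 ≠ y.1 := fun h e => h.ne (congrArg _ e)
  simp only [blowUp, fromRel_adj, ne_eq, Sum.inl.injEq, Prod.ext_iff, H.adj_comm y.1]
  grind

lemma blowUp_adj_inl_inr {x : {u // redH u} × I} {b : {u // ¬ redH u}} :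
    (blowUp H redH I).Adj (.inl x) (.inr b) ↔ H.Adj x.1 b := by
  simp [blowUp, H.adj_comm b]

lemma blowUp_adj_inr_inr {b c : {u // ¬ redH u}} :
    (blowUp H redH I).Adj (.inr b) (.inr c) ↔ H.Adj b c := by
  have hne : H.Adj b c → b ≠ c := fun h e => h.ne (congrArg _ e)
  simpa [blowUp, H.adj_comm c] using hne

end Adj

lemma adj_iff_of_sameClique_iff {C I : Type*} (φ : C × I ≃ {v | red v})
    (hφ : ∀ x y, SameClique G (φ x) (φ y) ↔ x.1 = y.1) (x y : C × I) :
    G.Adj (φ x) (φ y) ↔ x.1 = y.1 ∧ x.2 ≠ y.2 := by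
  rw [← hφ x y]
  refine ⟨fun h => ⟨.inr h, fun e => h.ne ?_⟩, fun ⟨h, hne⟩ => h.resolve_left fun e => ?_⟩
  · rw [Prod.ext ((hφ x y).1 (.inr h)) e]
  · exact hne (congrArg Prod.snd (φ.injective (Subtype.ext e)))

lemma isBlowUpOf_of_equiv_prod {C I : Type} (hI : 2 ≤ Cardinal.mk I)
    (hI' : Cardinal.mk I ≤ Cardinal.aleph0) (φ : C × I ≃ {v | red v})
    (hφ : ∀ x y, SameClique G (φ x) (φ y) ↔ x.1 = y.1)
    (htwins : ∀ b x y, ¬ red b → x.1 = y.1 → (G.Adj b (φ x) ↔ G.Adj b (φ y))) :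
    IsBlowUpOf G red := by
  classical
  obtain ⟨i₀⟩ : Nonempty I := Cardinal.mk_ne_zero_iff.1 (zero_lt_two.trans_le hI).ne'
  let redU : C ⊕ {v // ¬ red v} → Prop := fun u => u.isLeft
  let H : SimpleGraph (C ⊕ {v // ¬ red v}) :=
    G.comap (Sum.elim (fun c => (φ (c, i₀) : V)) Subtype.val)
  let inl : {u // redU u} ≃ C := Equiv.sumIsLeft
  let inr : {u // ¬ redU u} ≃ {v // ¬ red v} :=
    (Equiv.subtypeEquivRight (by simp [redU])).trans Equiv.sumIsRight
  have val_inl (u : {u // redU u}) : u.1 = .inl (inl u) := (Sum.inl_getLeft _ _).symm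
  have val_inr (u : {u // ¬ redU u}) : u.1 = .inr (inr u) := (Sum.inr_getRight _ _).symm
  have hH : ∀ u w, redU u → redU w → ¬ H.Adj u w := by
    rintro (c | _) (d | _) hu hw
    · exact fun h => ((adj_iff_of_sameClique_iff φ hφ _ _).1 h).2 rfl
    · exact absurd hw Bool.false_ne_true
    all_goals exact absurd hu Bool.false_ne_true
  let e : {u // redU u} × I ⊕ {u // ¬ redU u} ≃ V :=
    (Equiv.sumCongr ((inl.prodCongr (.refl I)).trans φ) inr).trans (Equiv.sumCompl red)
  have adj_inl_inr (x b) : G.Adj (e (.inl x)) (e (.inr b)) ↔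
      (blowUp H redU I).Adj (.inl x) (.inr b) := by
    simp only [blowUp_adj_inl_inr, H, comap_adj, val_inl x.1, val_inr b]
    rw [G.adj_comm, Sum.elim_inl, G.adj_comm (φ _)]
    exact htwins _ _ _ (inr b).2 rfl
  have hadj : ∀ x y, G.Adj (e x) (e y) ↔ (blowUp H redU I).Adj x y := by
    rintro (x | b) (y | c)
    · rw [blowUp_adj_inl_inl, or_iff_right (hH _ _ x.1.2 y.1.2), ← inl.injective.eq_iff]
      exact adj_iff_of_sameClique_iff φ hφ _ _
    · exact adj_inl_inr x c
    · rw [G.adj_comm, SimpleGraph.adj_comm _ (Sum.inr b)]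
      exact adj_inl_inr y b
    · simp only [blowUp_adj_inr_inr, H, comap_adj, val_inr]
      rfl
  let ψ : blowUp H redU I ≃g G := ⟨e, hadj _ _⟩
  refine ⟨_, H, redU, I, hH, hI, hI', ψ.symm, ψ.surjective.forall.2 fun x => ?_⟩
  rw [ψ.symm_apply_apply]
  cases x with
  | inl x => exact iff_of_true (φ _).2 trivial
  | inr b => exact iff_of_false (inr b).2 not_false

/-- Some blue vertex is adjacent to some but not all vertices of a red clique. -/
def HasSplitRedClique (G : SimpleGraph V) (red : V → Prop) : Prop :=
  ∃ b r s, ¬ red b ∧ red r ∧ red s ∧ SameClique G r s ∧ G.Adj b r ∧ ¬ G.Adj b s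

lemma hasSplitRedClique_of_not_isBlowUpOf [Countable V] (hU : Ultrahomogeneous G red)
    (hR : IsUnionOfCliques G {v | red v})
    (hωR : ∀ M, IsMaxCliqueIn G {v | red v} M → 2 ≤ Cardinal.mk M) (hred : ∃ u, red u)
    (hG : ¬ IsBlowUpOf G red) :
    HasSplitRedClique G red := by
  unfold HasSplitRedClique
  by_contra! htwins
  obtain ⟨u, hu⟩ := hred
  let C : Cliques hR := ⟦⟨u, hu⟩⟧
  obtain ⟨φ, hφ⟩ := exists_equiv_cliques_prod hU hR C
  refine hG (isBlowUpOf_of_equiv_prod ?_ Cardinal.mk_le_aleph0 φ (fun x y => ?_)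
    fun b x y hb hxy => ?_)
  · exact (hωR _ C.isMaxCliqueIn).trans_eq (Cardinal.mk_image_eq Subtype.val_injective)
  · rw [← hφ x, ← hφ y]
    exact (Quotient.eq (r := cliqueSetoid hR)).symm
  · have hsame : SameClique G (φ x) (φ y) := Quotient.exact ((hφ x).trans (hxy.trans (hφ y).symm))
    exact ⟨htwins b _ _ hb (φ x).2 (φ y).2 hsame, htwins b _ _ hb (φ y).2 (φ x).2 hsame.symm⟩

end BlowUp

section Induction

variable {V : Type} {G : SimpleGraph V} {red : V → Prop} {J : Finset V} {j v : V}

lemma HasSplitRedClique.exists_adj_not_adj (hsplit : HasSplitRedClique G red)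
    (hU : Ultrahomogeneous G red) (hv : ¬ red v) :
    ∃ r s, red r ∧ red s ∧ SameClique G r s ∧ G.Adj v r ∧ ¬ G.Adj v s := by
  obtain ⟨b, r, s, hb, hr, hs, hrs, hbr, hbs⟩ := hsplit
  obtain ⟨ψ, hψ, hbv⟩ := hU.exists_apply_eq (fun _ : Unit => b) (fun _ => v)
    (fun _ => iff_of_false hv hb) (fun _ _ => iff_of_true rfl rfl)
    (fun _ _ => iff_of_false G.irrefl G.irrefl)
  refine ⟨ψ r, ψ s, (hψ r).2 hr, (hψ s).2 hs, (sameClique_map_iff ψ).2 hrs, ?_, ?_⟩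
  · rwa [← hbv (), ψ.map_adj_iff]
  · rwa [← hbv (), ψ.map_adj_iff]

lemma not_isMatched {q : Prop} (hU : Ultrahomogeneous G red)
    (hR : IsUnionOfCliques G {v | red v}) (hB : IsUnionOfCliques G {v | ¬ red v})
    (hαR : ∃ r s, red r ∧ red s ∧ r ≠ s ∧ ¬ G.Adj r s) (hJ : ∀ j ∈ J, red j)
    (hJind : ∀ u ∈ J, ∀ w ∈ J, ¬ G.Adj u w) (hv : ¬ red v) : ¬ IsMatched G red J v q := by
  classical
  intro hm
  obtain rfl | ⟨i, hi⟩ := J.eq_empty_or_nonempty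
  · obtain ⟨r, s, hr, hs, hrs⟩ := hαR
    exact not_or.2 hrs (hm.sameClique r ⟨hr, by simp⟩ s ⟨hs, by simp⟩)
  obtain ⟨t, ht, hti⟩ := hm.exists_mem_freeRed_adj_iff (G.Adj v i)
  have hJ' : ∀ j ∈ J.erase i, red j := fun j hj => hJ j (Finset.mem_of_mem_erase hj)
  have hi' := mem_freeRed_erase hJ hJind hi
  have ht' := freeRed_anti (Finset.erase_subset i J) ht
  rw [← Finset.insert_erase hi] at hm
  exact false_of_isMatched_of_isMatched hU hR hB hJ' hv hi' ht' (ht.2 i hi) hm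
    (hm.insert_congr hU hJ' hv hi' ht' hti)

lemma hasInfiniteIndep_blueType_insert [DecidableEq V] (hU : Ultrahomogeneous G red)
    (hR : IsUnionOfCliques G {v | red v}) (hB : IsUnionOfCliques G {v | ¬ red v})
    (hαR : ∃ r s, red r ∧ red s ∧ r ≠ s ∧ ¬ G.Adj r s)
    (hsplit : HasSplitRedClique G red) (hJ : ∀ j ∈ J, red j)
    (hJind : ∀ u ∈ J, ∀ w ∈ J, ¬ G.Adj u w) (hv : ¬ red v)
    (hj : j ∈ freeRed G red J) (hJv : HasInfiniteIndep G (blueType G red J v)) :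
    HasInfiniteIndep G (blueType G red (insert j J) v) := by
  have h := isUnionOfCliques_blueType hB J v
  have : Infinite (Cliques h) := (infinite_cliques_iff h).2 hJv
  by_contra hins
  have hfin := (finite_trace_iff_not_hasInfiniteIndep_insert h j).2 hins
  by_cases hF : ∀ r ∈ freeRed G red J, ∀ s ∈ freeRed G red J, SameClique G r s
  · exact not_isMatched hU hR hB hαR hJ hJind hv
      (isMatched_of_finite_trace hU hR hJ h hv hj hfin hF)
  · push Not at hF
    obtain ⟨r, s, hr, hs, hrs, hvr, hvs⟩ := hsplit.exists_adj_not_adj hU hv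
    refine hvs ((adj_iff_of_forall_mem_freeRed hU hR hJ hJind hv (fun x hx y hy hxy => ?_)
      (exists_mem_freeRed_adj_iff hU hJ h hv hj hfin) hr hs hrs).1 hvr)
    exact adj_iff_of_finite_trace hU hR hJ h hv hj hfin hF hx hy hxy

end Induction

theorem stmt_15_general {V : Type} (G : SimpleGraph V) (red : V → Prop)
    (hU : Ultrahomogeneous G red) (hR : IsUnionOfCliques G {v | red v})
    (hB : IsUnionOfCliques G {v | ¬ red v}) (hαR : ∃ r s, red r ∧ red s ∧ r ≠ s ∧ ¬ G.Adj r s)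
    (hsplit : HasSplitRedClique G red) (hαB : HasInfiniteIndep G {v | ¬ red v})
    (J : Finset V) (hJred : ∀ j ∈ J, red j) (hJind : ∀ u ∈ J, ∀ w ∈ J, ¬ G.Adj u w)
    (v : V) (hv : ¬ red v) : HasInfiniteIndep G (blueType G red J v) := by
  classical
  induction J using Finset.induction_on with
  | empty => simpa [blueType] using hαB
  | insert j J hjJ ih =>
    have hJred' : ∀ i ∈ J, red i := fun i hi => hJred i (Finset.mem_insert_of_mem hi)
    have hJind' : ∀ u ∈ J, ∀ w ∈ J, ¬ G.Adj u w := fun u hu w hw =>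
      hJind u (Finset.mem_insert_of_mem hu) w (Finset.mem_insert_of_mem hw)
    have hj : j ∈ freeRed G red J := by
      simpa [Finset.erase_insert hjJ] using
        mem_freeRed_erase hJred hJind (Finset.mem_insert_self j J)
    exact hasInfiniteIndep_blueType_insert hU hR hB hαR hsplit hJred' hJind' hv hj
      (ih hJred' hJind')

/-- in a basic CUH graph omitting `D` with a non-independent color class,
with ω_R ≥ 2 and α_B = ℵ₀, for every finite red independent set `J` and blue vertex `v`,
the set of blue vertices with the same neighbors in `J` as `v` contains an infinite
independent set. -/
theorem stmt_15 {V : Type} (G : SimpleGraph V) (red : V → Prop)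
    (hG : IsBasicCUH G red)
    (hOmD : ¬ Realizes G red Dgraph Dred)
    (hni : (∃ u v, red u ∧ red v ∧ G.Adj u v) ∨ (∃ u v, ¬ red u ∧ ¬ red v ∧ G.Adj u v))
    (hωR : ∀ M : Set V, IsMaxCliqueIn G {v | red v} M → 2 ≤ Cardinal.mk M)
    (hαB : ∃ S : Set V, S ⊆ {v | ¬ red v} ∧ IsIndepIn G S ∧ S.Infinite)
    (J : Finset V) (hJred : ∀ v ∈ J, red v) (hJind : ∀ u ∈ J, ∀ v ∈ J, ¬ G.Adj u v)
    (v : V) (hv : ¬ red v) :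
    ∃ S : Set V, S ⊆ {b | ¬ red b ∧ ∀ r ∈ J, (G.Adj b r ↔ G.Adj v r)} ∧
      IsIndepIn G S ∧ S.Infinite := by
  obtain ⟨⟨_, -, hU, hR, hB⟩, hG, hαR, -⟩ := hG
  have hsplit := hasSplitRedClique_of_not_isBlowUpOf hU hR hωR (hαR.imp fun _ ⟨_, hr, _⟩ => hr)
    fun h => hG (.inl h)
  exact stmt_15_general G red hU hR hB hαR hsplit hαB J hJred hJind v hv
end

section
/- Let G be a basic CUH graph in which D or D̃ is omitted and in which at least one color class does not form an independent set. Then: (1) every non-monochromatic minimally omitted subgraph of G is isomorphic to one of T_r, T̃_r, T_b, T̃_b, D, D̃; (2) for every H ∈ {T_r, T̃_r, T_b, T̃_b, D, D̃}, H is minimally omitted in G if and only if its cross-edge complement H̃ is minimally omitted in G; and (3) G is isomorphic to its cross-edge complement G̃. -/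
open SimpleGraph

/-!
If `G` is homogeneous and omits one of `D`, `D̃`, then it omits both, so the number of cross edges
between a red edge and a blue edge is always even. The only other possible restriction on the cross
edges is that a color class is *split*: every edge in it has exactly one end adjacent to each vertex
of the other color, that is, the two triangles with an edge of that color are omitted. A finite
graph whose color classes embed in `G` and which obeys these restrictions embeds in `G`. By
homogeneity one may glue embeddings of two proper subgraphs that miss one vertex each, as soon as
the restrictions determine the adjacency of these two vertices. Otherwise one color class of the
finite graph is a transversal of cliques, and it can be placed first, because the set of vertices
with prescribed adjacency to a finite transversal is infinite.

As the restrictions are invariant under cross-edge complementation, `G` and `G̃` have the same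
finite induced subgraphs and are isomorphic by back and forth.
-/

/-- A graph with a coloring of its vertices by `Bool`; unlike a coloring predicate, this lets both
color classes be treated by the same lemmas. -/
structure ColoredGraph (V : Type*) extends SimpleGraph V where
  /-- The color of a vertex. -/
  col : V → Bool

namespace ColoredGraph

variable {V W X ι κ : Type*}

/-- An isomorphism of colored graphs. -/
structure Iso (C : ColoredGraph V) (D : ColoredGraph W) extends V ≃ W where
  adj_iff : ∀ u v, D.Adj (toEquiv u) (toEquiv v) ↔ C.Adj u v
  col_eq : ∀ v, D.col (toEquiv v) = C.col v

/-- The families `f` and `g` induce, on the index set `S`, an isomorphism `f i ↦ g i` between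
induced colored subgraphs of `C` and `D`. -/
structure IsoOn (C : ColoredGraph V) (D : ColoredGraph W) (S : Set ι) (f : ι → V) (g : ι → W) :
    Prop where
  col_eq : ∀ i ∈ S, D.col (g i) = C.col (f i)
  eq_iff : ∀ i ∈ S, ∀ j ∈ S, f i = f j ↔ g i = g j
  adj_iff : ∀ i ∈ S, ∀ j ∈ S, C.Adj (f i) (f j) ↔ D.Adj (g i) (g j)

/-- `f` embeds the subgraph of `H` induced on `S` into `C`. -/
abbrev EmbedsOn (H : ColoredGraph W) (C : ColoredGraph V) (S : Set W) (f : W → V) : Prop :=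
  IsoOn H C S id f

/-- Every isomorphism between finite induced colored subgraphs of `C` extends to an automorphism
of `C`. -/
def Homogeneous (C : ColoredGraph V) : Prop :=
  ∀ (S : Set V) (f : V → V), S.Finite → EmbedsOn C C S f → ∃ ψ : Iso C C, ∀ v ∈ S, ψ.toEquiv v = f v

/-- `x` and `y` are equal, or adjacent of the same color. In a graph whose color classes are
disjoint unions of cliques, the classes of this relation are the monochromatic maximal cliques. -/
def SameClique (C : ColoredGraph V) (x y : V) : Prop :=
  C.col x = C.col y ∧ (x = y ∨ C.Adj x y)

/-- Both color classes induce disjoint unions of cliques. -/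
def HasCliqueClasses (C : ColoredGraph V) : Prop :=
  ∀ ⦃x y z⦄, C.SameClique x y → C.SameClique y z → C.SameClique x z

/-- Some edge has both ends of color `k`. -/
def HasEdge (C : ColoredGraph V) (k : Bool) : Prop :=
  ∃ u v, C.col u = k ∧ C.col v = k ∧ C.Adj u v

/-- `a` and `a'` have the same color and are not distinguished by the vertices of `F`. -/
def IndistOver (C : ColoredGraph V) (F : Set V) (a a' : V) : Prop :=
  C.col a = C.col a' ∧ ∀ f ∈ F, (a = f ↔ a' = f) ∧ (C.Adj a f ↔ C.Adj a' f)

variable {C : ColoredGraph V} {D : ColoredGraph W} {H : ColoredGraph X}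

namespace Iso

instance : CoeFun (Iso C D) fun _ => V → W := ⟨fun e => e.toEquiv⟩

/-- The inverse isomorphism. -/
def symm (e : Iso C D) : Iso D C where
  toEquiv := e.toEquiv.symm
  adj_iff u v := by simp [← e.adj_iff]
  col_eq v := by simp [← e.col_eq]

@[simp] theorem apply_symm_apply (e : Iso C D) (w : W) : e (e.symm w) = w :=
  e.toEquiv.apply_symm_apply w

theorem eq_iff (e : Iso C D) {u v : V} : e u = e v ↔ u = v :=
  e.injective.eq_iff

theorem sameClique_iff (e : Iso C D) {u v : V} :
    D.SameClique (e u) (e v) ↔ C.SameClique u v := by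
  simp only [SameClique, e.col_eq, e.eq_iff, e.adj_iff]

theorem adj_symm_apply (e : Iso C D) {u : W} {v : V} : C.Adj (e.symm u) v ↔ D.Adj u (e v) := by
  rw [← e.adj_iff, apply_symm_apply]

end Iso

namespace IsoOn

variable {S T : Set ι} {f : ι → V} {g g' : ι → W}

theorem symm (h : IsoOn C D S f g) : IsoOn D C S g f where
  col_eq i hi := (h.col_eq i hi).symm
  eq_iff i hi j hj := (h.eq_iff i hi j hj).symm
  adj_iff i hi j hj := (h.adj_iff i hi j hj).symm

theorem trans {k : ι → X} (h : IsoOn C D S f g) (h' : IsoOn D H S g k) : IsoOn C H S f k where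
  col_eq i hi := (h'.col_eq i hi).trans (h.col_eq i hi)
  eq_iff i hi j hj := (h.eq_iff i hi j hj).trans (h'.eq_iff i hi j hj)
  adj_iff i hi j hj := (h.adj_iff i hi j hj).trans (h'.adj_iff i hi j hj)

theorem mono (h : IsoOn C D T f g) (hST : S ⊆ T) : IsoOn C D S f g where
  col_eq i hi := h.col_eq i (hST hi)
  eq_iff i hi j hj := h.eq_iff i (hST hi) j (hST hj)
  adj_iff i hi j hj := h.adj_iff i (hST hi) j (hST hj)

theorem congr (h : IsoOn C D S f g) (hg : Set.EqOn g' g S) : IsoOn C D S f g' where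
  col_eq i hi := (congrArg D.col (hg hi)).trans (h.col_eq i hi)
  eq_iff i hi j hj := (h.eq_iff i hi j hj).trans (by simp only [hg hi, hg hj])
  adj_iff i hi j hj := (h.adj_iff i hi j hj).trans (by simp only [hg hi, hg hj])

theorem comp {S : Set κ} (h : IsoOn C D T f g) {r : κ → ι} (hr : Set.MapsTo r S T) :
    IsoOn C D S (f ∘ r) (g ∘ r) where
  col_eq _ hi := h.col_eq _ (hr hi)
  eq_iff _ hi _ hj := h.eq_iff _ (hr hi) _ (hr hj)
  adj_iff _ hi _ hj := h.adj_iff _ (hr hi) _ (hr hj)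

end IsoOn

theorem Iso.isoOn (e : Iso C D) (S : Set ι) (f : ι → V) : IsoOn C D S f (e ∘ f) where
  col_eq _ _ := e.col_eq _
  eq_iff _ _ _ _ := e.eq_iff.symm
  adj_iff _ _ _ _ := (e.adj_iff _ _).symm

theorem SameClique.refl (C : ColoredGraph V) (x : V) : C.SameClique x x := ⟨rfl, .inl rfl⟩

theorem SameClique.symm {x y : V} (h : C.SameClique x y) : C.SameClique y x :=
  ⟨h.1.symm, h.2.imp Eq.symm .symm⟩

theorem sameClique_comm {x y : V} : C.SameClique x y ↔ C.SameClique y x :=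
  ⟨.symm, .symm⟩

theorem SameClique.adj {x y : V} (h : C.SameClique x y) (hne : x ≠ y) : C.Adj x y :=
  h.2.resolve_left hne

theorem SameClique.adj_iff_ne {x y : V} (h : C.SameClique x y) : C.Adj x y ↔ x ≠ y :=
  ⟨C.ne_of_adj, h.adj⟩

theorem SameClique.of_adj {x y : V} (hcol : C.col x = C.col y) (h : C.Adj x y) :
    C.SameClique x y :=
  ⟨hcol, .inr h⟩

theorem not_adj_of_not_sameClique {x y : V} (hcol : C.col x = C.col y) (h : ¬ C.SameClique x y) :
    ¬ C.Adj x y :=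
  fun hxy => h (.of_adj hcol hxy)

theorem ne_of_col_ne {x y : V} (h : C.col x ≠ C.col y) : x ≠ y :=
  fun he => h (he ▸ rfl)

theorem HasCliqueClasses.sameClique_congr_left (hC : C.HasCliqueClasses) {x y z : V}
    (h : C.SameClique x y) : C.SameClique x z ↔ C.SameClique y z :=
  ⟨hC h.symm, hC h⟩

section IndistOver

variable {F : Set V} {a a' f : V}

theorem IndistOver.insert (h : C.IndistOver F a a') (ha : a ≠ f) (ha' : a' ≠ f)
    (hadj : C.Adj a f ↔ C.Adj a' f) : C.IndistOver (insert f F) a a' := by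
  refine ⟨h.1, ?_⟩
  rintro g (rfl | hg)
  exacts [⟨iff_of_false ha ha', hadj⟩, h.2 g hg]

theorem indistOver_empty (h : C.col a = C.col a') : C.IndistOver ∅ a a' :=
  ⟨h, nofun⟩

theorem indistOver_of_col_ne (hcol : C.col a = C.col a') (hF : ∀ f ∈ F, C.col f ≠ C.col a)
    (hadj : ∀ f ∈ F, C.Adj a f ↔ C.Adj a' f) : C.IndistOver F a a' :=
  ⟨hcol, fun f hf => ⟨iff_of_false (ne_of_col_ne (hF f hf).symm)
    (ne_of_col_ne (hcol ▸ (hF f hf).symm)), hadj f hf⟩⟩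

end IndistOver

theorem Homogeneous.exists_aut (hC : C.Homogeneous) {S : Set ι} (hS : S.Finite) {f g : ι → V}
    (h : IsoOn C C S f g) : ∃ ψ : Iso C C, ∀ i ∈ S, ψ (f i) = g i := by
  have hg : ∀ v, ∃ w, ∀ i ∈ S, f i = v → w = g i := fun v => by
    by_cases hv : ∃ i ∈ S, f i = v
    · obtain ⟨i, hi, rfl⟩ := hv
      exact ⟨g i, fun j hj hji => (h.eq_iff i hi j hj).1 hji.symm⟩
    · exact ⟨v, fun i hi hiv => (hv ⟨i, hi, hiv⟩).elim⟩
  choose g' hg' using hg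
  have hg'f : Set.EqOn (g' ∘ f) g S := fun i hi => hg' (f i) i hi rfl
  have hiso : IsoOn C C S f (g' ∘ f) := h.congr hg'f
  obtain ⟨ψ, hψ⟩ := hC (f '' S) g' (hS.image f)
    ⟨Set.forall_mem_image.2 hiso.col_eq,
      Set.forall_mem_image.2 fun i hi => Set.forall_mem_image.2 (hiso.eq_iff i hi),
      Set.forall_mem_image.2 fun i hi => Set.forall_mem_image.2 (hiso.adj_iff i hi)⟩
  exact ⟨ψ, fun i hi => (hψ _ (Set.mem_image_of_mem f hi)).trans (hg'f hi)⟩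

theorem Homogeneous.exists_aut_fixing₂ (hC : C.Homogeneous) {F : Set V} (hF : F.Finite)
    {a a' d d' : V} (ha : C.IndistOver F a a') (hd : C.IndistOver F d d')
    (heq : a = d ↔ a' = d') (hadj : C.Adj a d ↔ C.Adj a' d') :
    ∃ ψ : Iso C C, (∀ f ∈ F, ψ f = f) ∧ ψ a = a' ∧ ψ d = d' := by
  have hiso : IsoOn C C (insert (a, a') (insert (d, d') ((fun f => (f, f)) '' F)))
      Prod.fst Prod.snd := by
    have := C.adj_comm
    constructor
    · rintro x (rfl | rfl | ⟨f, -, rfl⟩)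
      exacts [ha.1.symm, hd.1.symm, rfl]
    · rintro x (rfl | rfl | ⟨f, hf, rfl⟩) y (rfl | rfl | ⟨g, hg, rfl⟩) <;> grind [IndistOver]
    · rintro x (rfl | rfl | ⟨f, hf, rfl⟩) y (rfl | rfl | ⟨g, hg, rfl⟩) <;>
        grind [IndistOver, SimpleGraph.irrefl]
  obtain ⟨ψ, hψ⟩ := hC.exists_aut (((hF.image _).insert _).insert _) hiso
  exact ⟨ψ, fun f hf => hψ (f, f) (by simp [hf]), hψ (a, a') (by simp), hψ (d, d') (by simp)⟩

theorem Homogeneous.exists_aut_fixing (hC : C.Homogeneous) {F : Set V} (hF : F.Finite)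
    {a a' : V} (ha : C.IndistOver F a a') : ∃ ψ : Iso C C, (∀ f ∈ F, ψ f = f) ∧ ψ a = a' := by
  obtain ⟨ψ, hψF, hψ, -⟩ := hC.exists_aut_fixing₂ hF ha ha (by simp) (by simp)
  exact ⟨ψ, hψF, hψ⟩

theorem Homogeneous.exists_aut_pair (hC : C.Homogeneous) {a a' d d' : V}
    (ha : C.col a = C.col a') (hd : C.col d = C.col d') (heq : a = d ↔ a' = d')
    (hadj : C.Adj a d ↔ C.Adj a' d') : ∃ ψ : Iso C C, ψ a = a' ∧ ψ d = d' := by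
  obtain ⟨ψ, -, hψ⟩ := hC.exists_aut_fixing₂ Set.finite_empty (indistOver_empty ha)
    (indistOver_empty hd) heq hadj
  exact ⟨ψ, hψ⟩

theorem Homogeneous.exists_aut_apply_eq (hC : C.Homogeneous) {a a' : V}
    (ha : C.col a = C.col a') : ∃ ψ : Iso C C, ψ a = a' := by
  obtain ⟨ψ, -, hψ⟩ := hC.exists_aut_fixing Set.finite_empty (indistOver_empty ha)
  exact ⟨ψ, hψ⟩

/-! ### Blow-ups -/

section BlowUp

variable {V U I : Type}

/-- The vertex of the original graph that a vertex of its blow-up replaces. -/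
def blowUpBase (U : Type) (redH : U → Prop) (I : Type) :
    {v : U // redH v} × I ⊕ {v : U // ¬ redH v} → U :=
  Sum.elim (fun ui => ui.1) Subtype.val

theorem redH_blowUpBase {redH : U → Prop} (x : {v : U // redH v} × I ⊕ {v : U // ¬ redH v}) :
    redH (blowUpBase U redH I x) ↔ blowUpRed U redH I x := by
  rcases x with ⟨u, i⟩ | b
  exacts [iff_of_true u.2 trivial, iff_of_false b.2 id]

theorem blowUp_adj_iff {H : SimpleGraph U} {redH : U → Prop}
    (hH : ∀ u v, redH u → redH v → ¬ H.Adj u v)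
    (x y : {v : U // redH v} × I ⊕ {v : U // ¬ redH v}) :
    (blowUp H redH I).Adj x y ↔
      H.Adj (blowUpBase U redH I x) (blowUpBase U redH I y) ∨
        (blowUpBase U redH I x = blowUpBase U redH I y ∧ x ≠ y) := by
  have := H.adj_comm
  have := fun v : U => H.irrefl (v := v)
  rcases x with ⟨⟨u, hu⟩, i⟩ | ⟨b, hb⟩ <;> rcases y with ⟨⟨u', hu'⟩, i'⟩ | ⟨b', hb'⟩ <;>
    simp only [blowUp, SimpleGraph.fromRel_adj, blowUpBase, Sum.elim_inl, Sum.elim_inr] <;> grind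

theorem isBlowUpOf_of_fibers {G : SimpleGraph V} {red : V → Prop} {H : SimpleGraph U}
    {redH : U → Prop} (hH : ∀ u v, redH u → redH v → ¬ H.Adj u v)
    (hI : 2 ≤ Cardinal.mk I) (hI' : Cardinal.mk I ≤ Cardinal.aleph0) (π : V → U)
    (hadj : ∀ u v, G.Adj u v ↔ H.Adj (π u) (π v) ∨ (π u = π v ∧ u ≠ v))
    (hred : ∀ v, red v ↔ redH (π v))
    (hfiber : ∀ u, redH u → Nonempty ({v // π v = u} ≃ I))
    (hblue : ∀ u, ¬ redH u → ∃! v, π v = u) : IsBlowUpOf G red := by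
  let φ (u : {u // redH u}) : {v // π v = u} ≃ I := (hfiber u u.2).some
  choose β hβ hβu using fun u : {u // ¬ redH u} => hblue u u.2
  let F : {u : U // redH u} × I ⊕ {u : U // ¬ redH u} → V :=
    Sum.elim (fun ui => (φ ui.1).symm ui.2) β
  have hπF : ∀ x, π (F x) = blowUpBase U redH I x := by
    rintro (⟨u, i⟩ | b)
    exacts [((φ u).symm i).2, hβ b]
  have hF : F.Bijective := by
    constructor
    · intro x y hxy
      have hbase := (hπF x).symm.trans ((congrArg π hxy).trans (hπF y))
      rcases x with ⟨⟨u, hu⟩, i⟩ | ⟨b, hb⟩ <;> rcases y with ⟨⟨u', hu'⟩, i'⟩ | ⟨b', hb'⟩ <;>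
        obtain rfl := hbase
      · have hi : i = i' := (φ ⟨u, hu⟩).symm.injective (Subtype.ext hxy)
        exact hi ▸ rfl
      exacts [(hb' hu).elim, (hb hu').elim, rfl]
    · intro v
      by_cases hv : redH (π v)
      · exact ⟨.inl (⟨π v, hv⟩, φ ⟨π v, hv⟩ ⟨v, rfl⟩), by simp [F]⟩
      · exact ⟨.inr ⟨π v, hv⟩, (hβu _ v rfl).symm⟩
  let e : blowUp H redH I ≃g G :=
    { toEquiv := .ofBijective F hF
      map_rel_iff' := fun {x y} => by
        rw [blowUp_adj_iff hH, Equiv.ofBijective_apply, Equiv.ofBijective_apply, hadj, hπF, hπF,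
          hF.injective.ne_iff] }
  refine ⟨U, H, redH, I, hH, hI, hI', e.symm, fun v => ?_⟩
  rw [← redH_blowUpBase, ← hπF, hred]
  exact iff_of_eq (congrArg (fun w => redH (π w)) (e.apply_symm_apply v).symm)

variable {C : ColoredGraph V} {k : Bool}

/-- Equality, coarsened to `SameClique` on the color class `k`; if edges of color `k` join twins,
its quotient is the graph of which `C` is a blow-up. -/
def cliqueSetoid (hcl : C.HasCliqueClasses) (k : Bool) : Setoid V where
  r x y := x = y ∨ (C.col x = k ∧ C.SameClique x y)
  iseqv :=
    { refl _ := .inl rfl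
      symm := by
        rintro x y (rfl | ⟨hx, h⟩)
        exacts [.inl rfl, .inr ⟨h.1.symm.trans hx, h.symm⟩]
      trans := by
        rintro x y z (rfl | ⟨hx, h⟩) (rfl | ⟨hy, h'⟩)
        exacts [.inl rfl, .inr ⟨hy, h'⟩, .inr ⟨hx, h⟩, .inr ⟨hx, hcl h h'⟩] }

theorem adj_congr_of_cliqueSetoid (hcl : C.HasCliqueClasses)
    (htwin : ∀ u v b, C.col u = k → C.col v = k → C.col b ≠ k → C.Adj u v →
      (C.Adj u b ↔ C.Adj v b)) {u u' v : V} (h : cliqueSetoid hcl k u u')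
    (hv : ¬ cliqueSetoid hcl k u v) : C.Adj u v ↔ C.Adj u' v := by
  obtain rfl | ⟨hu, hs⟩ := h
  · rfl
  by_cases huu' : u = u'
  · rw [huu']
  have hu' : C.col u' = k := hs.1.symm.trans hu
  by_cases hvk : C.col v = k
  · have hns : ¬ C.SameClique u v := fun h => hv (.inr ⟨hu, h⟩)
    have hns' : ¬ C.SameClique u' v := fun h => hns (hcl hs h)
    exact iff_of_false (not_adj_of_not_sameClique (hu.trans hvk.symm) hns)
      (not_adj_of_not_sameClique (hu'.trans hvk.symm) hns')
  · exact htwin u u' v hu hu' hvk (hs.adj huu')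

theorem adj_out_iff (hcl : C.HasCliqueClasses)
    (htwin : ∀ u v b, C.col u = k → C.col v = k → C.col b ≠ k → C.Adj u v →
      (C.Adj u b ↔ C.Adj v b)) (u v : V) :
    C.Adj u v ↔ C.Adj (Quotient.mk (cliqueSetoid hcl k) u).out
        (Quotient.mk (cliqueSetoid hcl k) v).out ∨
      (Quotient.mk (cliqueSetoid hcl k) u = Quotient.mk (cliqueSetoid hcl k) v ∧ u ≠ v) := by
  let s := cliqueSetoid hcl k
  by_cases huv : s u v
  · rw [Quotient.sound (s := s) huv]
    rcases huv with rfl | ⟨-, hs⟩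
    · exact iff_of_false C.irrefl (not_or_intro C.irrefl fun h => h.2 rfl)
    · rw [or_iff_right C.irrefl, hs.adj_iff_ne, and_iff_right rfl]
  · have hout (w : V) : s w (Quotient.mk s w).out := s.symm (Quotient.mk_out (s := s) w)
    have huv' : ¬ s v (Quotient.mk s u).out := fun h => huv (s.trans (hout u) (s.symm h))
    rw [or_iff_left fun h => huv (Quotient.exact h.1),
      adj_congr_of_cliqueSetoid hcl htwin (hout u) huv, C.adj_comm,
      adj_congr_of_cliqueSetoid hcl htwin (hout v) huv', C.adj_comm]

theorem Homogeneous.isBlowUpOf [Countable V] (hC : C.Homogeneous) (hcl : C.HasCliqueClasses)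
    (hk : C.HasEdge k)
    (htwin : ∀ u v b, C.col u = k → C.col v = k → C.col b ≠ k → C.Adj u v →
      (C.Adj u b ↔ C.Adj v b)) : IsBlowUpOf C.toSimpleGraph (fun v => C.col v = k) := by
  obtain ⟨u₀, v₀, hu₀, hv₀, huv₀⟩ := hk
  let s := cliqueSetoid hcl k
  have hout (q : Quotient s) : Quotient.mk s q.out = q := q.out_eq
  have hcol (v : V) : C.col (Quotient.mk s v).out = C.col v := by
    rcases (Quotient.mk_out (s := s) v : s _ v) with h | ⟨-, h⟩
    exacts [congrArg C.col h, h.1]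
  refine isBlowUpOf_of_fibers (H := C.toSimpleGraph.comap Quotient.out)
    (redH := fun q : Quotient s => C.col q.out = k)
    (I := {v // Quotient.mk s v = Quotient.mk s u₀}) ?_ ?_ Cardinal.mk_le_aleph0 (Quotient.mk s)
    (adj_out_iff hcl htwin) (fun v => by rw [hcol]) ?_ ?_
  · intro q q' hq hq' hadj
    have h : s q.out q'.out := .inr ⟨hq, .of_adj (hq.trans hq'.symm) hadj⟩
    have hqq' : q = q' := by rw [← hout q, ← hout q', Quotient.sound h]
    exact C.irrefl (hqq' ▸ hadj : C.Adj q'.out q'.out)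
  · have hvu : s v₀ u₀ := .inr ⟨hv₀, .of_adj (hv₀.trans hu₀.symm) huv₀.symm⟩
    exact Cardinal.two_le_iff.2 ⟨⟨u₀, rfl⟩, ⟨v₀, Quotient.sound hvu⟩,
      fun he => huv₀.ne (congrArg Subtype.val he)⟩
  · intro q hq
    obtain ⟨ψ, hψ⟩ := hC.exists_aut_apply_eq (hu₀.trans hq.symm)
    have hinv (v w : V) : s (ψ v) (ψ w) ↔ s v w := by
      change _ ∨ _ ↔ _ ∨ _
      rw [ψ.eq_iff, ψ.col_eq, ψ.sameClique_iff]
    exact ⟨(ψ.toEquiv.subtypeEquiv fun v => by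
      rw [← hout q, ← hψ, Quotient.eq, Quotient.eq, hinv]).symm⟩
  · refine fun q hq => ⟨q.out, hout q, fun v hv => ?_⟩
    obtain rfl | h := Quotient.exact (hv.trans (hout q).symm)
    exacts [rfl, (hq ((hv ▸ hcol v).trans h.1)).elim]

theorem Homogeneous.exists_split [Countable V] (hC : C.Homogeneous) (hcl : C.HasCliqueClasses)
    (hk : C.HasEdge k) (hnb : ¬ IsBlowUpOf C.toSimpleGraph (fun v => C.col v = k)) :
    ∃ u v b, C.col u = k ∧ C.col v = k ∧ C.col b ≠ k ∧ C.Adj u v ∧ C.Adj u b ∧ ¬ C.Adj v b := by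
  by_contra! hcon
  exact hnb (hC.isBlowUpOf hcl hk fun u v b hu hv hb huv =>
    ⟨hcon u v b hu hv hb huv, hcon v u b hv hu hb huv.symm⟩)

end BlowUp

/-! ### Cliques and cells -/

/-- The properties of a basic CUH graph on which the argument rests. That the graph is not a
blow-up enters only through `exists_split`. -/
structure IsBasic (C : ColoredGraph V) : Prop where
  infinite : Infinite V
  homogeneous : C.Homogeneous
  cliques : C.HasCliqueClasses
  exists_not_sameClique : ∀ k, ∃ u v, C.col u = k ∧ C.col v = k ∧ ¬ C.SameClique u v
  exists_split : ∀ k, C.HasEdge k →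
    ∃ u v b, C.col u = k ∧ C.col v = k ∧ C.col b ≠ k ∧ C.Adj u v ∧ C.Adj u b ∧ ¬ C.Adj v b

/-- Every vertex of the other color is adjacent to exactly one end of every edge of color `k`. -/
def Splits (C : ColoredGraph V) (k : Bool) : Prop :=
  ∀ u v w, C.Adj u v → C.col u = k → C.col v = k → C.col w ≠ k → (C.Adj u w ↔ ¬ C.Adj v w)

/-- The vertices of the monochromatic clique of `c` whose adjacency to `F` is given by `v`. -/
def cell (C : ColoredGraph V) (F : Set V) (v : V → Prop) (c : V) : Set V :=
  {x | C.SameClique x c ∧ ∀ b ∈ F, (C.Adj x b ↔ v b)}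

section Cell

variable {F : Set V} {v : V → Prop} {c c' y z w x : V}

theorem cell_empty : C.cell ∅ v c = {x | C.SameClique x c} := by
  simp [cell]

theorem indistOver_of_mem_cell (hcol : C.col c = C.col c') (hF : ∀ b ∈ F, C.col b ≠ C.col c)
    (hz : z ∈ C.cell F v c) (hw : w ∈ C.cell F v c') : C.IndistOver F z w :=
  indistOver_of_col_ne (hz.1.1.trans (hcol.trans hw.1.1.symm)) (fun b hb => hz.1.1 ▸ hF b hb)
    fun b hb => (hz.2 b hb).trans (hw.2 b hb).symm

theorem HasCliqueClasses.sameClique_of_mem_cell (hcl : C.HasCliqueClasses)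
    (hx : x ∈ C.cell F v c) (hz : z ∈ C.cell F v c) : C.SameClique x z :=
  hcl hx.1 hz.1.symm

theorem Iso.apply_mem_cell_iff (hcl : C.HasCliqueClasses) (ψ : Iso C C) (hψ : ∀ f ∈ F, ψ f = f)
    (hz : z ∈ C.cell F v c) (hψz : ψ z ∈ C.cell F v c') :
    ψ x ∈ C.cell F v c' ↔ x ∈ C.cell F v c := by
  have hclique : C.SameClique (ψ x) c' ↔ C.SameClique x c := by
    rw [sameClique_comm, hcl.sameClique_congr_left hψz.1.symm, ψ.sameClique_iff,
      hcl.sameClique_congr_left hz.1, sameClique_comm]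
  have hadj : ∀ b ∈ F, C.Adj (ψ x) b ↔ C.Adj x b := fun b hb => by
    rw [← ψ.adj_iff x b, hψ b hb]
  exact and_congr hclique (forall₂_congr fun b hb => by rw [hadj b hb])

theorem Iso.adj_apply_iff_of_fixes (ψ : Iso C C) {A : Set V} {e : Prop}
    (hA : ∀ x ∈ A, ψ.symm x ∈ A) (hfix : ∀ x ∈ A, (C.Adj x y ↔ e) → ψ x = x) (hx : x ∈ A) :
    C.Adj x (ψ y) ↔ C.Adj x y := by
  have hfixed (hψx : ψ x = x) : C.Adj x (ψ y) ↔ C.Adj x y := by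
    rw [← ψ.adj_iff x y, hψx]
  by_cases hxy : C.Adj x y ↔ e
  · exact hfixed (hfix x hx hxy)
  by_cases hxy' : C.Adj x (ψ y) ↔ e
  · have hsymm : x = ψ.symm x := (ψ.apply_symm_apply x).symm.trans
      (hfix (ψ.symm x) (hA x hx) (by rwa [ψ.adj_symm_apply]))
    exact hfixed ((congrArg ψ hsymm).trans (ψ.apply_symm_apply x))
  · tauto

theorem IsBasic.adj_iff_on_cell (h : C.IsBasic) (hF : F.Finite) (hcol : C.col c = C.col c')
    (hFcol : ∀ b ∈ F, C.col b ≠ C.col c) {y' : V} (hy : C.col y ≠ C.col c)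
    (hy' : C.col y' ≠ C.col c) (hagree : ∀ x ∈ C.cell F v c, C.Adj x y ↔ C.Adj x y')
    (hz : z ∈ C.cell F v c) (hw : w ∈ C.cell F v c') (hzw : C.Adj z y ↔ C.Adj w y)
    (hwy : C.Adj w y ↔ C.Adj w y') (hx : x ∈ C.cell F v c') : C.Adj x y ↔ C.Adj x y' := by
  have hne {u : V} (hu : C.col u ≠ C.col c) : z ≠ u ∧ w ≠ u :=
    ⟨ne_of_col_ne (hz.1.1 ▸ hu.symm), ne_of_col_ne (hw.1.1.trans hcol.symm ▸ hu.symm)⟩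
  obtain ⟨φ, hφF, rfl⟩ := h.homogeneous.exists_aut_fixing ((hF.insert y').insert y)
    (((indistOver_of_mem_cell hcol hFcol hz hw).insert (hne hy').1 (hne hy').2
      (by rw [← hagree z hz, hzw, hwy])).insert (hne hy).1 (hne hy).2 hzw)
  have hx' : φ.symm x ∈ C.cell F v c :=
    (φ.apply_mem_cell_iff h.cliques (fun f hf => hφF f (by simp [hf])) hz hw).1 (by simpa using hx)
  have hadj := hagree _ hx'
  rwa [φ.adj_symm_apply, φ.adj_symm_apply, hφF y (by simp), hφF y' (by simp)] at hadj

theorem HasCliqueClasses.indistOver_of_mem_cell_of_subset (hcl : C.HasCliqueClasses)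
    (hcol : C.col c = C.col c') (hcc' : ¬ C.SameClique c c') (hF : ∀ b ∈ F, C.col b ≠ C.col c)
    {P : Set V} (hP : ∀ x ∈ P, C.SameClique x c) {a a' a'' : V} (ha : a ∈ C.cell F v c')
    (ha' : a' ∈ C.cell F v c') (ha'' : a'' ∈ C.cell F v c') (haa'' : a ≠ a'') (ha'a'' : a' ≠ a'') :
    C.IndistOver (insert a'' (F ∪ P)) a a' := by
  have hapart {b x : V} (hb : b ∈ C.cell F v c') (hx : x ∈ P) : b ≠ x ∧ ¬ C.Adj b x := by
    have hbx : ¬ C.SameClique b x := fun hbx => hcc' (hcl (hP x hx).symm (hcl hbx.symm hb.1))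
    exact ⟨fun he => hbx (he ▸ .refl C b),
      not_adj_of_not_sameClique (hb.1.1.trans (hcol.symm.trans (hP x hx).1.symm)) hbx⟩
  have haF := indistOver_of_mem_cell rfl (hcol ▸ hF) ha ha'
  refine .insert ⟨haF.1, ?_⟩ haa'' ha'a'' (iff_of_true ((hcl.sameClique_of_mem_cell ha ha'').adj
    haa'') ((hcl.sameClique_of_mem_cell ha' ha'').adj ha'a''))
  rintro f (hf | hf)
  · exact haF.2 f hf
  · exact ⟨iff_of_false (hapart ha hf).1 (hapart ha' hf).1,
      iff_of_false (hapart ha hf).2 (hapart ha' hf).2⟩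

/-- If the part of the cell were finite, then an automorphism fixing it and `F` pointwise could
move `a` to `a'` while fixing `a''`, and so change the adjacency of `y` to the cell of `c'` while
keeping its adjacency to the cell of `c`. -/
theorem IsBasic.infinite_part_of_cell (h : C.IsBasic) (hF : F.Finite) (hcol : C.col c = C.col c')
    (hcc' : ¬ C.SameClique c c') (hFcol : ∀ b ∈ F, C.col b ≠ C.col c) (hy : C.col y ≠ C.col c)
    {s s' : V} (hs : s ∈ C.cell F v c) (hs' : s' ∈ C.cell F v c)
    (hss' : C.Adj s' y ↔ ¬ C.Adj s y) {a a' a'' : V} (ha : a ∈ C.cell F v c')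
    (ha' : a' ∈ C.cell F v c') (ha'' : a'' ∈ C.cell F v c') (haa' : C.Adj a' y ↔ ¬ C.Adj a y)
    (haa'' : a ≠ a'') (ha'a'' : a' ≠ a'') :
    {x ∈ C.cell F v c | C.Adj x y ↔ C.Adj s y}.Infinite := by
  intro hfin
  have hcl := h.cliques
  obtain ⟨ψ, hψ, hψa⟩ := h.homogeneous.exists_aut_fixing ((hF.union hfin).insert a'')
    (hcl.indistOver_of_mem_cell_of_subset hcol hcc' hFcol (fun x hx => hx.1.1) ha ha' ha'' haa''
      ha'a'')
  have hψs : ψ s = s := hψ s (by simp [hs])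
  have hagree : ∀ x ∈ C.cell F v c, C.Adj x y ↔ C.Adj x (ψ y) := fun x hx =>
    (ψ.adj_apply_iff_of_fixes (e := C.Adj s y) (fun z hz => (ψ.apply_mem_cell_iff hcl
      (fun f hf => hψ f (by simp [hf])) hs (hψs.symm ▸ hs)).1 (by simpa using hz))
      (fun z hz hzy => hψ z (by simp [hz, hzy])) hx).symm
  have ha''y : C.Adj a'' y ↔ C.Adj a'' (ψ y) := by
    rw [← ψ.adj_iff a'' y, hψ a'' (by simp)]
  obtain ⟨z, hz, hzy⟩ : ∃ z ∈ C.cell F v c, (C.Adj z y ↔ C.Adj a'' y) := by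
    by_cases hsa : C.Adj s y ↔ C.Adj a'' y
    exacts [⟨s, hs, hsa⟩, ⟨s', hs', by tauto⟩]
  have ha'y := h.adj_iff_on_cell hF hcol hFcol hy (ψ.col_eq y ▸ hy) hagree hz ha'' hzy ha''y ha'
  rw [← hψa, ψ.adj_iff, hψa] at ha'y
  tauto

end Cell

namespace IsBasic

variable {k : Bool} {b c y : V}

theorem exists_col_eq (h : C.IsBasic) (k : Bool) : ∃ v, C.col v = k :=
  let ⟨u, _, hu, _⟩ := h.exists_not_sameClique k
  ⟨u, hu⟩

theorem exists_not_sameClique_left (h : C.IsBasic) (c : V) :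
    ∃ d, C.col d = C.col c ∧ ¬ C.SameClique c d := by
  obtain ⟨u, v, hu, hv, huv⟩ := h.exists_not_sameClique (C.col c)
  obtain ⟨ψ, rfl⟩ := h.homogeneous.exists_aut_apply_eq hu
  exact ⟨ψ v, by rw [ψ.col_eq v, hv], by rwa [ψ.sameClique_iff]⟩

theorem exists_mixed (h : C.IsBasic) (hc : C.HasEdge (C.col c)) (hb : C.col b ≠ C.col c) :
    ∃ c', C.SameClique c c' ∧ (C.Adj c' b ↔ ¬ C.Adj c b) := by
  obtain ⟨u, v, d, hu, hv, hd, huv, hud, hvd⟩ := h.exists_split _ hc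
  have hmixed : ∃ p q, C.SameClique p q ∧ C.col p = C.col c ∧ (C.Adj p d ↔ C.Adj c b) ∧
      (C.Adj q d ↔ ¬ C.Adj p d) := by
    have huv' : C.SameClique u v := .of_adj (hu.trans hv.symm) huv
    by_cases hcb : C.Adj c b
    · exact ⟨u, v, huv', hu, by tauto, by tauto⟩
    · exact ⟨v, u, huv'.symm, hv, by tauto, by tauto⟩
  obtain ⟨p, q, hpq, hp, hpd, hqd⟩ := hmixed
  have hpd' : C.col p ≠ C.col d := fun he => hd (he.symm.trans hp)
  obtain ⟨ψ, rfl, rfl⟩ := h.homogeneous.exists_aut_pair hp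
    ((Bool.eq_not_of_ne hd).trans (Bool.eq_not_of_ne hb).symm)
    (iff_of_false (ne_of_col_ne hpd') (ne_of_col_ne hb.symm)) hpd
  exact ⟨ψ q, by rwa [ψ.sameClique_iff], by rwa [ψ.adj_iff, ψ.adj_iff]⟩

theorem exists_adj (h : C.IsBasic) (hc : C.HasEdge (C.col c)) :
    ∃ d, C.col d = C.col c ∧ C.Adj c d := by
  obtain ⟨u, v, hu, hv, huv⟩ := hc
  obtain ⟨ψ, rfl⟩ := h.homogeneous.exists_aut_apply_eq hu
  exact ⟨ψ v, by rw [ψ.col_eq v, hv], (ψ.adj_iff u v).2 huv⟩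

theorem exists_adj_of_not_splits (h : C.IsBasic) (hc : ¬ C.Splits (C.col c)) :
    ∃ p q, C.SameClique c p ∧ C.SameClique c q ∧ c ≠ p ∧ c ≠ q ∧ p ≠ q := by
  simp only [Splits, not_forall] at hc
  obtain ⟨u, v, w, huv, hu, hv, hw, hmix⟩ := hc
  obtain ⟨m, hum, hmw⟩ := h.exists_mixed (c := u) (hu ▸ ⟨u, v, hu, hv, huv⟩) (hu ▸ hw)
  obtain ⟨ψ, rfl⟩ := h.homogeneous.exists_aut_apply_eq hu
  have hum' : u ≠ m := by
    rintro rfl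
    tauto
  have hvm : v ≠ m := by
    rintro rfl
    tauto
  exact ⟨ψ v, ψ m, ψ.sameClique_iff.2 (.of_adj (hu.trans hv.symm) huv), ψ.sameClique_iff.2 hum,
    ψ.injective.ne huv.ne, ψ.injective.ne hum', ψ.injective.ne hvm⟩

theorem splits_of_finite_part (h : C.IsBasic) (hy : C.col y ≠ C.col c)
    (hfin : {x | C.SameClique x c ∧ (C.Adj x y ↔ C.Adj c y)}.Finite) : C.Splits (C.col c) := by
  by_contra hS
  obtain ⟨p, -, hp, -, hcp, -⟩ := h.exists_adj_of_not_splits hS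
  have hedge : C.HasEdge (C.col c) := ⟨c, p, rfl, hp.1.symm, hp.adj hcp⟩
  obtain ⟨c', hcol, hcc'⟩ := h.exists_not_sameClique_left c
  obtain ⟨s', hs', hs'y⟩ := h.exists_mixed hedge hy
  obtain ⟨a', ha', ha'y⟩ := h.exists_mixed (c := c') (hcol ▸ hedge) (hcol ▸ hy)
  obtain ⟨a'', ha'', hne, hne'⟩ : ∃ a'', C.SameClique c' a'' ∧ c' ≠ a'' ∧ a' ≠ a'' := by
    obtain ⟨p, q, hp, hq, hcp, hcq, hpq⟩ := h.exists_adj_of_not_splits (c := c') (hcol ▸ hS)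
    by_cases hpa : a' = p
    exacts [⟨q, hq, hcq, hpa ▸ hpq⟩, ⟨p, hp, hcp, hpa⟩]
  have hinf := h.infinite_part_of_cell (v := fun _ => True) Set.finite_empty hcol.symm hcc'
    (by simp) hy (s := c) (s' := s') (a := c') (a' := a') (a'' := a'')
  simp only [cell_empty, Set.mem_ofPred_eq] at hinf
  exact hinf (.refl C c) hs'.symm hs'y (.refl C c') ha'.symm ha''.symm ha'y hne hne' hfin

theorem clique_infinite_of_not_splits (h : C.IsBasic) (hc : ¬ C.Splits (C.col c)) :
    {x | C.SameClique x c}.Infinite := by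
  obtain ⟨y, hy⟩ := h.exists_col_eq (!C.col c)
  exact fun hfin => hc (h.splits_of_finite_part (y := y) (by simp [hy])
    (hfin.subset fun x hx => hx.1))

end IsBasic

/-! ### The cross-edge complement -/

section CrossCompl

variable {k : Bool} {u v x y : V}

/-- The cross-edge complement: two vertices of the same color keep their adjacency, two vertices of
different colors are adjacent if and only if they were not. -/
def crossCompl (C : ColoredGraph V) : ColoredGraph V where
  Adj u v := C.Adj u v ↔ C.col u = C.col v
  symm := ⟨fun u v h => by rwa [C.adj_comm, eq_comm]⟩
  loopless := ⟨fun v h => C.irrefl (h.2 rfl)⟩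
  col := C.col

theorem crossCompl_adj_of_col_eq (h : C.col u = C.col v) : C.crossCompl.Adj u v ↔ C.Adj u v :=
  iff_true_right h

theorem crossCompl_adj_of_col_ne (h : C.col u ≠ C.col v) : C.crossCompl.Adj u v ↔ ¬ C.Adj u v :=
  iff_false_right h

@[simp] theorem crossCompl_crossCompl : C.crossCompl.crossCompl = C := by
  obtain ⟨G, col⟩ := C
  simp only [crossCompl, mk.injEq, and_true]
  ext u v
  exact iff_assoc.trans (iff_true_right Iff.rfl)

theorem crossCompl_sameClique : C.crossCompl.SameClique u v ↔ C.SameClique u v :=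
  and_congr_right fun h => or_congr_right (crossCompl_adj_of_col_eq h)

/-- An isomorphism, viewed between the cross-edge complements. -/
def Iso.crossCompl (e : Iso C D) : Iso C.crossCompl D.crossCompl where
  toEquiv := e.toEquiv
  adj_iff u v := by
    change (D.Adj _ _ ↔ D.col _ = D.col _) ↔ (C.Adj _ _ ↔ C.col _ = C.col _)
    rw [e.adj_iff, e.col_eq, e.col_eq]
  col_eq := e.col_eq

theorem IsoOn.crossCompl {S : Set ι} {f : ι → V} {g : ι → W} (h : IsoOn C D S f g) :
    IsoOn C.crossCompl D.crossCompl S f g where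
  col_eq := h.col_eq
  eq_iff := h.eq_iff
  adj_iff i hi j hj := by
    change (C.Adj _ _ ↔ C.col _ = C.col _) ↔ (D.Adj _ _ ↔ D.col _ = D.col _)
    rw [h.adj_iff i hi j hj, h.col_eq i hi, h.col_eq j hj]

theorem Homogeneous.crossCompl (hC : C.Homogeneous) : C.crossCompl.Homogeneous := fun S f hS hf =>
  let ⟨ψ, hψ⟩ := hC S f hS (by simpa using hf.crossCompl)
  ⟨ψ.crossCompl, hψ⟩

theorem IsBasic.crossCompl (h : C.IsBasic) : C.crossCompl.IsBasic where
  infinite := h.infinite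
  homogeneous := h.homogeneous.crossCompl
  cliques _ _ _ hxy hyz :=
    crossCompl_sameClique.2 (h.cliques (crossCompl_sameClique.1 hxy) (crossCompl_sameClique.1 hyz))
  exists_not_sameClique k :=
    let ⟨u, v, hu, hv, huv⟩ := h.exists_not_sameClique k
    ⟨u, v, hu, hv, crossCompl_sameClique.not.2 huv⟩
  exists_split := by
    rintro k ⟨p, q, hp, hq, hpq⟩
    obtain ⟨u, v, b, hu, hv, hb, huv, hub, hvb⟩ := h.exists_split k
      ⟨p, q, hp, hq, (crossCompl_adj_of_col_eq (C := C) (hp.trans hq.symm)).1 hpq⟩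
    exact ⟨v, u, b, hv, hu, hb, (crossCompl_adj_of_col_eq (hv.trans hu.symm)).2 huv.symm,
      (crossCompl_adj_of_col_ne (hv ▸ hb.symm)).2 hvb,
      (crossCompl_adj_of_col_ne (hu ▸ hb.symm)).not.2 (not_not.2 hub)⟩

/-- No edge of color `k` forms a triangle with a vertex of the other color, that is, `T_r` or `T_b`
is omitted. -/
def NoTriangle (C : ColoredGraph V) (k : Bool) : Prop :=
  ∀ u v w, C.Adj u v → C.col u = k → C.col v = k → C.col w ≠ k → C.Adj u w → ¬ C.Adj v w

/-- Three of the four cross edges between two edges of different colors imply the fourth, that is,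
`D` is omitted. -/
def RectClosed (C : ColoredGraph V) : Prop :=
  ∀ u v x y, C.SameClique u v → C.SameClique x y → C.col u ≠ C.col x →
    C.Adj u x → C.Adj u y → C.Adj v x → C.Adj v y

/-- The number of cross edges between two edges of different colors is even. -/
def EvenCross (C : ColoredGraph V) : Prop :=
  ∀ u v x y, C.SameClique u v → C.SameClique x y → C.col u ≠ C.col x →
    ((C.Adj u x ↔ C.Adj u y) ↔ (C.Adj v x ↔ C.Adj v y))

theorem splits_iff_noTriangle :
    C.Splits k ↔ C.NoTriangle k ∧ C.crossCompl.NoTriangle k := by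
  have hcross {u w : V} (hu : C.col u = k) (hw : C.col w ≠ k) :
      C.crossCompl.Adj u w ↔ ¬ C.Adj u w := crossCompl_adj_of_col_ne (hu ▸ hw.symm)
  have hmono {u v : V} (hu : C.col u = k) (hv : C.col v = k) :
      C.crossCompl.Adj u v ↔ C.Adj u v := crossCompl_adj_of_col_eq (hu.trans hv.symm)
  constructor
  · refine fun hS => ⟨fun u v w huv hu hv hw => (hS u v w huv hu hv hw).1,
      fun u v w huv hu hv hw huw hvw => ?_⟩
    exact (hcross hu hw).1 huw ((hS u v w ((hmono hu hv).1 huv) hu hv hw).2 ((hcross hv hw).1 hvw))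
  · refine fun hT u v w huv hu hv hw => ⟨hT.1 u v w huv hu hv hw, fun hvw => ?_⟩
    by_contra huw
    exact hT.2 u v w ((hmono hu hv).2 huv) hu hv hw ((hcross hu hw).2 huw) ((hcross hv hw).2 hvw)

theorem splits_crossCompl : C.crossCompl.Splits k ↔ C.Splits k := by
  rw [splits_iff_noTriangle, splits_iff_noTriangle, crossCompl_crossCompl, and_comm]

theorem RectClosed.adj_iff (hC : C.RectClosed) (hC' : C.crossCompl.RectClosed)
    (huv : C.SameClique u v) (hxy : C.SameClique x y) (hux : C.col u ≠ C.col x)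
    (h₁ : C.Adj u x ↔ C.Adj u y) (h₂ : C.Adj u x ↔ C.Adj v x) : C.Adj u x ↔ C.Adj v y := by
  by_cases h : C.Adj u x
  · exact iff_of_true h (hC u v x y huv hxy hux h (h₁.1 h) (h₂.1 h))
  · have hC' := hC' u v x y (crossCompl_sameClique.2 huv) (crossCompl_sameClique.2 hxy) hux
    rw [crossCompl_adj_of_col_ne hux, crossCompl_adj_of_col_ne (hxy.1 ▸ hux),
      crossCompl_adj_of_col_ne (huv.1 ▸ hux), crossCompl_adj_of_col_ne (huv.1 ▸ hxy.1 ▸ hux)] at hC'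
    exact iff_of_false h (hC' h (h₁.not.1 h) (h₂.not.1 h))

theorem EvenCross.crossCompl (hC : C.EvenCross) : C.crossCompl.EvenCross := by
  intro u v x y huv hxy hux
  rw [crossCompl_sameClique] at huv hxy
  change C.col u ≠ C.col x at hux
  have hev := hC u v x y huv hxy hux
  rw [crossCompl_adj_of_col_ne hux, crossCompl_adj_of_col_ne (hxy.1 ▸ hux),
    crossCompl_adj_of_col_ne (huv.1 ▸ hux), crossCompl_adj_of_col_ne (huv.1 ▸ hxy.1 ▸ hux)]
  rwa [not_iff_not, not_iff_not]

theorem EvenCross.rectClosed (hC : C.EvenCross) : C.RectClosed :=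
  fun u v x y huv hxy hux h₁ h₂ h₃ =>
    ((hC u v x y huv hxy hux).1 (iff_of_true h₁ h₂)).1 h₃

theorem evenCross_iff_rectClosed : C.EvenCross ↔ C.RectClosed ∧ C.crossCompl.RectClosed := by
  refine ⟨fun hC => ⟨hC.rectClosed, hC.crossCompl.rectClosed⟩, fun ⟨hC, hC'⟩ => ?_⟩
  intro u v x y huv hxy hux
  have h₁ := hC.adj_iff hC' huv hxy hux
  have h₂ := hC.adj_iff hC' huv hxy.symm (hxy.1 ▸ hux)
  have h₃ := hC.adj_iff hC' huv.symm hxy (huv.1 ▸ hux)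
  have h₄ := hC.adj_iff hC' huv.symm hxy.symm (huv.1 ▸ hxy.1 ▸ hux)
  grind only

/-- A vertex `d` in the clique of `v` exists that is also adjacent to `y`; as `D` is omitted, `v`
and `d` have the same adjacency to the whole clique of `y`. -/
theorem IsBasic.exists_nonadjacent_rect (h : C.IsBasic) (hC : C.RectClosed)
    (hv : ¬ C.Splits (C.col v)) (hy : C.HasEdge (C.col y)) (hyv : C.col y ≠ C.col v)
    (hvy : C.Adj v y) : ∃ d z, C.SameClique d v ∧ d ≠ v ∧ C.SameClique y z ∧ C.Adj d y ∧
      ¬ C.Adj v z ∧ ¬ C.Adj d z := by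
  obtain ⟨d, ⟨hdv, hdy⟩, hne⟩ : ∃ d ∈ {w | C.SameClique w v ∧ (C.Adj w y ↔ C.Adj v y)}, d ≠ v :=
    Set.Infinite.exists_notMem_finite (t := {v}) (fun hfin => hv (h.splits_of_finite_part hyv hfin))
      (Set.finite_singleton v)
  obtain ⟨z, hyz, hzv⟩ := h.exists_mixed hy hyv.symm
  have hvz : ¬ C.Adj v z := fun hvz => hzv.1 hvz.symm hvy.symm
  exact ⟨d, z, hdv, hne, hyz, hdy.2 hvy, hvz, fun hdz =>
    hvz (hC d v y z hdv hyz (hdv.1 ▸ hyv.symm) (hdy.2 hvy) hdz hvy)⟩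

theorem IsBasic.rectClosed_crossCompl (h : C.IsBasic) (hC : C.RectClosed) :
    C.crossCompl.RectClosed := by
  intro u v x y huv hxy hux nux nuy nvx
  rw [crossCompl_sameClique] at huv hxy
  change C.col u ≠ C.col x at hux
  rw [crossCompl_adj_of_col_ne hux] at nux
  rw [crossCompl_adj_of_col_ne (hxy.1 ▸ hux)] at nuy
  rw [crossCompl_adj_of_col_ne (huv.1 ▸ hux)] at nvx
  rw [crossCompl_adj_of_col_ne (huv.1 ▸ hxy.1 ▸ hux)]
  intro hvy
  have huv' : u ≠ v := fun he => nuy (he ▸ hvy)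
  have hxy' : x ≠ y := fun he => nvx (he ▸ hvy)
  have hyv : C.col y ≠ C.col v := huv.1 ▸ hxy.1 ▸ hux.symm
  have hS : ¬ C.Splits (C.col v) := fun hS =>
    nux ((hS u v x (huv.adj huv') huv.1 rfl (huv.1 ▸ hux.symm)).2 nvx)
  obtain ⟨d, z, hdv, hne, hyz, hdy, hvz, hdz⟩ :=
    h.exists_nonadjacent_rect hC hS ⟨x, y, hxy.1, rfl, hxy.adj hxy'⟩ hyv hvy
  have hiso : IsoOn C C Set.univ ![v, d, z] ![u, v, x] := by
    have hcomm := C.adj_comm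
    have hdv' := hdv.adj hne
    have huv'' := huv.adj huv'
    constructor <;>
      simp only [Fin.forall_fin_succ, Set.mem_univ, forall_const, Matrix.cons_val_zero,
        Matrix.cons_val_succ, Matrix.cons_val_fin_one, C.irrefl] <;>
      grind [SameClique]
  obtain ⟨ψ, hψ⟩ := h.homogeneous.exists_aut Set.finite_univ hiso
  obtain ⟨hψv, hψd, hψz⟩ : ψ v = u ∧ ψ d = v ∧ ψ z = x := ⟨hψ 0 trivial, hψ 1 trivial, hψ 2 trivial⟩
  have hyx : C.SameClique (ψ y) y := h.cliques (hψz ▸ ψ.sameClique_iff.2 hyz) hxy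
  exact nuy (hC v u (ψ y) y huv.symm hyx (hyx.1 ▸ hyv.symm) (hψd ▸ (ψ.adj_iff d y).2 hdy) hvy
    (hψv ▸ (ψ.adj_iff v y).2 hvy))

end CrossCompl
/-! ### Infinite cells -/

/-- `b` is adjacent to some, but not to all, vertices of `A`. -/
def MixedOn (C : ColoredGraph V) (A : Set V) (b : V) : Prop :=
  ∃ x ∈ A, ∃ y ∈ A, C.Adj x b ∧ ¬ C.Adj y b

/-- `F` meets every clique in at most one vertex. -/
def IsTransversal (C : ColoredGraph V) (F : Set V) : Prop :=
  F.Pairwise fun a b => ¬ C.SameClique a b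

namespace IsBasic

variable {k : Bool} {F : Set V} {v : V → Prop} {b b' b₁ c : V}

theorem mixedOn_cell_of_indistOver (h : C.IsBasic) (hF : F.Finite)
    (hFc : ∀ f ∈ F, C.col f ≠ C.col c) (hb : C.col b ≠ C.col c) (hbb' : C.IndistOver F b' b)
    (hmix : C.MixedOn (C.cell F v c) b') : C.MixedOn (C.cell F v c) b := by
  obtain ⟨x, hx, y, hy, hxb', hyb'⟩ := hmix
  obtain ⟨p, hp, hpb'⟩ : ∃ p ∈ C.cell F v c, (C.Adj p b' ↔ C.Adj x b) := by
    by_cases hxb : C.Adj x b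
    exacts [⟨x, hx, iff_of_true hxb' hxb⟩, ⟨y, hy, iff_of_false hyb' hxb⟩]
  obtain ⟨ψ, hψF, hψp, rfl⟩ := h.homogeneous.exists_aut_fixing₂ hF
    (indistOver_of_mem_cell rfl hFc hp hx) hbb'
    (iff_of_false (ne_of_col_ne (hp.1.1 ▸ hbb'.1 ▸ hb.symm)) (ne_of_col_ne (hx.1.1 ▸ hb.symm))) hpb'
  have hcell {z : V} := ψ.apply_mem_cell_iff (x := z) h.cliques hψF hp (hψp ▸ hx)
  exact ⟨ψ x, hcell.2 hx, ψ y, hcell.2 hy, (ψ.adj_iff _ _).2 hxb', (ψ.adj_iff _ _).not.2 hyb'⟩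

theorem exists_aut_of_exchange (h : C.IsBasic) (hF : F.Finite) (hFc : ∀ f ∈ F, C.col f ≠ C.col c)
    (hbF : b ∉ F) {x x' : V} (hx : x ∈ C.cell F v c) (hx' : x' ∈ C.cell F v c) (hxx' : x ≠ x')
    (hexch : ∀ v', (C.cell (insert b F) v' c).Nonempty) :
    ∃ ψ : Iso C C, (∀ f ∈ F, ψ f = f) ∧ C.Adj x (ψ b) ∧ ¬ C.Adj x' (ψ b) := by
  classical
  have hexch' (e : Prop) : ∃ z ∈ C.cell F v c, (C.Adj z b ↔ e) := by
    obtain ⟨z, hzc, hz⟩ := hexch (Function.update v b e)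
    refine ⟨z, ⟨hzc, fun f hf => ?_⟩, by simpa using hz b (by simp)⟩
    simpa [ne_of_mem_of_not_mem hf hbF] using hz f (by simp [hf])
  obtain ⟨z, hz, hzb⟩ := hexch' True
  obtain ⟨z', hz', hz'b⟩ := hexch' False
  rw [iff_true] at hzb
  rw [iff_false] at hz'b
  have hzz' : z ≠ z' := fun he => hz'b (he ▸ hzb)
  obtain ⟨ψ, hψF, rfl, rfl⟩ := h.homogeneous.exists_aut_fixing₂ hF
    (indistOver_of_mem_cell rfl hFc hz hx) (indistOver_of_mem_cell rfl hFc hz' hx')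
    (iff_of_false hzz' hxx') (iff_of_true ((h.cliques.sameClique_of_mem_cell hz hz').adj hzz')
      ((h.cliques.sameClique_of_mem_cell hx hx').adj hxx'))
  exact ⟨ψ, hψF, (ψ.adj_iff z b).2 hzb, (ψ.adj_iff z' b).not.2 hz'b⟩

/-- An automorphism that fixes `F \ {b₁}` maps `b`, which is mixed on a cell over
`insert b (F \ {b₁})`, to a vertex mixed on the given cell; as the number of cross edges is even,
this vertex does not lie in the clique of `b₁`, so it can be moved back to `b` over all of `F`. -/
theorem mixedOn_cell_of_exchange (h : C.IsBasic) (hev : C.EvenCross) (hF : F.Finite)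
    (hFc : ∀ f ∈ F, C.col f ≠ C.col c) (hb : C.col b ≠ C.col c)
    (hT : C.IsTransversal (insert b F)) (hbF : b ∉ F) (hcell : (C.cell F v c).Nontrivial)
    (hexch : ∀ v', (C.cell (insert b (F \ {b₁})) v' c).Nonempty) :
    C.MixedOn (C.cell F v c) b := by
  obtain ⟨x, hx, x', hx', hxx'⟩ := hcell
  have hsub {w : V} (hw : w ∈ C.cell F v c) : w ∈ C.cell (F \ {b₁}) v c :=
    ⟨hw.1, fun f hf => hw.2 f hf.1⟩
  obtain ⟨ψ, hψF, hxb, hx'b⟩ := h.exists_aut_of_exchange hF.sdiff (fun f hf => hFc f hf.1)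
    (fun hb => hbF hb.1) (hsub hx) (hsub hx') hxx' hexch
  refine h.mixedOn_cell_of_indistOver hF hFc hb ?_ ⟨x, hx, x', hx', hxb, hx'b⟩
  refine ⟨ψ.col_eq b, fun f hf => ?_⟩
  have hbf : b ≠ f := (ne_of_mem_of_not_mem hf hbF).symm
  by_cases hfb₁ : f = b₁
  · have hψbf : ¬ C.SameClique (ψ b) f := fun hψbf => by
      have heven := hev _ _ _ _ (h.cliques.sameClique_of_mem_cell hx hx') hψbf
        (by rw [hx.1.1, ψ.col_eq]; exact hb.symm)
      rw [hx.2 f hf, hx'.2 f hf] at heven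
      tauto
    have hcol : C.col b = C.col f := by
      rw [Bool.eq_not_of_ne hb, Bool.eq_not_of_ne (hFc f hf)]
    exact ⟨iff_of_false (fun he => hψbf (he ▸ .refl C _)) hbf, iff_of_false
      (not_adj_of_not_sameClique (by rw [ψ.col_eq, hcol]) hψbf)
      (not_adj_of_not_sameClique hcol (hT (by simp) (by simp [hf]) hbf))⟩
  · have hψf := hψF f ⟨hf, hfb₁⟩
    nth_rw 1 3 [← hψf]
    rw [ψ.eq_iff, ψ.adj_iff]
    exact ⟨.rfl, .rfl⟩

theorem mixedOn_clique_of_not_splits (h : C.IsBasic) (hk : ¬ C.Splits (C.col c))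
    (hb : C.col b ≠ C.col c) : C.MixedOn {x | C.SameClique x c} b := by
  obtain ⟨p, -, hp, -, hcp, -⟩ := h.exists_adj_of_not_splits hk
  obtain ⟨c', hcc', hmix⟩ := h.exists_mixed ⟨c, p, rfl, hp.1.symm, hp.adj hcp⟩ hb
  by_cases hcb : C.Adj c b
  exacts [⟨c, .refl C c, c', hcc'.symm, by tauto⟩, ⟨c', hcc'.symm, c, .refl C c, by tauto⟩]

theorem cell_insert_infinite (h : C.IsBasic) (hF : F.Finite)
    (hFk : ∀ f ∈ F, C.col f ≠ k) (hb : C.col b ≠ k)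
    (hinf : ∀ c, C.col c = k → (C.cell F v c).Infinite)
    (hmix : ∀ c, C.col c = k → C.MixedOn (C.cell F v c) b) (hc : C.col c = k) :
    (C.cell (insert b F) v c).Infinite := by
  subst hc
  obtain ⟨c', hcol, hcc'⟩ := h.exists_not_sameClique_left c
  obtain ⟨s, hs, s', hs', hsb, hs'b⟩ := hmix c rfl
  obtain ⟨a, ha, a', ha', hab, ha'b⟩ := hmix c' hcol
  obtain ⟨a'', ha'', hnot⟩ := (hinf c' hcol).exists_notMem_finite (Set.toFinite {a, a'})
  simp only [Set.mem_insert_iff, Set.mem_singleton_iff, not_or] at hnot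
  have hpart {t t' : V} (ht : t ∈ C.cell F v c) (ht' : t' ∈ C.cell F v c)
      (htt' : C.Adj t' b ↔ ¬ C.Adj t b) (htv : C.Adj t b ↔ v b) :
      (C.cell (insert b F) v c).Infinite := by
    refine (h.infinite_part_of_cell hF hcol.symm hcc' hFk hb ht ht' htt' ha ha' ha''
      (by tauto) (Ne.symm hnot.1) (Ne.symm hnot.2)).mono ?_
    rintro x ⟨hx, hxb⟩
    exact ⟨hx.1, Set.forall_mem_insert.2 ⟨hxb.trans htv, hx.2⟩⟩
  by_cases hvb : v b
  · exact hpart hs hs' (by tauto) (by tauto)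
  · exact hpart hs' hs (by tauto) (by tauto)

theorem cell_infinite (h : C.IsBasic) (hev : C.EvenCross) (hk : ¬ C.Splits k) (n : ℕ) :
    ∀ F : Finset V, F.card = n → (∀ b ∈ F, C.col b ≠ k) → C.IsTransversal F → ∀ v c,
      C.col c = k → (C.cell F v c).Infinite := by
  classical
  induction n with
  | zero =>
    rintro F hF - - v c rfl
    rw [Finset.card_eq_zero.1 hF, Finset.coe_empty, cell_empty]
    exact h.clique_infinite_of_not_splits hk
  | succ n ih =>
    intro F' hF' hcol hT v c hc
    obtain ⟨b, F, hbF, rfl, hF⟩ := Finset.card_eq_succ.1 hF'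
    obtain ⟨hb, hFk⟩ := (Finset.forall_mem_insert _ _ _).1 hcol
    rw [Finset.coe_insert] at hT ⊢
    have hinf := ih F hF hFk (hT.mono (Set.subset_insert _ _))
    refine h.cell_insert_infinite F.finite_toSet hFk hb (hinf v) (fun c hc => ?_) hc
    subst hc
    rcases F.eq_empty_or_nonempty with rfl | ⟨b₁, hb₁⟩
    · rw [Finset.coe_empty, cell_empty]
      exact h.mixedOn_clique_of_not_splits hk hb
    · refine h.mixedOn_cell_of_exchange (b₁ := b₁) hev F.finite_toSet hFk hb hT hbF
        (hinf v c rfl).nontrivial fun v' => ?_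
      have hexch := ih (insert b (F.erase b₁)) (by
        rw [Finset.card_insert_of_notMem (by simp [hbF]), Finset.card_erase_add_one hb₁, hF])
        (fun f hf => hcol f (Finset.insert_subset_insert b (F.erase_subset b₁) hf))
        (hT.mono (by simpa using Set.insert_subset_insert Set.sdiff_subset)) v' c rfl
      simpa using hexch.nonempty

end IsBasic
/-! ### Split color classes -/

section Splits

variable {k : Bool} {F : Set V} {r : V}

theorem Splits.clique_finite (hcl : C.HasCliqueClasses) {c w : V} (hc : C.Splits (C.col c))
    (hw : C.col w ≠ C.col c) : {x | C.SameClique x c}.Finite := by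
  have hsub : ({x | C.SameClique x c} \ {c}).Subsingleton := fun x hx z hz => by
    by_contra hne
    have hcx := hc c x w (hx.1.symm.adj (Ne.symm hx.2)) rfl hx.1.1 hw
    have hcz := hc c z w (hz.1.symm.adj (Ne.symm hz.2)) rfl hz.1.1 hw
    have hxz := hc x z w ((hcl hx.1 hz.1.symm).adj hne) hx.1.1 hz.1.1 hw
    tauto
  exact (hsub.finite.insert c).subset fun x hx => by
    by_cases hxc : x = c <;> simp_all

theorem IsBasic.exists_aut_flip (h : C.IsBasic) (hS : C.Splits (C.col r))
    (hr : C.HasEdge (C.col r)) (hF : F.Finite) (hFr : ∀ f ∈ F, C.col f = C.col r)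
    (hrF : ∀ f ∈ F, ¬ C.SameClique r f) :
    ∃ ψ : Iso C C, (∀ f ∈ F, ψ f = f) ∧
      ∀ b, C.col b ≠ C.col r → (C.Adj r (ψ b) ↔ ¬ C.Adj r b) := by
  obtain ⟨r', hr', hrr'⟩ := h.exists_adj hr
  have hclique : C.SameClique r r' := .of_adj hr'.symm hrr'
  have hapart {a f : V} (ha : C.SameClique r a) (hf : f ∈ F) : a ≠ f ∧ ¬ C.Adj a f := by
    have haf : ¬ C.SameClique a f := fun haf => hrF f hf (h.cliques ha haf)
    exact ⟨fun he => haf (he ▸ .refl C a),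
      not_adj_of_not_sameClique (ha.1.symm.trans (hFr f hf).symm) haf⟩
  have hindist : C.IndistOver F r r' := ⟨hr'.symm, fun f hf =>
    ⟨iff_of_false (hapart (.refl C r) hf).1 (hapart hclique hf).1,
      iff_of_false (hapart (.refl C r) hf).2 (hapart hclique hf).2⟩⟩
  obtain ⟨ψ, hψF, rfl⟩ := h.homogeneous.exists_aut_fixing hF hindist
  refine ⟨ψ, hψF, fun b hb => ?_⟩
  rw [hS r (ψ r) (ψ b) hrr' rfl hr' (by rwa [ψ.col_eq]), ψ.adj_iff]

theorem IsBasic.infinite_of_splits (h : C.IsBasic) (hS : C.Splits k) (hk : C.HasEdge k) :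
    {b | C.col b ≠ k}.Infinite := by
  intro hfin
  have hinf : {r | C.col r = k}.Infinite := by
    have := h.infinite
    exact hfin.infinite_compl.mono fun r hr => not_not.1 hr
  obtain ⟨r, rfl, s, hs, hrs, htwin⟩ := hinf.exists_ne_map_eq_of_mapsTo
    (f := fun r => {b | C.col b ≠ k ∧ C.Adj r b}) (t := 𝒫 {b | C.col b ≠ k})
    (fun r _ b hb => hb.1) hfin.powerset
  have hagree {b : V} (hb : C.col b ≠ C.col r) : C.Adj r b ↔ C.Adj s b := by
    simpa [hb] using Set.ext_iff.1 htwin b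
  obtain ⟨w, hw⟩ := h.exists_col_eq (!C.col r)
  replace hw : C.col w ≠ C.col r := by simp [hw]
  by_cases hclique : C.SameClique r s
  · have hrw := hS r s w (hclique.adj hrs) rfl hs hw
    rw [hagree hw] at hrw
    tauto
  · obtain ⟨ψ, hψs, hψ⟩ := h.exists_aut_flip hS hk (Set.finite_singleton s) (by simpa using hs)
      (by simpa using hclique)
    have hsw : C.Adj s (ψ w) ↔ C.Adj s w := by
      rw [← ψ.adj_iff s w, hψs s rfl]
    have hrw := hψ w hw
    rw [hagree hw, hagree (by rwa [ψ.col_eq]), hsw] at hrw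
    tauto

theorem IsBasic.pattern_infinite (h : C.IsBasic) (hS : C.Splits k) (hk : C.HasEdge k)
    (v : V → Prop) (F : Finset V) (hFk : ∀ r ∈ F, C.col r = k) (hF : C.IsTransversal F) :
    {b | C.col b ≠ k ∧ ∀ r ∈ F, (C.Adj r b ↔ v r)}.Infinite := by
  classical
  induction F using Finset.induction_on with
  | empty => simpa using h.infinite_of_splits hS hk
  | insert r F hrF ih =>
    obtain ⟨rfl, hFr⟩ := (Finset.forall_mem_insert _ _ _).1 hFk
    rw [Finset.coe_insert] at hF
    obtain ⟨ψ, hψF, hψ⟩ := h.exists_aut_flip hS hk F.finite_toSet hFr fun f hf =>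
      hF (by simp) (by simp [Finset.mem_coe.1 hf]) (ne_of_mem_of_not_mem hf hrF).symm
    have hX := ih hFr (hF.mono (Set.subset_insert _ _))
    set X := {b | C.col b ≠ C.col r ∧ ∀ f ∈ F, (C.Adj f b ↔ v f)}
    have hXψ {b : V} (hb : b ∈ X) : ψ b ∈ X := by
      refine ⟨by rw [ψ.col_eq]; exact hb.1, fun f hf => ?_⟩
      rw [← hb.2 f hf, ← ψ.adj_iff f b, hψF f hf]
    have hgoal : {b | C.col b ≠ C.col r ∧ ∀ f ∈ insert r F, (C.Adj f b ↔ v f)} =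
        {b ∈ X | C.Adj r b ↔ v r} := by
      ext b
      simp only [X, Finset.forall_mem_insert, Set.mem_ofPred_eq]
      tauto
    rw [hgoal]
    intro hfin
    refine hX ((hfin.union (hfin.preimage (f := ψ) ψ.injective.injOn)).subset fun b hb => ?_)
    have hflip := hψ b hb.1
    by_cases hbr : C.Adj r b ↔ v r
    · exact .inl ⟨hb, hbr⟩
    · exact .inr ⟨hXψ hb, by tauto⟩

end Splits
/-! ### Embedding finite graphs -/

/-- `H` satisfies the restrictions that `C` places on its finite induced subgraphs: each color
class of `H` embeds in `C`, cross edges between two edges are even in number, and the edges that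
are split in `C` are split in `H`. -/
structure Admissible (C : ColoredGraph V) (H : ColoredGraph W) : Prop where
  classes : ∀ k, ∃ g, EmbedsOn H C {w | H.col w = k} g
  evenCross : H.EvenCross
  splits : ∀ k, C.Splits k → H.Splits k

theorem exists_choice_not_rel [Nonempty V] (T : Finset ι) (A : ι → Set V) (R : V → V → Prop)
    (hA : ∀ i ∈ T, (A i).Infinite) (hR : ∀ i ∈ T, ∀ a ∈ A i, {x | R a x}.Finite)
    (hsymm : ∀ x y, R x y → R y x) :
    ∃ f : ι → V, (∀ i ∈ T, f i ∈ A i) ∧ (T : Set ι).Pairwise fun i j => ¬ R (f i) (f j) := by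
  classical
  induction T using Finset.induction_on with
  | empty => exact ⟨fun _ => Classical.arbitrary V, by simp⟩
  | insert a T haT ih =>
    obtain ⟨f, hfA, hf⟩ := ih (fun i hi => hA i (by simp [hi])) (fun i hi => hR i (by simp [hi]))
    have hfin : (⋃ i ∈ T, {x | R (f i) x}).Finite :=
      T.finite_toSet.biUnion fun i hi => hR i (Finset.mem_insert_of_mem hi) _ (hfA i hi)
    obtain ⟨z, hzA, hz⟩ := ((hA a (by simp)).sdiff hfin).nonempty
    have hz' : ∀ i ∈ T, ¬ R (f i) z := fun i hi hr => hz (by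
      simp only [Set.mem_iUnion]
      exact ⟨i, hi, hr⟩)
    have hne : ∀ i ∈ T, i ≠ a := fun i hi => ne_of_mem_of_not_mem hi haT
    refine ⟨Function.update f a z, (Finset.forall_mem_insert _ _ _).2
      ⟨by simpa using hzA, fun i hi => by simpa [hne i hi] using hfA i hi⟩, ?_⟩
    rw [Finset.coe_insert, Set.pairwise_insert]
    refine ⟨fun i hi j hj hij => ?_, fun i hi _ => ⟨?_, ?_⟩⟩
    · simpa [hne i hi, hne j hj] using hf hi hj hij
    · simpa [hne i hi] using fun hr => hz' i hi (hsymm _ _ hr)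
    · simpa [hne i hi] using hz' i hi

theorem exists_pattern {T : Set W} {g : W → V} (hg : T.InjOn g) (r : κ → W → Prop) :
    ∃ v : κ → V → Prop, ∀ u, ∀ w ∈ T, v u (g w) ↔ r u w :=
  ⟨fun u b => ∃ w ∈ T, g w = b ∧ r u w, fun _ w hw =>
    ⟨fun ⟨_, hw', hg', hr⟩ => hg hw' hw hg' ▸ hr, fun hr => ⟨w, hw, rfl, hr⟩⟩⟩

section Embedding

variable {k : Bool} {S : Set X} {f g : X → V}

theorem IsoOn.sameClique_iff {S : Set ι} {f : ι → V} {g : ι → W} (h : IsoOn C D S f g) {i j : ι}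
    (hi : i ∈ S) (hj : j ∈ S) : D.SameClique (g i) (g j) ↔ C.SameClique (f i) (f j) := by
  simp only [SameClique, h.col_eq i hi, h.col_eq j hj, h.eq_iff i hi j hj, h.adj_iff i hi j hj]

theorem EmbedsOn.injOn (h : EmbedsOn H C S f) : S.InjOn f :=
  fun u hu w hw => (h.eq_iff u hu w hw).2

theorem embedsOn_of_sameClique_iff (hS : ∀ w ∈ S, H.col w = k) (hcol : ∀ w ∈ S, C.col (f w) = k)
    (hinj : S.InjOn f)
    (hf : ∀ u ∈ S, ∀ w ∈ S, C.SameClique (f u) (f w) ↔ H.SameClique u w) :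
    EmbedsOn H C S f where
  col_eq w hw := (hcol w hw).trans (hS w hw).symm
  eq_iff _ hu _ hw := (hinj.eq_iff hu hw).symm
  adj_iff u hu w hw := by
    have hf := hf u hu w hw
    have heq := hinj.eq_iff hu hw
    have hH := H.ne_of_adj (a := u) (b := w)
    have hC := C.ne_of_adj (a := f u) (b := f w)
    simp only [SameClique, hcol u hu, hcol w hw, hS u hu, hS w hw, true_and] at hf
    simp only [id]
    tauto

theorem embedsOn_ite (hf : EmbedsOn H C {w ∈ S | H.col w = k} f)
    (hg : EmbedsOn H C {w ∈ S | H.col w ≠ k} g)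
    (hcross : ∀ u ∈ S, ∀ w ∈ S, H.col u = k → H.col w ≠ k → (C.Adj (f u) (g w) ↔ H.Adj u w)) :
    EmbedsOn H C S fun w => if H.col w = k then f w else g w := by
  have hcol : ∀ w ∈ S, C.col (if H.col w = k then f w else g w) = H.col w := by
    intro w hw
    split_ifs with hwk
    exacts [hf.col_eq w ⟨hw, hwk⟩, hg.col_eq w ⟨hw, hwk⟩]
  refine ⟨hcol, fun u hu w hw => ?_, fun u hu w hw => ?_⟩
  · have hmixed (huw : H.col u ≠ H.col w) : u = w ↔
        (if H.col u = k then f u else g u) = if H.col w = k then f w else g w :=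
      iff_of_false (ne_of_col_ne huw) (ne_of_col_ne (C := C) (by rwa [hcol u hu, hcol w hw]))
    by_cases huk : H.col u = k <;> by_cases hwk : H.col w = k
    · simpa [huk, hwk] using hf.eq_iff u ⟨hu, huk⟩ w ⟨hw, hwk⟩
    · exact hmixed (huk ▸ Ne.symm hwk)
    · exact hmixed (hwk ▸ huk)
    · simpa [huk, hwk] using hg.eq_iff u ⟨hu, huk⟩ w ⟨hw, hwk⟩
  · by_cases huk : H.col u = k <;> by_cases hwk : H.col w = k
    · simpa [huk, hwk] using hf.adj_iff u ⟨hu, huk⟩ w ⟨hw, hwk⟩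
    · simpa [huk, hwk] using (hcross u hu w hw huk hwk).symm
    · simpa [huk, hwk, H.adj_comm, C.adj_comm] using (hcross w hw u hu hwk huk).symm
    · simpa [huk, hwk] using hg.adj_iff u ⟨hu, huk⟩ w ⟨hw, hwk⟩

theorem IsoOn.isTransversal_image {S : Set ι} {f : ι → V} {g : ι → W} (h : IsoOn C D S f g)
    (hS : S.Pairwise fun i j => ¬ C.SameClique (f i) (f j)) : D.IsTransversal (g '' S) := by
  rintro _ ⟨i, hi, rfl⟩ _ ⟨j, hj, rfl⟩ hij
  rw [h.sameClique_iff hi hj]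
  exact hS hi hj fun he => hij (congrArg g he)

/-- If the vertices whose color is not `k` lie in distinct cliques, they can be placed first, by an
embedding of their color class. -/
theorem Admissible.exists_embedsOn_of_transversal (hH : C.Admissible H) (S : Finset X)
    (hS : H.IsTransversal {w ∈ S | H.col w ≠ k})
    (hC : ∀ F : Finset V, (∀ b ∈ F, C.col b ≠ k) → C.IsTransversal F → ∀ v : X → V → Prop,
      ∃ f, EmbedsOn H C {w ∈ S | H.col w = k} f ∧
        ∀ w ∈ S, H.col w = k → ∀ b ∈ F, (C.Adj (f w) b ↔ v w b)) :
    ∃ f, EmbedsOn H C S f := by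
  classical
  obtain ⟨g, hg⟩ : ∃ g, EmbedsOn H C {w | H.col w ≠ k} g := by
    simpa only [Bool.eq_not] using hH.classes !k
  obtain ⟨v, hv⟩ := exists_pattern hg.injOn H.Adj
  set F := ({w ∈ S | H.col w ≠ k} : Finset X).image g
  have hFk : ∀ b ∈ F, C.col b ≠ k := by
    simp only [F, Finset.forall_mem_image, Finset.mem_filter]
    exact fun w hw => (hg.col_eq w hw.2).trans_ne hw.2
  have hgS : EmbedsOn H C {w ∈ S | H.col w ≠ k} g := hg.mono fun w hw => hw.2
  have hF : C.IsTransversal F := by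
    simpa [F] using hgS.isTransversal_image hS
  obtain ⟨f, hf, hfF⟩ := hC F hFk hF v
  refine ⟨_, embedsOn_ite hf hgS fun u hu w hw huk hwk => ?_⟩
  rw [hfF u hu huk (g w) (by simpa [F] using ⟨w, ⟨hw, hwk⟩, rfl⟩), hv u w hwk]

theorem IsBasic.exists_embedsOn_of_not_splits (h : C.IsBasic) (hev : C.EvenCross)
    (hk : ¬ C.Splits k) (hH : C.Admissible H) (S : Finset X)
    (hS : H.IsTransversal {w ∈ S | H.col w ≠ k}) : ∃ f, EmbedsOn H C S f := by
  classical
  refine hH.exists_embedsOn_of_transversal S hS fun F hFk hF v => ?_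
  have := h.infinite
  obtain ⟨g, hg⟩ := hH.classes k
  have hgk : ∀ w, H.col w = k → C.col (g w) = k := fun w hw => (hg.col_eq w hw).trans hw
  obtain ⟨f, hf, hinj⟩ := exists_choice_not_rel {w ∈ S | H.col w = k}
    (fun w => C.cell F (v w) (g w)) Eq
    (fun w hw => h.cell_infinite hev hk _ F rfl hFk hF _ _ (hgk w (by simp_all)))
    (fun _ _ a _ => Set.finite_singleton a |>.subset fun _ hx => hx.symm) fun _ _ => Eq.symm
  have hfS {w : X} (hw : w ∈ S) (hwk : H.col w = k) : f w ∈ C.cell F (v w) (g w) :=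
    hf w (by simp [hw, hwk])
  refine ⟨f, embedsOn_of_sameClique_iff (fun w hw => hw.2)
    (fun w hw => (hfS hw.1 hw.2).1.1.trans (hgk w hw.2))
    (Set.injOn_iff_pairwise_ne.2 (by simpa using hinj)) fun u hu w hw => ?_,
    fun w hw hwk => (hfS hw hwk).2⟩
  rw [h.cliques.sameClique_congr_left (hfS hu.1 hu.2).1, sameClique_comm,
    h.cliques.sameClique_congr_left (hfS hw.1 hw.2).1, sameClique_comm, hg.sameClique_iff hu.2 hw.2]
  rfl

theorem IsBasic.exists_embedsOn_of_splits (h : C.IsBasic) (hC : ∀ l, C.Splits l)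
    (hk : C.HasEdge !k) (hH : C.Admissible H) (S : Finset X) (hS : H.IsTransversal S) :
    ∃ f, EmbedsOn H C S f := by
  classical
  refine hH.exists_embedsOn_of_transversal (k := k) S (hS.mono (Set.sep_subset _ _))
    fun F hFk hF v => ?_
  have := h.infinite
  have hfin : ∀ a, {x | C.SameClique a x}.Finite := fun a => by
    obtain ⟨c, hc⟩ := h.exists_col_eq !C.col a
    simpa only [sameClique_comm] using
      (hC (C.col a)).clique_finite h.cliques (w := c) (by simp [hc])
  obtain ⟨f, hf, hinj⟩ := exists_choice_not_rel {w ∈ S | H.col w = k}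
    (fun w => {b | C.col b ≠ !k ∧ ∀ r ∈ F, (C.Adj r b ↔ v w r)}) C.SameClique
    (fun w _ => h.pattern_infinite (hC !k) hk (v w) F
      (fun b hb => Bool.eq_not_of_ne (hFk b hb)) hF)
    (fun _ _ a _ => hfin a) fun _ _ => SameClique.symm
  have hfS {w : X} (hw : w ∈ S) (hwk : H.col w = k) :
      C.col (f w) = k ∧ ∀ r ∈ F, (C.Adj (f w) r ↔ v w r) := by
    simpa [hw, hwk, C.adj_comm] using hf w
  have hfinj : Set.InjOn f {w ∈ S | H.col w = k} := fun u hu w hw he => by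
    by_contra huw
    exact hinj (by simpa using hu) (by simpa using hw) huw (he ▸ .refl C _)
  refine ⟨f, embedsOn_of_sameClique_iff (fun w hw => hw.2) (fun w hw => (hfS hw.1 hw.2).1) hfinj
    fun u hu w hw => ?_, fun w hw hwk => (hfS hw hwk).2⟩
  obtain rfl | huw := eq_or_ne u w
  · exact iff_of_true (.refl C _) (.refl H u)
  · exact iff_of_false (hinj (by simpa using hu) (by simpa using hw) huw) (hS hu.1 hw.1 huw)

theorem Homogeneous.exists_embedsOn_sdiff (hC : C.Homogeneous) (hS : S.Finite) {x y : X}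
    {f₁ f₂ : X → V} (h₁ : EmbedsOn H C (S \ {x}) f₁) (h₂ : EmbedsOn H C (S \ {y}) f₂) :
    ∃ f, EmbedsOn H C (S \ {x}) f ∧ EmbedsOn H C (S \ {y}) f := by
  classical
  have hiso : IsoOn C C (S \ {x, y}) f₂ f₁ :=
    (h₂.mono (by grind)).symm.trans (h₁.mono (by grind))
  obtain ⟨ψ, hψ⟩ := hC.exists_aut (hS.subset Set.sdiff_subset) hiso
  refine ⟨Function.update f₁ x (ψ (f₂ x)), h₁.congr fun w hw => Function.update_of_ne hw.2 _ _,
    (h₂.trans (ψ.isoOn _ f₂)).congr fun w hw => ?_⟩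
  obtain rfl | hwx := eq_or_ne w x
  · simp
  · simpa [hwx] using (hψ w (by simp_all)).symm

theorem embedsOn_of_sdiff {x y : X} (hxy : H.col x ≠ H.col y) (hx : EmbedsOn H C (S \ {x}) f)
    (hy : EmbedsOn H C (S \ {y}) f) (hadj : C.Adj (f x) (f y) ↔ H.Adj x y) :
    EmbedsOn H C S f := by
  have hcol : ∀ w ∈ S, C.col (f w) = H.col w := fun w hw => by
    obtain rfl | hwx := eq_or_ne w x
    exacts [hy.col_eq w ⟨hw, ne_of_col_ne hxy⟩, hx.col_eq w ⟨hw, hwx⟩]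
  have hfxy (hxS : x ∈ S) (hyS : y ∈ S) : f x ≠ f y :=
    ne_of_col_ne (C := C) (by rwa [hcol x hxS, hcol y hyS])
  have hpair : ∀ u ∈ S, ∀ w ∈ S, (u ∈ S \ {x} ∧ w ∈ S \ {x}) ∨ (u ∈ S \ {y} ∧ w ∈ S \ {y}) ∨
      (u = x ∧ w = y) ∨ (u = y ∧ w = x) := by
    have hne := ne_of_col_ne hxy
    grind
  refine ⟨hcol, fun u hu w hw => ?_, fun u hu w hw => ?_⟩ <;>
    obtain h | h | ⟨rfl, rfl⟩ | ⟨rfl, rfl⟩ := hpair u hu w hw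
  · exact hx.eq_iff u h.1 w h.2
  · exact hy.eq_iff u h.1 w h.2
  · exact iff_of_false (ne_of_col_ne hxy) (hfxy hu hw)
  · exact iff_of_false (ne_of_col_ne hxy).symm (hfxy hw hu).symm
  · exact hx.adj_iff u h.1 w h.2
  · exact hy.adj_iff u h.1 w h.2
  · exact hadj.symm
  · rw [C.adj_comm, hadj, id, id, H.adj_comm]

theorem Homogeneous.exists_embedsOn_of_ssubset (hC : C.Homogeneous) {S : Finset X}
    (hS : ∀ T ⊂ S, ∃ f, EmbedsOn H C T f) {x y : X} (hx : x ∈ S) (hy : y ∈ S)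
    (hxy : H.col x ≠ H.col y)
    (hadj : ∀ f, EmbedsOn H C (S \ {x}) f → EmbedsOn H C (S \ {y}) f →
      (C.Adj (f x) (f y) ↔ H.Adj x y)) : ∃ f, EmbedsOn H C S f := by
  classical
  obtain ⟨f₁, h₁⟩ := hS _ (Finset.erase_ssubset hx)
  obtain ⟨f₂, h₂⟩ := hS _ (Finset.erase_ssubset hy)
  rw [Finset.coe_erase] at h₁ h₂
  obtain ⟨f, hfx, hfy⟩ := hC.exists_embedsOn_sdiff S.finite_toSet h₁ h₂
  exact ⟨f, embedsOn_of_sdiff hxy hfx hfy (hadj f hfx hfy)⟩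

theorem EvenCross.adj_iff_of_sdiff (hC : C.EvenCross) (hH : H.EvenCross) {x x' y y' : X}
    (hxy : H.col x ≠ H.col y) (hx : x ∈ S) (hx' : x' ∈ S) (hy : y ∈ S) (hy' : y' ∈ S)
    (hxx' : H.SameClique x x') (hyy' : H.SameClique y y') (hx'x : x' ≠ x) (hy'y : y' ≠ y)
    (hfx : EmbedsOn H C (S \ {x}) f) (hfy : EmbedsOn H C (S \ {y}) f) :
    C.Adj (f x) (f y) ↔ H.Adj x y := by
  have hxS : x ∈ S \ {y} := ⟨hx, ne_of_col_ne hxy⟩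
  have hyS : y ∈ S \ {x} := ⟨hy, (ne_of_col_ne hxy).symm⟩
  have hx'y : x' ∈ S \ {y} := ⟨hx', ne_of_col_ne (hxx'.1 ▸ hxy)⟩
  have hx'S : x' ∈ S \ {x} := ⟨hx', hx'x⟩
  have hy'S : y' ∈ S \ {y} := ⟨hy', hy'y⟩
  have hy'x : y' ∈ S \ {x} := ⟨hy', (ne_of_col_ne (hyy'.1 ▸ hxy)).symm⟩
  have hevenH := hH x x' y y' hxx' hyy' hxy
  have hevenC := hC (f x) (f x') (f y) (f y') ((hfy.sameClique_iff hxS hx'y).2 hxx')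
    ((hfx.sameClique_iff hyS hy'x).2 hyy') (by rwa [hfy.col_eq x hxS, hfx.col_eq y hyS])
  rw [← hfy.adj_iff x hxS y' hy'S, ← hfx.adj_iff x' hx'S y hyS,
    ← hfx.adj_iff x' hx'S y' hy'x] at hevenC
  simp only [id] at hevenC
  tauto

theorem Splits.adj_iff_of_sdiff {x x' y : X} (hC : C.Splits (H.col x)) (hH : H.Splits (H.col x))
    (hxy : H.col x ≠ H.col y) (hx : x ∈ S) (hx' : x' ∈ S) (hy : y ∈ S)
    (hxx' : H.SameClique x x') (hx'x : x' ≠ x)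
    (hfx : EmbedsOn H C (S \ {x}) f) (hfy : EmbedsOn H C (S \ {y}) f) :
    C.Adj (f x) (f y) ↔ H.Adj x y := by
  have hxS : x ∈ S \ {y} := ⟨hx, ne_of_col_ne hxy⟩
  have hyS : y ∈ S \ {x} := ⟨hy, (ne_of_col_ne hxy).symm⟩
  have hx'y : x' ∈ S \ {y} := ⟨hx', ne_of_col_ne (hxx'.1 ▸ hxy)⟩
  have hx'S : x' ∈ S \ {x} := ⟨hx', hx'x⟩
  have hadj : H.Adj x x' := hxx'.adj hx'x.symm
  rw [hH x x' y hadj rfl hxx'.1.symm hxy.symm, hC (f x) (f x') (f y)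
    ((hfy.adj_iff x hxS x' hx'y).1 hadj) (hfy.col_eq x hxS)
    ((hfy.col_eq x' hx'y).trans hxx'.1.symm) (hfx.col_eq y hyS |>.trans_ne hxy.symm),
    ← hfx.adj_iff x' hx'S y hyS]
  rfl

theorem IsBasic.exists_embedsOn (h : C.IsBasic) (hev : C.EvenCross) (hk : ∃ k, C.HasEdge k)
    (hH : C.Admissible H) (S : Finset X) : ∃ f, EmbedsOn H C S f := by
  classical
  induction S using Finset.strongInduction with
  | H S ih =>
  by_cases htrans : ∃ k, ¬ C.Splits k ∧ H.IsTransversal {w ∈ S | H.col w ≠ k}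
  · obtain ⟨k, hk, hS⟩ := htrans
    exact h.exists_embedsOn_of_not_splits hev hk hH S hS
  by_cases hS : H.IsTransversal S
  · have hsplits : ∀ l, C.Splits l := fun l => by
      by_contra hl
      exact htrans ⟨l, hl, hS.mono (Set.sep_subset _ _)⟩
    obtain ⟨k, hk⟩ := hk
    exact h.exists_embedsOn_of_splits (k := !k) hsplits (by simpa using hk) hH S hS
  obtain ⟨x, hx, x', hx', hxx', hclique⟩ : ∃ x ∈ S, ∃ x' ∈ S, x ≠ x' ∧ H.SameClique x x' := by
    simpa [IsTransversal, Set.Pairwise] using hS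
  by_cases hmono : ∀ w ∈ S, H.col w = H.col x
  · obtain ⟨g, hg⟩ := hH.classes (H.col x)
    exact ⟨g, hg.mono hmono⟩
  by_cases hsplits : C.Splits (H.col x)
  · push Not at hmono
    obtain ⟨y, hy, hyx⟩ := hmono
    exact h.homogeneous.exists_embedsOn_of_ssubset ih hx hy hyx.symm fun f =>
      hsplits.adj_iff_of_sdiff (hH.splits _ hsplits) hyx.symm hx hx' hy hclique hxx'.symm
  · have hedge : ¬ H.IsTransversal {w ∈ S | H.col w ≠ H.col x} := fun hT =>
      htrans ⟨_, hsplits, hT⟩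
    obtain ⟨y, hy, hyx, y', hy', -, hyy', hclique'⟩ : ∃ y ∈ S, H.col y ≠ H.col x ∧ ∃ y' ∈ S,
        H.col y' ≠ H.col x ∧ y ≠ y' ∧ H.SameClique y y' := by
      simpa [IsTransversal, Set.Pairwise] using hedge
    exact h.homogeneous.exists_embedsOn_of_ssubset ih hx hy hyx.symm fun f =>
      hev.adj_iff_of_sdiff hH.evenCross hyx.symm hx hx' hy hy' hclique hclique' hxx'.symm hyy'.symm

end Embedding
/-! ### Back and forth -/

section BackForth

theorem nonempty_iso_of_isoOn {P : Set (V × W)} (hP : IsoOn C D P Prod.fst Prod.snd)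
    (hV : ∀ v, ∃ w, (v, w) ∈ P) (hW : ∀ w, ∃ v, (v, w) ∈ P) : Nonempty (Iso C D) := by
  choose f hf using hV
  choose g hg using hW
  exact ⟨⟨f, g, fun v => (hP.eq_iff _ (hg (f v)) _ (hf v)).2 rfl,
    fun w => (hP.eq_iff _ (hf (g w)) _ (hg w)).1 rfl⟩,
    fun u v => (hP.adj_iff _ (hf u) _ (hf v)).symm, fun v => hP.col_eq _ (hf v)⟩

theorem nonempty_iso_of_back_forth [Countable V] [Countable W]
    (forth : ∀ p : Finset (V × W), IsoOn C D p Prod.fst Prod.snd → ∀ v, ∃ w,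
      IsoOn C D (insert (v, w) (p : Set (V × W))) Prod.fst Prod.snd)
    (back : ∀ p : Finset (V × W), IsoOn C D p Prod.fst Prod.snd → ∀ w, ∃ v,
      IsoOn C D (insert (v, w) (p : Set (V × W))) Prod.fst Prod.snd) :
    Nonempty (Iso C D) := by
  classical
  let P := {p : Finset (V × W) // IsoOn C D p Prod.fst Prod.snd}
  have := Encodable.ofCountable V
  have := Encodable.ofCountable W
  let cof : V ⊕ W → Order.Cofinal P := Sum.elim
    (fun v =>
      { carrier := {p | ∃ w, (v, w) ∈ p.1}
        isCofinal := fun p =>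
          let ⟨w, hw⟩ := forth p.1 p.2 v
          ⟨⟨insert (v, w) p.1, by simpa using hw⟩, ⟨w, by simp⟩, Finset.subset_insert _ p.1⟩ })
    (fun w =>
      { carrier := {p | ∃ v, (v, w) ∈ p.1}
        isCofinal := fun p =>
          let ⟨v, hv⟩ := back p.1 p.2 w
          ⟨⟨insert (v, w) p.1, by simpa using hv⟩, ⟨v, by simp⟩, Finset.subset_insert _ p.1⟩ })
  let p₀ : P := ⟨∅, by simp, by simp, by simp⟩
  let I := Order.idealOfCofinals p₀ cof
  have hI {x y : V × W} : x ∈ {x | ∃ p ∈ I, x ∈ p.1} → y ∈ {x | ∃ p ∈ I, x ∈ p.1} →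
      ∃ p : P, x ∈ p.1 ∧ y ∈ p.1 := fun ⟨p, hp, hx⟩ ⟨q, hq, hy⟩ =>
    let ⟨r, _, hpr, hqr⟩ := I.directed p hp q hq
    ⟨r, hpr hx, hqr hy⟩
  refine nonempty_iso_of_isoOn (P := {x | ∃ p ∈ I, x ∈ p.1}) ⟨?_, ?_, ?_⟩ (fun v => ?_) fun w => ?_
  · exact fun x ⟨p, _, hx⟩ => p.2.col_eq x hx
  · exact fun x hx y hy => let ⟨p, hxp, hyp⟩ := hI hx hy; p.2.eq_iff x hxp y hyp
  · exact fun x hx y hy => let ⟨p, hxp, hyp⟩ := hI hx hy; p.2.adj_iff x hxp y hyp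
  · obtain ⟨p, ⟨w, hw⟩, hp⟩ := Order.cofinal_meets_idealOfCofinals p₀ cof (.inl v)
    exact ⟨w, p, hp, hw⟩
  · obtain ⟨p, ⟨v, hv⟩, hp⟩ := Order.cofinal_meets_idealOfCofinals p₀ cof (.inr w)
    exact ⟨v, p, hp, hv⟩

theorem Homogeneous.exists_isoOn_insert (hD : D.Homogeneous)
    (hCD : ∀ S : Finset V, ∃ f, EmbedsOn C D S f) (p : Finset (V × W))
    (hp : IsoOn C D p Prod.fst Prod.snd) (v : V) :
    ∃ w, IsoOn C D (insert (v, w) (p : Set (V × W))) Prod.fst Prod.snd := by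
  classical
  obtain ⟨f, hf⟩ := hCD (insert v (p.image Prod.fst))
  have hpf : Set.MapsTo Prod.fst (p : Set (V × W)) (insert v (p.image Prod.fst) : Finset V) :=
    fun x hx => Finset.mem_insert_of_mem (Finset.mem_image_of_mem _ hx)
  have hfp : IsoOn C D (p : Set (V × W)) Prod.fst (f ∘ Prod.fst) := hf.comp hpf
  obtain ⟨ψ, hψ⟩ := hD.exists_aut p.finite_toSet (hfp.symm.trans hp)
  refine ⟨ψ (f v), ((hf.trans (ψ.isoOn _ f)).comp (r := Prod.fst) ?_).congr ?_⟩
  · rintro x (rfl | hx)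
    exacts [by simp, hpf hx]
  · rintro x (rfl | hx)
    exacts [rfl, (hψ x hx).symm]

theorem Homogeneous.nonempty_iso [Countable V] [Countable W] (hC : C.Homogeneous)
    (hD : D.Homogeneous) (hCD : ∀ S : Finset V, ∃ f, EmbedsOn C D S f)
    (hDC : ∀ S : Finset W, ∃ f, EmbedsOn D C S f) : Nonempty (Iso C D) := by
  classical
  refine nonempty_iso_of_back_forth (hD.exists_isoOn_insert hCD) fun p hp w => ?_
  have hswap : IsoOn D C (p.image Prod.swap) Prod.fst Prod.snd :=
    hp.symm.comp (r := Prod.swap) fun x hx => by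
      obtain ⟨y, hy, rfl⟩ := Finset.mem_image.1 hx
      exact hy
  obtain ⟨v, hv⟩ := hC.exists_isoOn_insert hDC (p.image Prod.swap) hswap w
  refine ⟨v, (hv.comp (r := Prod.swap) fun x hx => ?_).symm⟩
  obtain rfl | hx := hx
  exacts [.inl rfl, .inr (Finset.mem_image_of_mem _ hx)]

end BackForth
/-! ### Self-duality under cross-edge complementation -/

section SelfDual

theorem admissible_self (hC : C.EvenCross) : C.Admissible C where
  classes _ := ⟨id, fun _ _ => rfl, fun _ _ _ _ => .rfl, fun _ _ _ _ => .rfl⟩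
  evenCross := hC
  splits _ hk := hk

theorem Admissible.crossCompl (hH : C.Admissible H) : C.Admissible H.crossCompl where
  classes k := by
    obtain ⟨g, hg⟩ := hH.classes k
    exact ⟨g, hg.col_eq, hg.eq_iff, fun u hu w hw =>
      (crossCompl_adj_of_col_eq (C := H) (hu.trans hw.symm)).trans (hg.adj_iff u hu w hw)⟩
  evenCross := hH.evenCross.crossCompl
  splits k hk := splits_crossCompl.2 (hH.splits k hk)

theorem IsBasic.nonempty_iso_crossCompl [Countable V] (h : C.IsBasic) (hev : C.EvenCross)
    (hk : ∃ k, C.HasEdge k) : Nonempty (Iso C C.crossCompl) := by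
  have hemb : ∀ S : Finset V, ∃ f, EmbedsOn C.crossCompl C S f :=
    h.exists_embedsOn hev hk (admissible_self hev).crossCompl
  refine h.homogeneous.nonempty_iso h.homogeneous.crossCompl (fun S => ?_) hemb
  obtain ⟨f, hf⟩ := hemb S
  exact ⟨f, by simpa using hf.crossCompl⟩

theorem IsBasic.evenCross (h : C.IsBasic) (hC : C.RectClosed ∨ C.crossCompl.RectClosed) :
    C.EvenCross := by
  refine evenCross_iff_rectClosed.2 (hC.elim (fun hC => ⟨hC, h.rectClosed_crossCompl hC⟩)
    fun hC => ⟨?_, hC⟩)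
  simpa using h.crossCompl.rectClosed_crossCompl hC

end SelfDual

end ColoredGraph

/-! ### Colorings by predicates -/

section Realizes

open ColoredGraph

variable {U V W : Type} {F : SimpleGraph U} {G : SimpleGraph V} {H : SimpleGraph W}
  {redF : U → Prop} {red : V → Prop} {redH : W → Prop}

open Classical in
/-- The graph `G` whose red vertices are given the color `true`. -/
noncomputable def ColoredGraph.ofRed (G : SimpleGraph V) (red : V → Prop) : ColoredGraph V where
  toSimpleGraph := G
  col v := decide (red v)

@[simp] theorem ofRed_adj {u v : V} : (ofRed G red).Adj u v ↔ G.Adj u v := .rfl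

@[simp] theorem ofRed_col_eq_true {v : V} : (ofRed G red).col v = true ↔ red v := by
  simp [ofRed]

@[simp] theorem ofRed_col_eq_false {v : V} : (ofRed G red).col v = false ↔ ¬ red v := by
  simp [ofRed]

theorem ofRed_col_eq_iff {u : U} {v : V} :
    (ofRed F redF).col u = (ofRed G red).col v ↔ (redF u ↔ red v) := by
  simp [ofRed]

theorem crossComp_adj {u v : V} :
    (crossComp G red).Adj u v ↔ (G.Adj u v ↔ (red u ↔ red v)) := by
  have hne : G.Adj u v → u ≠ v := G.ne_of_adj
  have hcol : u = v → (red u ↔ red v) := fun h => h ▸ Iff.rfl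
  rw [crossComp, fromRel_adj, G.adj_comm v u]
  tauto

theorem ofRed_crossComp : ofRed (crossComp G red) red = (ofRed G red).crossCompl := by
  unfold ofRed ColoredGraph.crossCompl
  congr 1
  ext u v
  exact crossComp_adj.trans (iff_congr .rfl ofRed_col_eq_iff.symm)

theorem crossComp_crossComp : crossComp (crossComp G red) red = G := by
  ext u v
  rw [crossComp_adj, crossComp_adj]
  tauto

theorem induce_crossComp (S : Set V) :
    (crossComp G red).induce S = crossComp (G.induce S) fun x => red x.1 := by
  ext u v
  simp only [comap_adj, crossComp_adj, Function.Embedding.subtype_apply]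

theorem realizes_iff_embedsOn :
    Realizes G red H redH ↔ ∃ f, EmbedsOn (ofRed H redH) (ofRed G red) Set.univ f := by
  refine exists_congr fun f => ⟨fun ⟨hinj, hred, hadj⟩ => ?_, fun h => ⟨fun u w he => ?_, ?_, ?_⟩⟩
  · exact ⟨fun w _ => ofRed_col_eq_iff.2 (hred w), fun u _ w _ => hinj.eq_iff.symm,
      fun u _ w _ => (hadj u w).symm⟩
  · exact (h.eq_iff u trivial w trivial).2 he
  · exact fun w => ofRed_col_eq_iff.1 (h.col_eq w trivial)
  · exact fun u w => (h.adj_iff u trivial w trivial).symm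

theorem Realizes.trans (hGH : Realizes G red H redH) (hHF : Realizes H redH F redF) :
    Realizes G red F redF := by
  obtain ⟨f, hf, hfred, hfadj⟩ := hGH
  obtain ⟨g, hg, hgred, hgadj⟩ := hHF
  exact ⟨f ∘ g, hf.comp hg, fun w => (hfred _).trans (hgred w),
    fun u w => (hfadj _ _).trans (hgadj u w)⟩

theorem Realizes.crossComp (h : Realizes G red H redH) :
    Realizes (crossComp G red) red (crossComp H redH) redH := by
  rw [realizes_iff_embedsOn] at h ⊢
  obtain ⟨f, hf⟩ := h
  exact ⟨f, by simpa only [ofRed_crossComp] using hf.crossCompl⟩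

theorem realizes_crossComp_right :
    Realizes G red (crossComp H redH) redH ↔ Realizes (crossComp G red) red H redH :=
  ⟨fun h => crossComp_crossComp (G := H) ▸ h.crossComp,
    fun h => crossComp_crossComp (G := G) ▸ h.crossComp⟩

theorem coloredIso_iff_nonempty_iso :
    ColoredIso G red H redH ↔ Nonempty (Iso (ofRed G red) (ofRed H redH)) :=
  ⟨fun ⟨e, he⟩ => ⟨⟨e.toEquiv, fun _ _ => e.map_adj_iff, fun v => ofRed_col_eq_iff.2 (he v).symm⟩⟩,
    fun ⟨e⟩ => ⟨⟨e.toEquiv, fun {u v} => e.adj_iff u v⟩,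
      fun v => ofRed_col_eq_iff.1 (e.col_eq v).symm⟩⟩

theorem ColoredIso.realizes (h : ColoredIso G red H redH) : Realizes G red H redH := by
  obtain ⟨e, he⟩ := h
  exact ⟨e.symm, e.symm.injective, fun w => by rw [he, e.apply_symm_apply],
    fun u w => e.symm.map_adj_iff⟩

theorem realizes_crossComp_iff (hG : ColoredIso G red (crossComp G red) red) :
    Realizes G red (crossComp H redH) redH ↔ Realizes G red H redH :=
  ⟨fun h => hG.realizes.trans (realizes_crossComp_right.1 h),
    fun h => hG.realizes.trans h.crossComp⟩

theorem minOmitted_crossComp_iff (hG : ColoredIso G red (crossComp G red) red) :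
    MinOmitted G red (crossComp H redH) redH ↔ MinOmitted G red H redH := by
  simp only [MinOmitted, induce_crossComp, realizes_crossComp_iff hG]

end Realizes

/-! ### Minimally omitted graphs -/

section MinOmitted

open ColoredGraph

variable {U V W : Type} {G : SimpleGraph V} {H : SimpleGraph W} {red : V → Prop} {redH : W → Prop}

theorem crossComp_Tr : crossComp Tr TrRed = TrTilde := by
  ext u v
  fin_cases u <;> fin_cases v <;> simp [crossComp_adj, Tr, TrRed, TrTilde]

theorem crossComp_Tb : crossComp Tb TbRed = TbTilde := by
  ext u v
  fin_cases u <;> fin_cases v <;> simp [crossComp_adj, Tb, TbRed, TbTilde]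

theorem crossComp_Dgraph : crossComp Dgraph Dred = Dtilde := by
  ext u v
  fin_cases u <;> fin_cases v <;> simp [crossComp_adj, Dgraph, Dred, Dtilde]

theorem realizes_of_lt {n : ℕ} {K : SimpleGraph (Fin n)} {redK : Fin n → Prop} (f : Fin n → V)
    (hf : ∀ i, red (f i) ↔ redK i)
    (hlt : ∀ i j, i < j → f i ≠ f j ∧ (G.Adj (f i) (f j) ↔ K.Adj i j)) :
    Realizes G red K redK := by
  refine ⟨f, fun i j he => ?_, hf, fun i j => ?_⟩
  · by_contra hne
    rcases lt_or_gt_of_ne hne with hij | hij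
    exacts [(hlt _ _ hij).1 he, (hlt _ _ hij).1 he.symm]
  · rcases lt_trichotomy i j with hij | rfl | hij
    · exact (hlt _ _ hij).2
    · simp
    · rw [G.adj_comm, K.adj_comm, (hlt _ _ hij).2]

theorem realizes_Tr_iff : Realizes G red Tr TrRed ↔ ¬ (ofRed G red).NoTriangle true := by
  simp only [NoTriangle, ofRed_adj, ofRed_col_eq_true, ne_eq, not_forall, not_not]
  constructor
  · rintro ⟨f, -, hred, hadj⟩
    exact ⟨f 0, f 1, f 2, by simp [hadj, hred, Tr, TrRed]⟩
  · rintro ⟨u, v, w, huv, hu, hv, hw, huw, hvw⟩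
    refine realizes_of_lt ![u, v, w] ?_ ?_ <;>
      simp [Fin.forall_fin_succ, Tr, TrRed, hu, hv, hw, huv, huw, hvw, huv.ne, huw.ne, hvw.ne]

theorem realizes_Tb_iff : Realizes G red Tb TbRed ↔ ¬ (ofRed G red).NoTriangle false := by
  simp only [NoTriangle, ofRed_adj, ofRed_col_eq_false, ne_eq, not_forall, not_not]
  constructor
  · rintro ⟨f, -, hred, hadj⟩
    exact ⟨f 1, f 2, f 0, by simp [hadj, hred, Tb, TbRed]⟩
  · rintro ⟨u, v, w, huv, hu, hv, hw, huw, hvw⟩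
    refine realizes_of_lt ![w, u, v] ?_ ?_ <;>
      simp [Fin.forall_fin_succ, Tb, TbRed, hu, hv, hw, huv, huw.symm, hvw.symm, huv.ne, huw.ne',
        hvw.ne']

theorem realizes_Dgraph_of_adj {u v x y : V} (hu : red u) (hv : red v) (hx : ¬ red x)
    (hy : ¬ red y) (huv : G.Adj u v) (hxy : G.Adj x y) (hux : G.Adj u x) (huy : G.Adj u y)
    (hvx : G.Adj v x) (hvy : ¬ G.Adj v y) : Realizes G red Dgraph Dred := by
  have hne : v ≠ y := fun he => hy (he ▸ hv)
  refine realizes_of_lt ![u, v, x, y] ?_ ?_ <;>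
    simp [Fin.forall_fin_succ, Dgraph, Dred, hu, hv, hx, hy, huv, hxy, hux, huy, hvx, hvy, huv.ne,
      hxy.ne, hux.ne, huy.ne, hvx.ne, hne]

theorem realizes_Dgraph_iff : Realizes G red Dgraph Dred ↔ ¬ (ofRed G red).RectClosed := by
  constructor
  · rintro ⟨f, -, hred, hadj⟩ hG
    have hcol i j : (ofRed G red).col (f i) = (ofRed G red).col (f j) ↔ (Dred i ↔ Dred j) := by
      rw [ofRed_col_eq_iff, hred, hred]
    have h13 := hG (f 0) (f 1) (f 2) (f 3) (.of_adj ((hcol 0 1).2 (by simp [Dred])) ?_)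
      (.of_adj ((hcol 2 3).2 (by simp [Dred])) ?_) ((hcol 0 2).not.2 (by simp [Dred]))
    all_goals simp [hadj, Dgraph] at *
  · simp only [RectClosed, not_forall]
    rintro ⟨u, v, x, y, ⟨huv, huv'⟩, ⟨hxy, hxy'⟩, hux, hadj_ux, hadj_uy, hadj_vx, hadj_vy⟩
    have huv' := huv'.resolve_left fun he => hadj_vy (he ▸ hadj_uy)
    have hxy' := hxy'.resolve_left fun he => hadj_vy (he ▸ hadj_vx)
    rw [ofRed_col_eq_iff] at huv hxy
    rw [ne_eq, ofRed_col_eq_iff] at hux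
    by_cases hu : red u
    · exact realizes_Dgraph_of_adj hu (by tauto) (by tauto) (by tauto) huv' hxy' hadj_ux hadj_uy
        hadj_vx hadj_vy
    · exact realizes_Dgraph_of_adj (by tauto) (by tauto) hu (by tauto) hxy' huv' hadj_ux.symm
        hadj_vx.symm hadj_uy.symm fun h => hadj_vy h.symm

theorem realizes_Dtilde_iff :
    Realizes G red Dtilde Dred ↔ ¬ (ofRed G red).crossCompl.RectClosed := by
  rw [← crossComp_Dgraph, realizes_crossComp_right, realizes_Dgraph_iff, ofRed_crossComp]

theorem not_evenCross_iff : ¬ (ofRed G red).EvenCross ↔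
    Realizes G red Dgraph Dred ∨ Realizes G red Dtilde Dred := by
  rw [evenCross_iff_rectClosed, not_and_or, realizes_Dgraph_iff, realizes_Dtilde_iff]

theorem not_splits_true_iff : ¬ (ofRed G red).Splits true ↔
    Realizes G red Tr TrRed ∨ Realizes G red TrTilde TrRed := by
  rw [splits_iff_noTriangle, not_and_or, ← crossComp_Tr, realizes_crossComp_right, realizes_Tr_iff,
    realizes_Tr_iff, ofRed_crossComp]

theorem not_splits_false_iff : ¬ (ofRed G red).Splits false ↔
    Realizes G red Tb TbRed ∨ Realizes G red TbTilde TbRed := by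
  rw [splits_iff_noTriangle, not_and_or, ← crossComp_Tb, realizes_crossComp_right, realizes_Tb_iff,
    realizes_Tb_iff, ofRed_crossComp]

theorem MinOmitted.coloredIso {K : SimpleGraph U} {redK : U → Prop} (hH : MinOmitted G red H redH)
    (hGK : ¬ Realizes G red K redK) (hHK : Realizes H redH K redK) : ColoredIso H redH K redK := by
  obtain ⟨f, hf, hred, hadj⟩ := hHK
  have hsurj : f.Surjective := by
    rw [← Set.range_eq_univ]
    by_contra hne
    exact hGK ((hH.2 _ hne).trans ⟨fun u => ⟨f u, u, rfl⟩, fun u w he =>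
      hf (congrArg Subtype.val he), hred, hadj⟩)
  let e : K ≃g H := ⟨.ofBijective f ⟨hf, hsurj⟩, fun {a b} => hadj a b⟩
  refine ⟨e.symm, fun w => ?_⟩
  obtain ⟨u, rfl⟩ := hsurj w
  exact (hred u).trans (iff_of_eq (congrArg redK (e.symm_apply_apply u).symm))

theorem MinOmitted.coloredIso_or {U' : Type} {K : SimpleGraph U} {K' : SimpleGraph U'}
    {redK : U → Prop} {redK' : U' → Prop} (hH : MinOmitted G red H redH)
    (hG : ¬ (Realizes G red K redK ∨ Realizes G red K' redK'))
    (hK : Realizes H redH K redK ∨ Realizes H redH K' redK') :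
    ColoredIso H redH K redK ∨ ColoredIso H redH K' redK' :=
  let ⟨hGK, hGK'⟩ := not_or.1 hG
  hK.imp (hH.coloredIso hGK) (hH.coloredIso hGK')

theorem MinOmitted.exists_embedsOn_class (hH : MinOmitted G red H redH) (hred : ∃ w, redH w)
    (hblue : ∃ w, ¬ redH w) (k : Bool) :
    ∃ g, EmbedsOn (ofRed H redH) (ofRed G red) {w | (ofRed H redH).col w = k} g := by
  obtain ⟨r, hr⟩ := hred
  obtain ⟨b, hb⟩ := hblue
  have hcol : (ofRed H redH).col r ≠ (ofRed H redH).col b :=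
    fun hrb => hb ((ofRed_col_eq_iff.1 hrb).1 hr)
  have hne {k} : {w | (ofRed H redH).col w = k} ≠ Set.univ := fun he =>
    have hk := Set.eq_univ_iff_forall.1 he
    hcol ((hk r).trans (hk b).symm)
  obtain ⟨f, hf, hfred, hfadj⟩ := hH.2 _ (hne (k := k))
  obtain ⟨f', -⟩ := hH.2 _ (hne (k := (ofRed H redH).col r))
  have hg (w) (hw : (ofRed H redH).col w = k) :
      Function.extend Subtype.val f (fun _ => f' ⟨r, rfl⟩) w = f ⟨w, hw⟩ :=
    Subtype.val_injective.extend_apply f _ ⟨w, hw⟩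
  refine ⟨Function.extend Subtype.val f fun _ => f' ⟨r, rfl⟩, fun w hw => ?_,
    fun u hu w hw => ?_, fun u hu w hw => ?_⟩
  · rw [hg w hw]
    exact ofRed_col_eq_iff.2 (hfred _)
  · rw [hg u hu, hg w hw, hf.eq_iff, Subtype.mk.injEq]
    rfl
  · rw [hg u hu, hg w hw]
    exact (hfadj ⟨u, hu⟩ ⟨w, hw⟩).symm

theorem Ultrahomogeneous.homogeneous_ofRed (hG : Ultrahomogeneous G red) :
    (ofRed G red).Homogeneous := by
  intro S f hS hf
  obtain ⟨ψ, hψred, hψ⟩ := hG S hS f ⟨fun u hu v hv => (hf.eq_iff u hu v hv).2,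
    fun v hv => ofRed_col_eq_iff.1 (hf.col_eq v hv),
    fun u hu v hv => (hf.adj_iff u hu v hv).symm⟩
  exact ⟨⟨ψ.toEquiv, fun _ _ => ψ.map_adj_iff, fun v => ofRed_col_eq_iff.2 (hψred v)⟩, hψ⟩

theorem hasCliqueClasses_ofRed (hred : IsUnionOfCliques G {v | red v})
    (hblue : IsUnionOfCliques G {v | ¬ red v}) : (ofRed G red).HasCliqueClasses := by
  rintro x y z ⟨hxy, rfl | hadj_xy⟩ ⟨hyz, rfl | hadj_yz⟩
  · exact .refl _ _
  · exact .of_adj hyz hadj_yz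
  · exact .of_adj hxy hadj_xy
  refine ⟨hxy.trans hyz, or_iff_not_imp_left.2 fun hne => ?_⟩
  rw [ofRed_col_eq_iff] at hxy hyz
  by_cases hx : red x
  · exact hred x hx y (hxy.1 hx) z (hyz.1 (hxy.1 hx)) hadj_xy hadj_yz hne
  · exact hblue x hx y (hxy.not.1 hx) z (hyz.not.1 (hxy.not.1 hx)) hadj_xy hadj_yz hne

theorem IsBasicCUH.isBasic_ofRed (hG : IsBasicCUH G red) : (ofRed G red).IsBasic := by
  obtain ⟨⟨hcount, hinf, huh, hR, hB⟩, hblow, ⟨u, v, hu, hv, huv⟩, ⟨x, y, hx, hy, hxy⟩⟩ := hG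
  have hhom := huh.homogeneous_ofRed
  have hcl := hasCliqueClasses_ofRed hR hB
  obtain ⟨hblow_red, hblow_blue⟩ := not_or.1 hblow
  refine ⟨hinf, hhom, hcl, ?_, ?_⟩
  · rintro (_ | _)
    · exact ⟨x, y, ofRed_col_eq_false.2 hx, ofRed_col_eq_false.2 hy, fun h => hxy.2 (h.adj hxy.1)⟩
    · exact ⟨u, v, ofRed_col_eq_true.2 hu, ofRed_col_eq_true.2 hv, fun h => huv.2 (h.adj huv.1)⟩
  · rintro (_ | _) hk
    · exact hhom.exists_split hcl hk (by simp_rw [ofRed_col_eq_false]; exact hblow_blue)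
    · exact hhom.exists_split hcl hk (by simp_rw [ofRed_col_eq_true]; exact hblow_red)

theorem MinOmitted.coloredIso_of_isBasic [Finite W] (h : (ofRed G red).IsBasic)
    (hev : (ofRed G red).EvenCross) (hk : ∃ k, (ofRed G red).HasEdge k)
    (hH : MinOmitted G red H redH) (hred : ∃ w, redH w) (hblue : ∃ w, ¬ redH w) :
    ColoredIso H redH Tr TrRed ∨ ColoredIso H redH TrTilde TrRed ∨
      ColoredIso H redH Tb TbRed ∨ ColoredIso H redH TbTilde TbRed ∨
      ColoredIso H redH Dgraph Dred ∨ ColoredIso H redH Dtilde Dred := by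
  by_contra! hcon
  have hevH : (ofRed H redH).EvenCross := by
    by_contra hn
    have := hH.coloredIso_or (not_evenCross_iff.not_right.1 hev) (not_evenCross_iff.1 hn)
    tauto
  have hsplits : ∀ k, (ofRed G red).Splits k → (ofRed H redH).Splits k := by
    rintro (_ | _) hk <;> by_contra hn
    · have := hH.coloredIso_or (not_splits_false_iff.not_right.1 hk) (not_splits_false_iff.1 hn)
      tauto
    · have := hH.coloredIso_or (not_splits_true_iff.not_right.1 hk) (not_splits_true_iff.1 hn)
      tauto
  have := Fintype.ofFinite W
  have hadm : (ofRed G red).Admissible (ofRed H redH) :=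
    ⟨hH.exists_embedsOn_class hred hblue, hevH, hsplits⟩
  refine hH.1 (realizes_iff_embedsOn.2 ?_)
  simpa using h.exists_embedsOn hev hk hadm Finset.univ

end MinOmitted

/-- a basic CUH graph omitting `D` or `D̃`, with a non-independent color
class: (1) every non-monochromatic minimally omitted subgraph is one of the six graphs
`T_r, T̃_r, T_b, T̃_b, D, D̃`; (2) each of these is minimally omitted iff its cross-edge
complement is; (3) `G` is isomorphic to its cross-edge complement. -/
theorem stmt_16 {V : Type} (G : SimpleGraph V) (red : V → Prop)
    (hG : IsBasicCUH G red)
    (hOm : ¬ Realizes G red Dgraph Dred ∨ ¬ Realizes G red Dtilde Dred)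
    (hni : (∃ u v, red u ∧ red v ∧ G.Adj u v) ∨ (∃ u v, ¬ red u ∧ ¬ red v ∧ G.Adj u v)) :
    (∀ (W : Type) (H : SimpleGraph W) (redH : W → Prop), Finite W →
      MinOmitted G red H redH → (∃ w, redH w) → (∃ w, ¬ redH w) →
      (ColoredIso H redH Tr TrRed ∨ ColoredIso H redH TrTilde TrRed ∨
       ColoredIso H redH Tb TbRed ∨ ColoredIso H redH TbTilde TbRed ∨
       ColoredIso H redH Dgraph Dred ∨ ColoredIso H redH Dtilde Dred)) ∧
    ((MinOmitted G red Tr TrRed ↔ MinOmitted G red TrTilde TrRed) ∧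
     (MinOmitted G red Tb TbRed ↔ MinOmitted G red TbTilde TbRed) ∧
     (MinOmitted G red Dgraph Dred ↔ MinOmitted G red Dtilde Dred)) ∧
    ColoredIso G red (crossComp G red) red := by
  have hbasic := hG.isBasic_ofRed
  have : Countable V := hG.1.1
  have hev : (ColoredGraph.ofRed G red).EvenCross :=
    hbasic.evenCross (hOm.imp realizes_Dgraph_iff.not_left.1 realizes_Dtilde_iff.not_left.1)
  have hk : ∃ k, (ColoredGraph.ofRed G red).HasEdge k := by
    rcases hni with ⟨u, v, hu, hv, huv⟩ | ⟨u, v, hu, hv, huv⟩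
    · exact ⟨true, u, v, ofRed_col_eq_true.2 hu, ofRed_col_eq_true.2 hv, huv⟩
    · exact ⟨false, u, v, ofRed_col_eq_false.2 hu, ofRed_col_eq_false.2 hv, huv⟩
  have hiso : ColoredIso G red (crossComp G red) red :=
    coloredIso_iff_nonempty_iso.2 (ofRed_crossComp ▸ hbasic.nonempty_iso_crossCompl hev hk)
  refine ⟨fun W H redH _ hH => hH.coloredIso_of_isBasic hbasic hev hk, ?_, hiso⟩
  rw [← crossComp_Tr, ← crossComp_Tb, ← crossComp_Dgraph]
  exact ⟨(minOmitted_crossComp_iff hiso).symm, (minOmitted_crossComp_iff hiso).symm,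
    (minOmitted_crossComp_iff hiso).symm⟩
end
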